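/- arXiv:2004.06712 — 2 statements merged into one kernel-verified Lean document; each statement's English description precedes it below -/
import Mathlib

section
/- Let (Ω, 𝒜, μ) be a σ-finite measure space and let {T_u : u ∈ ℝ₊^d} be a semigroup of positive Dunford–Schwartz operators (T_{u+v} = T_u T_v) that is L¹-continuous in the interior of ℝ₊^d, i.e. ‖T_u(f) − T_v(f)‖₁ → 0 as u → v, for every f ∈ L¹(μ) and every v with all coordinates strictly positive. Then for every f ∈ L¹(μ) the averages A_t(f) = t^{−d} ∫_{(0,t]^d} T_u(f) du (a Bochner integral in L¹(μ)) converge almost uniformly as t → ∞ to some f̂ ∈ L¹(μ). -/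
open MeasureTheory Filter Set ENNReal Topology

variable {Ω : Type*} [MeasurableSpace Ω]

/-- `f` belongs to `L¹(μ) + L^∞(μ)`. -/
def MemL1pLinf (μ : Measure Ω) (f : Ω →ₘ[μ] ℝ) : Prop :=
  ∃ g h : Ω →ₘ[μ] ℝ, eLpNorm g 1 μ ≠ ∞ ∧ eLpNorm h ⊤ μ ≠ ∞ ∧ f = g + h

/-- A positive Dunford–Schwartz operator: linear and positive on `L¹+L^∞`,
contracting both the `L¹`- and `L^∞`-norms. -/
structure IsPosDS (μ : Measure Ω) (T : (Ω →ₘ[μ] ℝ) → (Ω →ₘ[μ] ℝ)) : Prop where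
  map_add : ∀ f g, MemL1pLinf μ f → MemL1pLinf μ g → T (f + g) = T f + T g
  map_smul : ∀ (c : ℝ) (f), MemL1pLinf μ f → T (c • f) = c • T f
  map_pos : ∀ f, MemL1pLinf μ f → 0 ≤ f → 0 ≤ T f
  norm_one : ∀ f, MemL1pLinf μ f → eLpNorm (T f) 1 μ ≤ eLpNorm f 1 μ
  norm_top : ∀ f, MemL1pLinf μ f → eLpNorm (T f) ⊤ μ ≤ eLpNorm f ⊤ μ

/-- The Cesàro averages `A_n(f) = (1/n) ∑_{k<n} T^k f`. -/
noncomputable def cesaro (μ : Measure Ω) (T : (Ω →ₘ[μ] ℝ) → (Ω →ₘ[μ] ℝ)) (n : ℕ)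
    (f : Ω →ₘ[μ] ℝ) : Ω →ₘ[μ] ℝ :=
  (n : ℝ)⁻¹ • ∑ k ∈ Finset.range n, T^[k] f

/-- Almost uniform convergence of a net `F` to `f`. -/
def AuTendsto {ι : Type*} (μ : Measure Ω) (l : Filter ι) (F : ι → Ω →ₘ[μ] ℝ)
    (f : Ω →ₘ[μ] ℝ) : Prop :=
  ∀ ε : ℝ, 0 < ε → ∃ E : Set Ω, MeasurableSet E ∧ μ Eᶜ ≤ ENNReal.ofReal ε ∧
    Tendsto (fun i => eLpNorm (E.indicator (⇑(F i - f))) ⊤ μ) l (𝓝 0)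

/-- `R_μ`: elements of `L¹+L^∞` whose distribution tails are finite. -/
def MemRmu (μ : Measure Ω) (f : Ω →ₘ[μ] ℝ) : Prop :=
  MemL1pLinf μ f ∧ ∀ lam : ℝ, 0 < lam → μ {ω | lam < |f ω|} < ∞

section


structure DSop (μ : Measure Ω) (U : Lp ℝ 1 μ →L[ℝ] Lp ℝ 1 μ) : Prop where
  pos : ∀ f, 0 ≤ f → 0 ≤ U f
  norm : ∀ f, ‖U f‖ ≤ ‖f‖
  sub : ∀ (c : ℝ), 0 ≤ c → ∀ f : Lp ℝ 1 μ, (∀ᵐ ω ∂μ, f ω ≤ c) → ∀ᵐ ω ∂μ, U f ω ≤ c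

theorem lip_cut (c : ℝ) : LipschitzWith 1 (fun x : ℝ => max (x - c) 0) := by
  have : LipschitzWith 1 (fun x : ℝ => x - c) := by
    apply LipschitzWith.of_dist_le_mul
    intro x y
    simp [Real.dist_eq]
  exact this.max_const 0

/-- `(f - c)⁺` for `c ≥ 0` -/
noncomputable def cut {μ : Measure Ω} (c : ℝ) (hc : 0 ≤ c) (f : Lp ℝ 1 μ) : Lp ℝ 1 μ :=
  (lip_cut c).compLp (by simp [hc]) f

theorem coeFn_cut {μ : Measure Ω} (c : ℝ) (hc : 0 ≤ c) (f : Lp ℝ 1 μ) :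
    ∀ᵐ ω ∂μ, cut c hc f ω = max (f ω - c) 0 :=
  LipschitzWith.coeFn_compLp (lip_cut c) (by simp [hc]) f

variable {μ : Measure Ω}

namespace DSop

theorem mono {U : Lp ℝ 1 μ →L[ℝ] Lp ℝ 1 μ} (hU : DSop μ U) {f g : Lp ℝ 1 μ} (h : f ≤ g) :
    U f ≤ U g := by
  have := hU.pos (g - f) (sub_nonneg.2 h)
  rw [map_sub] at this
  exact sub_nonneg.1 this

theorem one : DSop μ 1 := ⟨fun _ h => h, fun _ => le_rfl, fun _ _ _ h => h⟩

theorem mul {U V : Lp ℝ 1 μ →L[ℝ] Lp ℝ 1 μ} (hU : DSop μ U) (hV : DSop μ V) : DSop μ (U * V) :=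
  ⟨fun f h => hU.pos _ (hV.pos f h), fun f => (hU.norm _).trans (hV.norm f),
    fun c hc f h => hU.sub c hc _ (hV.sub c hc f h)⟩

theorem pow {U : Lp ℝ 1 μ →L[ℝ] Lp ℝ 1 μ} (hU : DSop μ U) (n : ℕ) : DSop μ (U ^ n) := by
  induction n with
  | zero => simpa using one
  | succ n ih => rw [pow_succ]; exact ih.mul hU

theorem coeFn_sum' {ι : Type*} (s : Finset ι) (F : ι → Lp ℝ 1 μ) :
    ∀ᵐ ω ∂μ, (∑ i ∈ s, F i : Lp ℝ 1 μ) ω = ∑ i ∈ s, F i ω := by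
  classical
  induction s using Finset.induction_on with
  | empty =>
    rw [Finset.sum_empty]
    filter_upwards [Lp.coeFn_zero ℝ 1 μ] with ω h
    rw [h]; rfl
  | insert a s ha ih =>
    rw [Finset.sum_insert ha]
    filter_upwards [ih, Lp.coeFn_add (F a) (∑ i ∈ s, F i)] with ω h1 h2
    rw [h2, Pi.add_apply, h1, Finset.sum_insert ha]

theorem wsum {ι : Type*} (s : Finset ι) (c : ι → ℝ) (U : ι → Lp ℝ 1 μ →L[ℝ] Lp ℝ 1 μ)
    (hc : ∀ i ∈ s, 0 ≤ c i) (hs : ∑ i ∈ s, c i ≤ 1) (hU : ∀ i ∈ s, DSop μ (U i)) :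
    DSop μ (∑ i ∈ s, c i • U i) := by
  refine ⟨fun f h => ?_, fun f => ?_, fun a ha f h => ?_⟩
  · rw [_root_.sum_apply]
    refine Finset.sum_nonneg fun i hi => ?_
    rw [_root_.smul_apply]
    have := (hU i hi).pos f h
    rw [← Lp.coeFn_nonneg] at this ⊢
    filter_upwards [this, Lp.coeFn_smul (c i) (U i f)] with ω h1 h2
    rw [h2]
    exact mul_nonneg (hc i hi) h1
  · rw [_root_.sum_apply]
    calc _ ≤ ∑ i ∈ s, ‖(c i • U i) f‖ := norm_sum_le _ _
      _ ≤ ∑ i ∈ s, c i * ‖f‖ := Finset.sum_le_sum fun i hi => by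
          rw [_root_.smul_apply, norm_smul, Real.norm_of_nonneg (hc i hi)]
          exact mul_le_mul_of_nonneg_left ((hU i hi).norm f) (hc i hi)
      _ = (∑ i ∈ s, c i) * ‖f‖ := by rw [Finset.sum_mul]
      _ ≤ 1 * ‖f‖ := by gcongr
      _ = _ := one_mul _
  · rw [_root_.sum_apply]
    have h1 : ∀ᵐ ω ∂μ, ∀ i ∈ s, (U i f) ω ≤ a ∧ (c i • U i f : Lp ℝ 1 μ) ω = c i * (U i f) ω := by
      rw [Filter.eventually_all_finset s]
      intro i hi
      filter_upwards [(hU i hi).sub a ha f h, Lp.coeFn_smul (c i) (U i f)] with ω h1 h2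
      exact ⟨h1, h2⟩
    filter_upwards [h1, coeFn_sum' s (fun i => (c i • U i) f)] with ω h1 h2
    rw [h2]
    calc ∑ i ∈ s, ((c i • U i) f : Lp ℝ 1 μ) ω ≤ ∑ i ∈ s, c i * a :=
          Finset.sum_le_sum fun i hi => by
            rw [_root_.smul_apply, (h1 i hi).2]
            exact mul_le_mul_of_nonneg_left (h1 i hi).1 (hc i hi)
      _ = (∑ i ∈ s, c i) * a := by rw [Finset.sum_mul]
      _ ≤ 1 * a := by gcongr
      _ = a := one_mul _

end DSop

theorem norm_eq_integral_of_nonneg {f : Lp ℝ 1 μ} (h : 0 ≤ f) : ‖f‖ = ∫ ω, f ω ∂μ := by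
  rw [L1.norm_eq_integral_norm]
  rw [← Lp.coeFn_nonneg] at h
  apply integral_congr_ae
  filter_upwards [h] with ω h
  exact Real.norm_of_nonneg h

/-- Hopf maximal inequality -/
theorem hopf {U : Lp ℝ 1 μ →L[ℝ] Lp ℝ 1 μ} (hU : DSop μ U) {f : Lp ℝ 1 μ} (hf : 0 ≤ f)
    {lam : ℝ} (hl : 0 < lam) (N : ℕ) :
    μ {ω | ∃ m ≤ N, m * lam < (∑ j ∈ Finset.range m, (U ^ j) f : Lp ℝ 1 μ) ω}
      ≤ ENNReal.ofReal (‖f‖ / lam) := by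
  let M : ℕ → Lp ℝ 1 μ := fun n => Nat.rec 0 (fun _ g => cut lam hl.le (f + U g)) n
  have M0 : M 0 = 0 := rfl
  have Ms : ∀ n, M (n + 1) = cut lam hl.le (f + U (M n)) := fun n => rfl
  have cmono : ∀ g h : Lp ℝ 1 μ, g ≤ h → cut lam hl.le g ≤ cut lam hl.le h := by
    intro g h hgh
    rw [← Lp.coeFn_le] at hgh ⊢
    filter_upwards [coeFn_cut lam hl.le g, coeFn_cut lam hl.le h, hgh] with ω h1 h2 h3
    rw [h1, h2]
    exact max_le_max (by linarith) le_rfl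
  have cpos : ∀ g : Lp ℝ 1 μ, 0 ≤ cut lam hl.le g := by
    intro g
    rw [← Lp.coeFn_nonneg]
    filter_upwards [coeFn_cut lam hl.le g] with ω h1
    rw [h1]; exact le_max_right _ _
  have Mpos : ∀ n, 0 ≤ M n := by
    intro n
    cases n with
    | zero => rw [M0]
    | succ n => rw [Ms]; exact cpos _
  have Mstep : ∀ n, M n ≤ M (n + 1) := by
    intro n
    induction n with
    | zero => rw [M0]; exact Mpos 1
    | succ n ih =>
      rw [Ms, Ms (n + 1)]
      exact cmono _ _ (by gcongr; exact hU.mono ih)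
  have Mmono : Monotone M := monotone_nat_of_le_succ Mstep
  let G : ℕ → Lp ℝ 1 μ := fun m => ∑ j ∈ Finset.range m, (U ^ j) f
  have Gs : ∀ m, G (m + 1) = f + U (G m) := by
    intro m
    simp only [G, Finset.sum_range_succ', map_sum]
    rw [add_comm]
    simp [pow_succ']
  have key : ∀ m : ℕ, ∀ᵐ ω ∂μ, (G m - M m : Lp ℝ 1 μ) ω ≤ m * lam := by
    intro m
    induction m with
    | zero =>
      have : G 0 - M 0 = 0 := by simp [G, M0]
      rw [this]
      filter_upwards [Lp.coeFn_zero ℝ 1 μ] with ω h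
      rw [h]; simp
    | succ m ih =>
      have h1 := hU.sub _ (by positivity) _ ih
      rw [map_sub] at h1
      rw [Gs, Ms]
      filter_upwards [h1, Lp.coeFn_sub (U (G m)) (U (M m)), coeFn_cut lam hl.le (f + U (M m)),
        Lp.coeFn_sub (f + U (G m)) (cut lam hl.le (f + U (M m))),
        Lp.coeFn_add f (U (G m)), Lp.coeFn_add f (U (M m))] with ω h1 h2 h3 h4 h5 h6
      rw [h4, Pi.sub_apply, h5, h3, h6]
      rw [h2] at h1
      simp only [Pi.add_apply, Pi.sub_apply] at *
      have := le_max_left (f ω + (U (M m)) ω - lam) 0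
      push_cast
      linarith
  have incl : ∀ᵐ ω ∂μ, (∃ m ≤ N, m * lam < G m ω) → 0 < M N ω := by
    have k2 : ∀ᵐ ω ∂μ, ∀ m, (G m - M m : Lp ℝ 1 μ) ω ≤ m * lam := ae_all_iff.2 key
    have k3 : ∀ᵐ ω ∂μ, ∀ m, (G m - M m : Lp ℝ 1 μ) ω = G m ω - M m ω :=
      ae_all_iff.2 fun m => Lp.coeFn_sub _ _
    have k4 : ∀ᵐ ω ∂μ, ∀ m, m ≤ N → M m ω ≤ M N ω :=
      ae_all_iff.2 fun m => by
        by_cases h : m ≤ N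
        · filter_upwards [(Lp.coeFn_le _ _).2 (Mmono h)] with ω h1 _
          exact h1
        · exact Eventually.of_forall fun ω h' => absurd h' h
    filter_upwards [k2, k3, k4] with ω h2 h3 h4
    rintro ⟨m, hm, hlt⟩
    have := h2 m
    rw [h3 m] at this
    have := h4 m hm
    linarith
  -- integrate
  have hfn := (Lp.coeFn_nonneg _).2 hf
  have hpt : ∀ᵐ ω ∂μ, ({ω | 0 < M N ω}.indicator (fun _ => lam) ω)
      ≤ (f + U (M N) - M N : Lp ℝ 1 μ) ω := by
    cases N with
    | zero =>
      have : f + U (M 0) - M 0 = f := by simp [M0]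
      rw [this]
      filter_upwards [hfn, Lp.coeFn_zero ℝ 1 μ] with ω h1 h2
      rw [indicator_of_notMem]
      · exact h1
      · change ¬ (0 < (M 0) ω)
        rw [M0, h2]; simp
    | succ N =>
      have hle := (Lp.coeFn_le _ _).2 (hU.mono (Mstep N))
      have h5 := (Lp.coeFn_nonneg _).2 (hU.pos _ (Mpos (N+1)))
      have h6 := (Lp.coeFn_nonneg _).2 (Mpos (N+1))
      filter_upwards [hfn, hle, h5, h6, Lp.coeFn_sub (f + U (M (N+1))) (M (N+1)),
        Lp.coeFn_add f (U (M (N+1))), Lp.coeFn_add f (U (M N)),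
        coeFn_cut lam hl.le (f + U (M N))] with ω h1 h2 h3 h4 h5 h6 h7 h8
      rw [h5, Pi.sub_apply, h6, Pi.add_apply]
      rw [← Ms N, h7, Pi.add_apply] at h8
      simp only [Pi.zero_apply] at *
      by_cases hp : 0 < M (N+1) ω
      · rw [indicator_of_mem (by exact hp)]
        have : M (N+1) ω = f ω + U (M N) ω - lam := by
          rw [h8]; apply max_eq_left
          by_contra hcon
          rw [max_eq_right (by linarith)] at h8
          linarith
        linarith
      · rw [indicator_of_notMem (by exact hp)]
        linarith
  have hms : MeasurableSet {ω | 0 < M N ω} :=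
    measurableSet_lt measurable_const (Lp.stronglyMeasurable _).measurable
  have hint : ∫ ω, (f + U (M N) - M N : Lp ℝ 1 μ) ω ∂μ ≤ ‖f‖ := by
    have e : ∫ ω, (f + U (M N) - M N : Lp ℝ 1 μ) ω ∂μ
        = ∫ ω, (f ω + U (M N) ω - M N ω) ∂μ := by
      apply integral_congr_ae
      filter_upwards [Lp.coeFn_sub (f + U (M N)) (M N), Lp.coeFn_add f (U (M N))] with ω h1 h2
      rw [h1, Pi.sub_apply, h2, Pi.add_apply]
    have i1 := L1.integrable_coeFn f
    have i2 := L1.integrable_coeFn (U (M N))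
    have i3 := L1.integrable_coeFn (M N)
    have i12 : Integrable (fun ω => f ω + U (M N) ω) μ := i1.add i2
    rw [e, integral_sub i12 i3, integral_add i1 i2, ← norm_eq_integral_of_nonneg hf,
      ← norm_eq_integral_of_nonneg (hU.pos _ (Mpos N)), ← norm_eq_integral_of_nonneg (Mpos N)]
    linarith [hU.norm (M N)]
  have hl2 : ENNReal.ofReal lam * μ {ω | 0 < M N ω} ≤ ENNReal.ofReal ‖f‖ := by
    calc ENNReal.ofReal lam * μ {ω | 0 < M N ω}
        = ∫⁻ ω, {ω | 0 < M N ω}.indicator (fun _ => ENNReal.ofReal lam) ω ∂μ := by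
          rw [lintegral_indicator_const hms]
      _ ≤ ∫⁻ ω, ENNReal.ofReal ((f + U (M N) - M N : Lp ℝ 1 μ) ω) ∂μ := by
          apply lintegral_mono_ae
          filter_upwards [hpt] with ω h
          refine le_trans ?_ (ENNReal.ofReal_le_ofReal h)
          by_cases hp : 0 < M N ω
          · rw [indicator_of_mem (by exact hp), indicator_of_mem (by exact hp)]
          · rw [indicator_of_notMem (by exact hp)]; exact zero_le
      _ = ENNReal.ofReal (∫ ω, (f + U (M N) - M N : Lp ℝ 1 μ) ω ∂μ) := by
          rw [ofReal_integral_eq_lintegral_ofReal (L1.integrable_coeFn _)]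
          filter_upwards [hpt] with ω h
          exact le_trans (indicator_nonneg (fun _ _ => hl.le) _) h
      _ ≤ _ := ENNReal.ofReal_le_ofReal hint
  calc _ ≤ μ {ω | 0 < M N ω} := measure_mono_ae incl
    _ ≤ ENNReal.ofReal ‖f‖ / ENNReal.ofReal lam := by
        rw [ENNReal.le_div_iff_mul_le (by simp [hl]) (by simp), mul_comm]; exact hl2
    _ = _ := (ENNReal.ofReal_div_of_pos hl).symm

end

section

noncomputable def rr (d k : ℕ) : ℝ := ((k : ℝ) + 1) ^ (((d + 1 : ℕ) : ℝ)⁻¹)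

theorem rr_pow (d k : ℕ) : rr d k ^ (d + 1) = k + 1 := by
  unfold rr
  exact Real.rpow_inv_natCast_pow (by positivity) (by omega)

theorem one_le_rr (d k : ℕ) : 1 ≤ rr d k := by
  unfold rr
  exact Real.one_le_rpow (by linarith [Nat.cast_nonneg (α := ℝ) k]) (by positivity)

theorem rr_pos (d k : ℕ) : 0 < rr d k := lt_of_lt_of_le one_pos (one_le_rr d k)

theorem rr_mono (d : ℕ) {k l : ℕ} (h : k ≤ l) : rr d k ≤ rr d l := by
  unfold rr
  have : (k : ℝ) ≤ l := by exact_mod_cast h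
  exact Real.rpow_le_rpow (by positivity) (by linarith) (by positivity)

theorem rr_le_two (d : ℕ) {k l : ℕ} (h : l + 1 ≤ 2 * (k + 1)) : rr d l ≤ 2 * rr d k := by
  refine le_of_pow_le_pow_left₀ (n := d + 1) (by omega) (by linarith [rr_pos d k]) ?_
  rw [mul_pow, rr_pow, rr_pow]
  have h' : (l : ℝ) + 1 ≤ 2 * (k + 1) := by exact_mod_cast h
  have h2 : (2 : ℝ) ≤ 2 ^ (d + 1) := by
    calc (2 : ℝ) = 2 ^ 1 := by norm_num
      _ ≤ _ := pow_le_pow_right₀ (by norm_num) (by omega)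
  have : (0 : ℝ) ≤ k + 1 := by positivity
  nlinarith

theorem pow_sub_pow_le' {u v : ℝ} (hu : 0 ≤ u) (huv : u ≤ v) (n : ℕ) :
    v ^ (n + 1) - u ^ (n + 1) ≤ (n + 1) * (v - u) * v ^ n := by
  induction n with
  | zero => simp
  | succ n ih =>
    have hv : 0 ≤ v := hu.trans huv
    have h1 : v ^ (n + 2) - u ^ (n + 2) = v * (v ^ (n + 1) - u ^ (n + 1)) + u ^ (n + 1) * (v - u) := by
      ring
    have h2 : u ^ (n + 1) ≤ v ^ (n + 1) := pow_le_pow_left₀ hu huv _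
    rw [h1]
    have h3 := mul_le_mul_of_nonneg_left ih hv
    have h4 := mul_le_mul_of_nonneg_right h2 (sub_nonneg.2 huv)
    push_cast
    calc _ ≤ v * ((n + 1) * (v - u) * v ^ n) + v ^ (n + 1) * (v - u) := by linarith
      _ = _ := by ring

theorem le_pow_sub_pow {u v : ℝ} (hu : 0 ≤ u) (huv : u ≤ v) (n : ℕ) :
    (v - u) * v ^ n ≤ v ^ (n + 1) - u ^ (n + 1) := by
  have h2 : u ^ n ≤ v ^ n := pow_le_pow_left₀ hu huv _
  have := mul_le_mul_of_nonneg_left h2 hu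
  have e : v ^ (n + 1) - u ^ (n + 1) = v * v ^ n - u * u ^ n := by ring
  rw [e]; linarith

theorem rr_diff (d k : ℕ) : 1 ≤ (d + 1) * (rr d (k + 1) - rr d k) * rr d (k + 1) ^ d := by
  have := pow_sub_pow_le' (rr_pos d k).le (rr_mono d (Nat.le_succ k)) d
  rw [rr_pow, rr_pow] at this
  push_cast at this
  linarith

noncomputable def aa (d k : ℕ) : ℝ := (rr d k)⁻¹ - (rr d (k + 1))⁻¹

theorem aa_nonneg (d k : ℕ) : 0 ≤ aa d k :=
  sub_nonneg.2 (inv_anti₀ (rr_pos d k) (rr_mono d (Nat.le_succ k)))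

theorem sum_aa (d N : ℕ) : ∑ k ∈ Finset.range N, aa d k = 1 - (rr d N)⁻¹ := by
  unfold aa
  rw [Finset.sum_range_sub']
  simp [rr]

theorem aa_ge (d k : ℕ) : 1 / ((d + 1) * rr d (k + 1) ^ (d + 2)) ≤ aa d k := by
  have h := rr_diff d k
  have hu := rr_pos d k
  have hv := rr_pos d (k + 1)
  have hm := rr_mono d (Nat.le_succ k)
  unfold aa
  set u := rr d k
  set v := rr d (k + 1)
  have e : u⁻¹ - v⁻¹ = (v - u) / (u * v) := by field_simp
  rw [e]
  have h1 : (v - u) / (v * v) ≤ (v - u) / (u * v) := by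
    apply div_le_div_of_nonneg_left (sub_nonneg.2 hm) (by positivity)
    exact mul_le_mul_of_nonneg_right hm hv.le
  refine le_trans ?_ h1
  rw [div_le_div_iff₀ (by positivity) (by positivity)]
  have := mul_le_mul_of_nonneg_right h (mul_pos hv hv).le
  calc _ ≤ _ := this
    _ = _ := by ring

theorem aa_ge' (d : ℕ) {l k : ℕ} (h : l ≤ k) :
    1 / ((d + 1) * 2 ^ (d + 2)) / rr d k ^ (d + 2) ≤ aa d l := by
  refine le_trans ?_ (aa_ge d l)
  have h1 : rr d (l + 1) ≤ 2 * rr d k :=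
    (rr_le_two d (by omega)).trans (mul_le_mul_of_nonneg_left (rr_mono d h) (by norm_num))
  have := rr_pos d (l+1)
  have := rr_pos d k
  rw [div_div]
  apply one_div_le_one_div_of_le (by positivity)
  rw [mul_assoc, ← mul_pow]
  gcongr

theorem sum_mul_aa (d L : ℕ) (hd : 1 ≤ d) :
    ∑ l ∈ Finset.range L, (l : ℝ) * aa d l ≤ (d + 1) * rr d L ^ d := by
  suffices h : ∑ l ∈ Finset.range L, (l : ℝ) * aa d l + L * (rr d L)⁻¹ ≤ (d + 1) * rr d L ^ d by
    have : 0 ≤ L * (rr d L)⁻¹ := mul_nonneg (Nat.cast_nonneg _) (inv_nonneg.2 (rr_pos d L).le)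
    linarith
  induction L with
  | zero => simp; have := rr_pos d 0; positivity
  | succ L ih =>
    rw [Finset.sum_range_succ]
    obtain ⟨e, rfl⟩ : ∃ e, d = e + 1 := ⟨d - 1, by omega⟩
    have h := rr_diff (e+1) L
    have hu := rr_pos (e+1) L
    have hv := rr_pos (e+1) (L + 1)
    have hm := rr_mono (e+1) (Nat.le_succ L)
    have hp := le_pow_sub_pow hu.le hm e
    unfold aa at *
    set u := rr (e+1) L
    set v := rr (e+1) (L + 1)
    have h3 : v⁻¹ ≤ ((e + 1 : ℕ) + 1) * ((v - u) * v ^ e) := by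
      rw [inv_le_iff_one_le_mul₀ hv]
      calc _ ≤ _ := h
        _ = _ := by ring
    have h4 : ((e + 1 : ℕ) + 1 : ℝ) * ((v - u) * v ^ e) ≤ ((e + 1 : ℕ) + 1) * (v ^ (e+1) - u ^ (e+1)) :=
      mul_le_mul_of_nonneg_left hp (by positivity)
    push_cast at *
    linarith

open Polynomial in
theorem NN_mul {p q : ℝ[X]} (hp : ∀ k, 0 ≤ p.coeff k) (hq : ∀ k, 0 ≤ q.coeff k) (k : ℕ) :
    0 ≤ (p * q).coeff k := by
  rw [Polynomial.coeff_mul]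
  exact Finset.sum_nonneg fun x _ => mul_nonneg (hp _) (hq _)

open Polynomial in
theorem NN_pow {p : ℝ[X]} (hp : ∀ k, 0 ≤ p.coeff k) (m k : ℕ) :
    0 ≤ (p ^ m).coeff k := by
  induction m generalizing k with
  | zero => rw [pow_zero, Polynomial.coeff_one]; split_ifs <;> norm_num
  | succ m ih => rw [pow_succ]; exact NN_mul ih hp k

open Polynomial in
theorem NN_add {p q : ℝ[X]} (hp : ∀ k, 0 ≤ p.coeff k) (hq : ∀ k, 0 ≤ q.coeff k) (k : ℕ) :
    0 ≤ (p + q).coeff k := by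
  rw [Polynomial.coeff_add]; exact add_nonneg (hp k) (hq k)

open Polynomial in
theorem NN_binom {s b : ℝ[X]} (hs : ∀ k, 0 ≤ s.coeff k) (hb : ∀ k, 0 ≤ b.coeff k) (m : ℕ) :
    (∀ k, 0 ≤ ((s + b) ^ m - s ^ m).coeff k) ∧
    ∀ k, 0 ≤ ((s + b) ^ (m + 1) - ((m + 1 : ℕ) : ℝ[X]) * (s ^ m * b)).coeff k := by
  have A : ∀ m, ∀ k, 0 ≤ ((s + b) ^ m - s ^ m).coeff k := by
    intro m
    induction m with
    | zero => intro k; simp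
    | succ m ih =>
      have e : (s + b) ^ (m + 1) - s ^ (m + 1) = s * ((s + b) ^ m - s ^ m) + b * (s + b) ^ m := by
        ring
      rw [e]
      exact NN_add (NN_mul hs ih) (NN_mul hb (NN_pow (NN_add hs hb) m))
  refine ⟨A m, ?_⟩
  induction m with
  | zero => 
    have e : (s + b) ^ (0 + 1) - ((0 + 1 : ℕ) : ℝ[X]) * (s ^ 0 * b) = s := by simp
    rw [e]; exact hs
  | succ m ih =>
    have e : (s + b) ^ (m + 1 + 1) - ((m + 1 + 1 : ℕ) : ℝ[X]) * (s ^ (m + 1) * b)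
      = s * ((s + b) ^ (m + 1) - ((m + 1 : ℕ) : ℝ[X]) * (s ^ m * b))
        + b * ((s + b) ^ (m + 1) - s ^ (m + 1)) := by push_cast; ring
    rw [e]
    exact NN_add (NN_mul hs ih) (NN_mul hb (A _))

open Polynomial in
theorem markov {p : ℝ[X]} (hp : ∀ k, 0 ≤ p.coeff k) (M : ℕ) :
    p.eval 1 - (derivative p).eval 1 / (M + 1) ≤ ∑ r ∈ Finset.range (M + 1), p.coeff r := by
  set K := p.natDegree + 1 + (M + 1)
  have e1 : p.eval 1 = ∑ r ∈ Finset.range K, p.coeff r := by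
    rw [eval_eq_sum_range' (n := K) (by omega)]; simp
  have e2 : (derivative p).eval 1 = ∑ r ∈ Finset.range K, p.coeff r * r := by
    rw [derivative_eval, sum_over_range' _ (by simp) K (by omega)]; simp
  have e3 : ∑ r ∈ Finset.range K, p.coeff r = ∑ r ∈ Finset.range (M + 1), p.coeff r
      + ∑ r ∈ Finset.Ico (M + 1) K, p.coeff r := by
    rw [Finset.sum_range_add_sum_Ico _ (by omega)]
  have e4 : (∑ r ∈ Finset.Ico (M + 1) K, p.coeff r) * (M + 1) ≤ ∑ r ∈ Finset.range K, p.coeff r * r := by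
    rw [Finset.sum_mul]
    calc _ ≤ ∑ r ∈ Finset.Ico (M + 1) K, p.coeff r * r := Finset.sum_le_sum fun r hr => by
          have : ((M + 1 : ℕ) : ℝ) ≤ r := by exact_mod_cast (Finset.mem_Ico.1 hr).1
          push_cast at this
          exact mul_le_mul_of_nonneg_left this (hp r)
      _ ≤ _ := Finset.sum_le_sum_of_subset_of_nonneg (fun r hr => by
          simp only [Finset.mem_Ico, Finset.mem_range] at *; omega)
          fun r _ _ => mul_nonneg (hp r) (Nat.cast_nonneg r)
  rw [e1, e2, e3, sub_le_iff_le_add]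
  gcongr
  rw [le_div_iff₀ (by positivity)]
  exact e4

open Polynomial in
noncomputable def qq (d N : ℕ) : ℝ[X] := ∑ l ∈ Finset.range N, C (aa d l) * X ^ l

open Polynomial in
theorem coeff_ind (d : ℕ) (s : Finset ℕ) (k : ℕ) :
    (∑ l ∈ s, C (aa d l) * X ^ l : ℝ[X]).coeff k = if k ∈ s then aa d k else 0 := by
  rw [finsetSum_coeff]
  simp [coeff_X_pow]

open Polynomial in
theorem coeff_lower (d N k m : ℕ) (hd : 1 ≤ d) (hk : k < N) (hm : 4 * (d + 2) * (m : ℝ) ≤ rr d k) :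
    (m + 1) * (1 / ((d + 1) * 2 ^ (d + 3)) / rr d k ^ (d + 2)) ≤ ((qq d N) ^ (m + 1)).coeff k := by
  set L := k / 2 with hL
  set s : ℝ[X] := ∑ l ∈ Finset.range L, C (aa d l) * X ^ l with hs
  set b : ℝ[X] := ∑ l ∈ Finset.Ico L N, C (aa d l) * X ^ l with hb
  have hq : qq d N = s + b := by
    unfold qq; rw [hs, hb, Finset.sum_range_add_sum_Ico _ (by omega)]
  have ps : ∀ k, 0 ≤ s.coeff k := fun k => by
    rw [hs, coeff_ind]; split_ifs; exacts [aa_nonneg d k, le_rfl]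
  have pb : ∀ k, 0 ≤ b.coeff k := fun k => by
    rw [hb, coeff_ind]; split_ifs; exacts [aa_nonneg d k, le_rfl]
  have h1 := (NN_binom ps pb m).2 k
  rw [coeff_sub, ← C_eq_natCast, coeff_C_mul, ← hq] at h1
  set c := 1 / ((d + 1) * 2 ^ (d + 2) : ℝ) / rr d k ^ (d + 2) with hc
  have c0 : 0 ≤ c := by have := rr_pos d k; positivity
  have s1 : s.eval 1 = 1 - (rr d L)⁻¹ := by
    rw [hs, eval_finsetSum, ← sum_aa]; simp
  have s1' : (derivative s).eval 1 ≤ (d + 1) * rr d L ^ d := by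
    refine le_trans (le_of_eq ?_) (sum_mul_aa d L hd)
    rw [hs, derivative_sum, eval_finsetSum]
    refine Finset.sum_congr rfl fun l _ => ?_
    rw [derivative_C_mul, derivative_X_pow, eval_C_mul, eval_mul]
    simp only [eval_C, eval_pow, eval_X, one_pow, mul_one]
    ring
  have hLp := rr_pos d L
  have hL1 := one_le_rr d L
  have hinv : (rr d L)⁻¹ ≤ 1 := inv_le_one_of_one_le₀ hL1
  have hkL : rr d k ≤ 2 * rr d L := rr_le_two d (by omega)
  have h2 : 1 / 2 ≤ ∑ r ∈ Finset.range (k - L + 1), (s ^ m).coeff r := by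
    refine le_trans ?_ (markov (NN_pow ps m) (k - L))
    have hb1 : 1 - m * (rr d L)⁻¹ ≤ (s ^ m).eval 1 := by
      rw [eval_pow, s1]
      have := one_add_mul_le_pow (a := -(rr d L)⁻¹) (by linarith) m
      calc _ = 1 + (m : ℝ) * (-(rr d L)⁻¹) := by ring
        _ ≤ _ := this
        _ = _ := by ring
    have hb2 : (derivative (s ^ m)).eval 1 / ((k - L : ℕ) + 1) ≤ m * (d + 1) * (rr d L)⁻¹ := by
      rw [derivative_pow, eval_mul, eval_mul, eval_pow, s1]
      simp only [eval_C]
      have g1 : (1 - (rr d L)⁻¹) ^ (m - 1) ≤ 1 := pow_le_one₀ (by linarith) (by linarith [inv_nonneg.2 hLp.le])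
      have g0 : 0 ≤ (derivative s).eval 1 := by
        rw [hs, derivative_sum, eval_finsetSum]
        refine Finset.sum_nonneg fun l _ => ?_
        rw [derivative_C_mul, derivative_X_pow, eval_C_mul, eval_mul]
        simp only [eval_C, eval_pow, eval_X, one_pow, mul_one]
        exact mul_nonneg (aa_nonneg d l) (Nat.cast_nonneg l)
      have g2 : (m : ℝ) * (1 - (rr d L)⁻¹) ^ (m - 1) * (derivative s).eval 1
          ≤ m * 1 * ((d + 1) * rr d L ^ d) := by gcongr
      have g3 : ((L : ℝ) + 1) ≤ ((k - L : ℕ) : ℝ) + 1 := by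
        have : L ≤ k - L := by omega
        have : (L : ℝ) ≤ ((k - L : ℕ) : ℝ) := by exact_mod_cast this
        linarith
      calc _ ≤ m * 1 * ((d + 1) * rr d L ^ d) / (L + 1) := by gcongr
        _ = m * 1 * ((d + 1) * rr d L ^ d) / (rr d L ^ (d + 1)) := by rw [rr_pow]
        _ = _ := by field_simp; ring
    have hb3 : (d + 2) * m * (rr d L)⁻¹ ≤ 1 / 2 := by
      rw [← div_eq_mul_inv, div_le_iff₀ hLp]
      linarith
    linarith
  have h3 : c * (1 / 2) ≤ (s ^ m * b).coeff k := by
    rw [coeff_mul, Finset.Nat.sum_antidiagonal_eq_sum_range_succ_mk]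
    calc c * (1 / 2) ≤ c * ∑ r ∈ Finset.range (k - L + 1), (s ^ m).coeff r := by gcongr
      _ = ∑ r ∈ Finset.range (k - L + 1), (s ^ m).coeff r * c := by rw [mul_comm, Finset.sum_mul]
      _ ≤ ∑ r ∈ Finset.range (k - L + 1), (s ^ m).coeff r * b.coeff (k - r) := by
          refine Finset.sum_le_sum fun r hr => ?_
          have hr' := Finset.mem_range.1 hr
          apply mul_le_mul_of_nonneg_left _ (NN_pow ps m r)
          rw [hb, coeff_ind, if_pos (by rw [Finset.mem_Ico]; omega)]
          exact aa_ge' d (by omega)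
      _ ≤ _ := Finset.sum_le_sum_of_subset_of_nonneg (fun r hr => by
          simp only [Finset.mem_range] at *; omega)
          fun r _ _ => mul_nonneg (NN_pow ps m r) (pb _)
  have h4 : ((m + 1 : ℕ) : ℝ) * (c * (1 / 2)) ≤ ((m + 1 : ℕ) : ℝ) * (s ^ m * b).coeff k := by gcongr
  have e : (m + 1) * (1 / ((d + 1) * 2 ^ (d + 3)) / rr d k ^ (d + 2)) = ((m + 1 : ℕ) : ℝ) * (c * (1 / 2)) := by
    rw [hc]; push_cast; rw [pow_succ (2 : ℝ) (d + 2)]; 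
    have := rr_pos d k
    field_simp
  rw [e]
  linarith

end

section
variable {μ : Measure Ω}

theorem sum_pow_ge (d J : ℕ) : (J : ℝ) ^ (d + 1) / (d + 1) ≤ ∑ j ∈ Finset.range J, ((j : ℝ) + 1) ^ d := by
  induction J with
  | zero => simp
  | succ J ih =>
    rw [Finset.sum_range_succ]
    have h := pow_sub_pow_le' (u := J) (v := J + 1) (by positivity) (by linarith) d
    rw [div_le_iff₀ (by positivity)] at *
    push_cast
    nlinarith

theorem numeric_aux (d : ℕ) (hd : 1 ≤ d) (K p ρ Q : ℝ) (hK0 : 0 < K) (hp1 : 1 ≤ p) (hpρ : p ≤ ρ)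
    (hQ0 : 0 < Q) (hQle : Q ≤ p ^ (d + 2) * ρ ^ ((d + 2) * (d - 1))) :
    K * ρ ≤ (ρ ^ (d + 1)) ^ d * (K * p ^ (d + 1) / Q) := by
  have hρ0 : 0 < ρ := by linarith
  have hp0 : 0 < p := by linarith
  have : K * p ^ (d + 1) / (p ^ (d + 2) * ρ ^ ((d + 2) * (d - 1))) ≤ K * p ^ (d + 1) / Q := by gcongr
  refine le_trans ?_ (mul_le_mul_of_nonneg_left this (by positivity))
  obtain ⟨e, rfl⟩ : ∃ e, d = e + 1 := ⟨d - 1, by omega⟩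
  have e2 : (ρ ^ (e + 1 + 1)) ^ (e + 1) = ρ ^ ((e + 1 + 2) * (e + 1 - 1)) * ρ * ρ := by
    rw [← pow_mul, ← pow_succ, ← pow_succ]; congr 1; rw [Nat.add_sub_cancel]; ring
  have e1 : (ρ ^ (e + 1 + 1)) ^ (e + 1) *
      (K * p ^ (e + 1 + 1) / (p ^ (e + 1 + 2) * ρ ^ ((e + 1 + 2) * (e + 1 - 1))))
      = K * ρ * (ρ / p) := by
    rw [e2, pow_succ p (e + 1 + 1)]
    have h1 : 0 < ρ ^ ((e + 1 + 2) * (e + 1 - 1)) := by positivity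
    have h2 : 0 < p ^ (e + 1 + 1) := by positivity
    generalize ρ ^ ((e + 1 + 2) * (e + 1 - 1)) = a at *
    generalize p ^ (e + 1 + 1) = b at *
    field_simp
  rw [e1]
  have : 1 ≤ ρ / p := by rw [le_div_iff₀ (by linarith)]; linarith
  nlinarith [mul_pos hK0 hρ0]

set_option maxHeartbeats 1000000 in
theorem numeric (d : ℕ) (hd : 1 ≤ d) : ∃ c : ℝ, 0 < c ∧ ∀ N n : ℕ, 1 ≤ n → n ≤ N → ∃ m : ℕ, 1 ≤ m ∧
    ∀ k : Fin d → ℕ, (∀ i, k i < n) →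
      m * c ≤ (n : ℝ) ^ d * ∑ j ∈ Finset.range m, ∏ i, ((qq d N) ^ j).coeff (k i) := by
  set E : ℝ := 4 * (d + 2) with hE
  have hE0 : 1 ≤ E := by rw [hE]; linarith [Nat.cast_nonneg (α := ℝ) d]
  set c1 : ℝ := 1 / ((d + 1) * 2 ^ (d + 3)) with hc1
  have hc10 : 0 < c1 := by positivity
  set K : ℝ := c1 ^ d / (E ^ (d + 1) * (d + 1)) with hK
  have hK0 : 0 < K := by positivity
  refine ⟨K / 3, by positivity, fun N n hn hN => ?_⟩
  set ρ := rr d (n - 1) with hρ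
  have hρ1 : 1 ≤ ρ := one_le_rr _ _
  have hρn : ρ ^ (d + 1) = n := by
    rw [hρ, rr_pow]
    have : ((n - 1 + 1 : ℕ) : ℝ) = n := by congr 1; omega
    exact_mod_cast this
  refine ⟨⌊ρ⌋₊ + 2, by omega, fun k hk => ?_⟩
  have q0 : ∀ k, 0 ≤ (qq d N).coeff k := fun k => by
    unfold qq; rw [coeff_ind]; split_ifs; exacts [aa_nonneg d k, le_rfl]
  have : Nonempty (Fin d) := ⟨⟨0, by omega⟩⟩
  obtain ⟨i0, hi0⟩ : ∃ i0, ∀ i, k i0 ≤ k i := Finite.exists_min k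
  set p := rr d (k i0) with hp
  have hp1 : 1 ≤ p := one_le_rr _ _
  have hpρ : p ≤ ρ := rr_mono d (by have := hk i0; omega)
  set J := ⌊p / E⌋₊ + 1 with hJ
  have hJm : J ≤ ⌊ρ⌋₊ + 1 := by
    rw [hJ]
    gcongr
    calc p / E ≤ p := div_le_self (by linarith) hE0
      _ ≤ ρ := hpρ
  have hJp : p / E ≤ J := by rw [hJ]; push_cast; exact (Nat.lt_floor_add_one _).le
  set Q := ∏ i, rr d (k i) ^ (d + 2) with hQ
  have hQ0 : 0 < Q := Finset.prod_pos fun i _ => pow_pos (rr_pos _ _) _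
  have hQle : Q ≤ p ^ (d + 2) * ρ ^ ((d + 2) * (d - 1)) := by
    rw [hQ, ← Finset.mul_prod_erase _ _ (Finset.mem_univ i0)]
    have : ∏ i ∈ Finset.univ.erase i0, rr d (k i) ^ (d + 2) ≤ ρ ^ ((d + 2) * (d - 1)) := by
      rw [pow_mul]
      have hcard : (Finset.univ.erase i0).card = d - 1 := by
        rw [Finset.card_erase_of_mem (Finset.mem_univ _)]; simp
      rw [← hcard, ← Finset.prod_const]
      refine Finset.prod_le_prod (fun i _ => (pow_pos (rr_pos _ _) _).le) fun i _ => ?_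
      exact pow_le_pow_left₀ (rr_pos _ _).le (rr_mono d (by have := hk i; omega)) _
    exact mul_le_mul_of_nonneg_left this (by positivity)
  have hsum : K * p ^ (d + 1) / Q ≤ ∑ j ∈ Finset.range (⌊ρ⌋₊ + 2), ∏ i, ((qq d N) ^ j).coeff (k i) := by
    rw [Finset.sum_range_succ']
    have hz : 0 ≤ ∏ i, ((qq d N) ^ 0).coeff (k i) := Finset.prod_nonneg fun i _ => NN_pow q0 0 _
    have h1 : ∑ j ∈ Finset.range J, ∏ i, ((qq d N) ^ (j + 1)).coeff (k i)
        ≤ ∑ j ∈ Finset.range (⌊ρ⌋₊ + 1), ∏ i, ((qq d N) ^ (j + 1)).coeff (k i) :=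
      Finset.sum_le_sum_of_subset_of_nonneg (Finset.range_mono hJm)
        fun j _ _ => Finset.prod_nonneg fun i _ => NN_pow q0 _ _
    have h2 : ∑ j ∈ Finset.range J, (((j : ℝ) + 1) ^ d * (c1 ^ d / Q))
        ≤ ∑ j ∈ Finset.range J, ∏ i, ((qq d N) ^ (j + 1)).coeff (k i) := by
      refine Finset.sum_le_sum fun j hj => ?_
      have e : ((j : ℝ) + 1) ^ d * (c1 ^ d / Q) = ∏ i, (((j : ℝ) + 1) * (c1 / rr d (k i) ^ (d + 2))) := by
        rw [Finset.prod_mul_distrib, Finset.prod_div_distrib]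
        simp [hQ]
      rw [e]
      refine Finset.prod_le_prod (fun i _ => ?_) fun i _ => ?_
      · have := rr_pos d (k i); positivity
      · apply coeff_lower d N (k i) j hd (lt_of_lt_of_le (hk i) hN)
        have hj' : (j : ℝ) ≤ p / E := by
          have : j ≤ ⌊p / E⌋₊ := by have := Finset.mem_range.1 hj; omega
          exact (Nat.cast_le.2 this).trans (Nat.floor_le (by positivity))
        rw [le_div_iff₀ (by linarith)] at hj'
        calc 4 * (d + 2) * (j : ℝ) = j * E := by rw [hE]; ring
          _ ≤ p := hj'
          _ ≤ _ := rr_mono d (hi0 i)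
    have h3 : K * p ^ (d + 1) / Q ≤ ∑ j ∈ Finset.range J, (((j : ℝ) + 1) ^ d * (c1 ^ d / Q)) := by
      rw [← Finset.sum_mul]
      have : (p / E) ^ (d + 1) / (d + 1) ≤ ∑ j ∈ Finset.range J, ((j : ℝ) + 1) ^ d :=
        le_trans (by gcongr) (sum_pow_ge d J)
      calc K * p ^ (d + 1) / Q = (p / E) ^ (d + 1) / (d + 1) * (c1 ^ d / Q) := by
            have e5 : (p / E) ^ (d + 1) = p ^ (d + 1) / E ^ (d + 1) := div_pow _ _ _
            rw [hK, e5]; field_simp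
        _ ≤ _ := by gcongr
    linarith
  have hm3 : ((⌊ρ⌋₊ + 2 : ℕ) : ℝ) ≤ 3 * ρ := by
    push_cast
    linarith [Nat.floor_le (a := ρ) (by linarith)]
  have hfin : K * ρ ≤ (n : ℝ) ^ d * (K * p ^ (d + 1) / Q) := by
    rw [← hρn]
    exact numeric_aux d hd K p ρ Q hK0 hp1 hpρ hQ0 hQle
  calc ((⌊ρ⌋₊ + 2 : ℕ) : ℝ) * (K / 3) ≤ 3 * ρ * (K / 3) := by gcongr
    _ = K * ρ := by ring
    _ ≤ _ := hfin
    _ ≤ _ := by gcongr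

theorem Lp_smul_nonneg {c : ℝ} (hc : 0 ≤ c) {f : Lp ℝ 1 μ} (hf : 0 ≤ f) : 0 ≤ c • f := by
  rw [← Lp.coeFn_nonneg] at *
  filter_upwards [hf, Lp.coeFn_smul c f] with ω h1 h2
  rw [h2]; exact mul_nonneg hc h1

theorem Lp_smul_le {c c' : ℝ} (hc : c ≤ c') {f : Lp ℝ 1 μ} (hf : 0 ≤ f) : c • f ≤ c' • f := by
  have := Lp_smul_nonneg (sub_nonneg.2 hc) hf
  rw [sub_smul] at this
  exact sub_nonneg.1 this

theorem Lp_smul_le' {c : ℝ} (hc : 0 ≤ c) {f g : Lp ℝ 1 μ} (hf : f ≤ g) : c • f ≤ c • g := by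
  have := Lp_smul_nonneg hc (sub_nonneg.2 hf)
  rw [smul_sub] at this
  exact sub_nonneg.1 this

section
variable {R : Type*} [CommRing R] [Algebra ℝ R] {d : ℕ}

noncomputable def AA (x : Fin d → R) (n : ℕ) : R :=
  ((n : ℝ) ^ d)⁻¹ • ∏ i, ∑ k ∈ Finset.range n, x i ^ k

variable (φ : R →ₐ[ℝ] (Lp ℝ 1 μ →L[ℝ] Lp ℝ 1 μ)) (x : Fin d → R) (hx : ∀ i, DSop μ (φ (x i)))
include hx

omit hx in
theorem DS_prod (s : Finset (Fin d)) (y : Fin d → R) (hy : ∀ i ∈ s, DSop μ (φ (y i))) :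
    DSop μ (φ (∏ i ∈ s, y i)) := by
  refine Finset.prod_induction _ (fun r => DSop μ (φ r)) ?_ ?_ hy
  · intro a b ha hb; rw [map_mul]; exact ha.mul hb
  · rw [map_one]; exact DSop.one

theorem DS_pow (i : Fin d) (k : ℕ) : DSop μ (φ (x i ^ k)) := by
  rw [map_pow]; exact (hx i).pow k

theorem DS_poly (s : Finset ℕ) (c : ℕ → ℝ) (hc : ∀ k ∈ s, 0 ≤ c k) (hs : ∑ k ∈ s, c k ≤ 1) (i : Fin d) :
    DSop μ (φ (∑ k ∈ s, c k • x i ^ k)) := by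
  rw [map_sum]
  simp only [map_smul]
  exact DSop.wsum s c _ hc hs fun k _ => DS_pow φ x hx i k

theorem DS_geom (n : ℕ) (hn : 1 ≤ n) (i : Fin d) :
    DSop μ (φ ((n : ℝ)⁻¹ • ∑ k ∈ Finset.range n, x i ^ k)) := by
  rw [Finset.smul_sum]
  apply DS_poly φ x hx
  · intro k _; positivity
  · simp
    rw [mul_inv_cancel₀]
    have : (0 : ℝ) < n := by exact_mod_cast hn
    exact this.ne'

omit hx in
theorem AA_eq (n : ℕ) : AA x n = ∏ i, ((n : ℝ)⁻¹ • ∑ k ∈ Finset.range n, x i ^ k) := by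
  unfold AA
  simp only [Algebra.smul_def]
  rw [Finset.prod_mul_distrib, Finset.prod_const, ← map_pow, inv_pow]
  simp

theorem DS_AA (n : ℕ) (hn : 1 ≤ n) : DSop μ (φ (AA x n)) := by
  rw [AA_eq]
  exact DS_prod φ _ _ fun i _ => DS_geom φ x hx n hn i

omit hx in
theorem prod_poly (K : ℕ) (w : ℕ → ℝ) :
    ∏ i, ∑ k ∈ Finset.range K, w k • x i ^ k
      = ∑ k ∈ Fintype.piFinset (fun _ : Fin d => Finset.range K), (∏ i, w (k i)) • ∏ i, x i ^ (k i) := by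
  rw [Finset.prod_univ_sum]
  refine Finset.sum_congr rfl fun k _ => ?_
  simp only [Algebra.smul_def]
  rw [Finset.prod_mul_distrib, map_prod]

theorem dominate : ∃ C : ℝ, 0 < C ∧ ∀ N : ℕ, ∃ u : R, DSop μ (φ u) ∧ ∀ n, 1 ≤ n → n ≤ N →
    ∃ m : ℕ, 1 ≤ m ∧ ∀ f : Lp ℝ 1 μ, 0 ≤ f →
      φ (AA x n) f ≤ (C / m) • ∑ j ∈ Finset.range m, ((φ u) ^ j) f := by
  rcases Nat.eq_zero_or_pos d with h0 | hd
  · subst h0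
    refine ⟨1, one_pos, fun N => ⟨1, by rw [map_one]; exact DSop.one, fun n hn _ =>
      ⟨1, le_rfl, fun f _ => ?_⟩⟩⟩
    simp [AA]
  obtain ⟨c, hc, H⟩ := numeric d hd
  refine ⟨1 / c, by positivity, fun N => ?_⟩
  refine ⟨∏ i, ∑ k ∈ Finset.range N, aa d k • x i ^ k, ?_, fun n hn hN => ?_⟩
  · refine DS_prod φ _ _ fun i _ => DS_poly φ x hx _ _ (fun k _ => aa_nonneg d k) ?_ i
    rw [sum_aa]
    linarith [inv_nonneg.2 (rr_pos d N).le]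
  obtain ⟨m, hm, Hk⟩ := H N n hn hN
  refine ⟨m, hm, fun f hf => ?_⟩
  set u := ∏ i, ∑ k ∈ Finset.range N, aa d k • x i ^ k with hu
  have q0 : ∀ k, 0 ≤ (qq d N).coeff k := fun k => by
    unfold qq; rw [coeff_ind]; split_ifs; exacts [aa_nonneg d k, le_rfl]
  have hu' : u = ∏ i, Polynomial.aeval (x i) (qq d N) := by
    rw [hu]
    refine Finset.prod_congr rfl fun i _ => ?_
    unfold qq
    rw [map_sum]
    refine Finset.sum_congr rfl fun k _ => ?_
    simp [Algebra.smul_def]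
  obtain ⟨K, hnK, hK⟩ : ∃ K, n ≤ K ∧ ∀ j < m, ((qq d N) ^ j).natDegree < K := by
    refine ⟨n + (∑ j ∈ Finset.range m, ((qq d N) ^ j).natDegree) + 1, by omega, fun j hj => ?_⟩
    have := Finset.single_le_sum (f := fun j => ((qq d N) ^ j).natDegree) (fun _ _ => Nat.zero_le _)
      (Finset.mem_range.2 hj)
    omega
  have huj : ∀ j < m, u ^ j = ∑ k ∈ Fintype.piFinset (fun _ : Fin d => Finset.range K),
      (∏ i, ((qq d N) ^ j).coeff (k i)) • ∏ i, x i ^ (k i) := by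
    intro j hj
    rw [← prod_poly, hu', ← Finset.prod_pow]
    refine Finset.prod_congr rfl fun i _ => ?_
    rw [← map_pow, Polynomial.aeval_eq_sum_range' (hK j hj)]
  have hv : ∀ k : Fin d → ℕ, 0 ≤ φ (∏ i, x i ^ (k i)) f := fun k =>
    (DS_prod φ _ _ fun i _ => DS_pow φ x hx i (k i)).pos f hf
  have hS : ∑ j ∈ Finset.range m, ((φ u) ^ j) f
      = ∑ k ∈ Fintype.piFinset (fun _ : Fin d => Finset.range K),
        (∑ j ∈ Finset.range m, ∏ i, ((qq d N) ^ j).coeff (k i)) • φ (∏ i, x i ^ (k i)) f := by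
    simp only [Finset.sum_smul]
    rw [Finset.sum_comm]
    refine Finset.sum_congr rfl fun j hj => ?_
    rw [← map_pow, huj j (Finset.mem_range.1 hj), map_sum, _root_.sum_apply]
    refine Finset.sum_congr rfl fun k _ => ?_
    rw [map_smul, _root_.smul_apply]
  have hA : φ (AA x n) f = ∑ k ∈ Fintype.piFinset (fun _ : Fin d => Finset.range n),
      ((n : ℝ) ^ d)⁻¹ • φ (∏ i, x i ^ (k i)) f := by
    unfold AA
    have := prod_poly x n (fun _ => 1)
    simp only [one_smul, Finset.prod_const_one] at this
    rw [this, map_smul, map_sum, _root_.smul_apply, _root_.sum_apply, Finset.smul_sum]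
  rw [hA, hS, Finset.smul_sum]
  have hn0 : (0 : ℝ) < n := by exact_mod_cast hn
  have hm0 : (0 : ℝ) < m := by exact_mod_cast hm
  refine le_trans (Finset.sum_le_sum (g := fun k => (1 / c / m) • ((∑ j ∈ Finset.range m, ∏ i, ((qq d N) ^ j).coeff (k i)) • φ (∏ i, x i ^ (k i)) f)) fun k hk => ?_) ?_
  · rw [smul_smul]
    refine Lp_smul_le ?_ (hv k)
    have := Hk k (by intro i; have := Fintype.mem_piFinset.1 hk i; exact Finset.mem_range.1 this)
    rw [inv_le_iff_one_le_mul₀ (by positivity), div_div, one_div, mul_assoc, ← div_eq_inv_mul,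
      le_div_iff₀ (by positivity)]
    linarith
  · refine Finset.sum_le_sum_of_subset_of_nonneg ?_ fun k _ _ => ?_
    · exact Fintype.piFinset_subset _ _ fun _ => Finset.range_mono hnK
    · refine Lp_smul_nonneg (by positivity) (Lp_smul_nonneg ?_ (hv k))
      exact Finset.sum_nonneg fun j _ => Finset.prod_nonneg fun i _ => NN_pow q0 _ _

theorem weak11 : ∃ C : ℝ, 0 < C ∧ ∀ N : ℕ, ∀ f : Lp ℝ 1 μ, 0 ≤ f → ∀ lam : ℝ, 0 < lam →
    μ {ω | ∃ n, 1 ≤ n ∧ n ≤ N ∧ lam < (φ (AA x n) f) ω} ≤ ENNReal.ofReal (C * ‖f‖ / lam) := by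
  obtain ⟨C, hC, H⟩ := dominate φ x hx
  refine ⟨C, hC, fun N f hf lam hl => ?_⟩
  obtain ⟨u, hu, Hn⟩ := H N
  have : ∀ n, ∃ m : ℕ, 1 ≤ n → n ≤ N → 1 ≤ m ∧
      φ (AA x n) f ≤ (C / m) • ∑ j ∈ Finset.range m, ((φ u) ^ j) f := by
    intro n
    by_cases h : 1 ≤ n ∧ n ≤ N
    · obtain ⟨m, hm, h1⟩ := Hn n h.1 h.2
      exact ⟨m, fun _ _ => ⟨hm, h1 f hf⟩⟩
    · exact ⟨0, fun h1 h2 => absurd ⟨h1, h2⟩ h⟩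
  choose m hm using this
  have e : C * ‖f‖ / lam = ‖f‖ / (lam / C) := by field_simp
  rw [e]
  refine le_trans (measure_mono_ae ?_) (hopf hu hf (div_pos hl hC) (∑ n ∈ Finset.range (N + 1), m n))
  have h1 : ∀ᵐ ω ∂μ, ∀ n, 1 ≤ n → n ≤ N → (φ (AA x n) f) ω ≤
      (C / m n) * (∑ j ∈ Finset.range (m n), ((φ u) ^ j) f : Lp ℝ 1 μ) ω := by
    rw [ae_all_iff]
    intro n
    by_cases h : 1 ≤ n ∧ n ≤ N
    · filter_upwards [(Lp.coeFn_le _ _).2 (hm n h.1 h.2).2,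
        Lp.coeFn_smul (C / (m n : ℝ)) (∑ j ∈ Finset.range (m n), ((φ u) ^ j) f)] with ω h1 h2 _ _
      rw [h2] at h1
      exact h1
    · exact Eventually.of_forall fun ω h1 h2 => absurd ⟨h1, h2⟩ h
  filter_upwards [h1] with ω h1
  rintro ⟨n, hn1, hn2, hlt⟩
  refine ⟨m n, Finset.single_le_sum (f := m) (fun _ _ => Nat.zero_le _) (Finset.mem_range.2 (by omega)), ?_⟩
  have h2 := lt_of_lt_of_le hlt (h1 n hn1 hn2)
  have hm1 := (hm n hn1 hn2).1
  have hm0 : (0 : ℝ) < m n := by exact_mod_cast hm1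
  rw [div_mul_eq_mul_div, lt_div_iff₀ hm0] at h2
  rw [← mul_div_assoc, div_lt_iff₀ hC]
  linarith

end

end

section
variable {μ : Measure Ω}

theorem Lp_sub_ae (f g : Lp ℝ 1 μ) : ∀ᵐ ω ∂μ, (f - g : Lp ℝ 1 μ) ω = f ω - g ω := Lp.coeFn_sub f g
theorem Lp_add_ae (f g : Lp ℝ 1 μ) : ∀ᵐ ω ∂μ, (f + g : Lp ℝ 1 μ) ω = f ω + g ω := Lp.coeFn_add f g
theorem Lp_neg_ae (f : Lp ℝ 1 μ) : ∀ᵐ ω ∂μ, (-f : Lp ℝ 1 μ) ω = - f ω := Lp.coeFn_neg f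
theorem Lp_smul_ae (c : ℝ) (f : Lp ℝ 1 μ) : ∀ᵐ ω ∂μ, (c • f : Lp ℝ 1 μ) ω = c * f ω := Lp.coeFn_smul c f
theorem Lp_abs_ae (f : Lp ℝ 1 μ) : ∀ᵐ ω ∂μ, (|f| : Lp ℝ 1 μ) ω = |f ω| := Lp.coeFn_abs f
theorem Lp_nonneg_ae {f : Lp ℝ 1 μ} (h : 0 ≤ f) : ∀ᵐ ω ∂μ, 0 ≤ f ω := (Lp.coeFn_nonneg f).2 h
theorem Lp_le_ae {f g : Lp ℝ 1 μ} (h : f ≤ g) : ∀ᵐ ω ∂μ, f ω ≤ g ω := (Lp.coeFn_le f g).2 h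

def Bd (μ : Measure Ω) (B : ℝ) (g : Lp ℝ 1 μ) : Prop := ∀ᵐ ω ∂μ, |g ω| ≤ B

theorem DSop.abs_le {U : Lp ℝ 1 μ →L[ℝ] Lp ℝ 1 μ} (hU : DSop μ U) (f : Lp ℝ 1 μ) :
    ∀ᵐ ω ∂μ, |U f ω| ≤ U |f| ω := by
  have h1 := Lp_le_ae (hU.mono (le_abs_self f))
  have h2 := Lp_le_ae (hU.mono (neg_le_abs f))
  rw [map_neg] at h2
  filter_upwards [h1, h2, Lp_neg_ae (U f)] with ω h1 h2 h3
  rw [h3] at h2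
  exact _root_.abs_le.2 ⟨by linarith, h1⟩

theorem DSop.bd {U : Lp ℝ 1 μ →L[ℝ] Lp ℝ 1 μ} (hU : DSop μ U) {B : ℝ} (hB : 0 ≤ B) {f : Lp ℝ 1 μ}
    (hf : Bd μ B f) : Bd μ B (U f) := by
  have h1 := hU.sub B hB |f| (by
    filter_upwards [hf, Lp_abs_ae f] with ω h1 h2
    rw [h2]; exact h1)
  filter_upwards [h1, hU.abs_le f] with ω h1 h2
  exact h2.trans h1

theorem Bd.sq_int {B : ℝ} {g : Lp ℝ 1 μ} (hg : Bd μ B g) : Integrable (fun ω => g ω ^ 2) μ := by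
  have i := (L1.integrable_coeFn g).norm.const_mul B
  refine i.mono' ((Lp.stronglyMeasurable g).pow 2).aestronglyMeasurable ?_
  filter_upwards [hg] with ω h
  rw [Real.norm_of_nonneg (sq_nonneg _), Real.norm_eq_abs, ← sq_abs, sq]
  exact mul_le_mul_of_nonneg_right h (abs_nonneg _)

noncomputable def sqi (g : Lp ℝ 1 μ) : ℝ := ∫ ω, g ω ^ 2 ∂μ

theorem sqi_nonneg (g : Lp ℝ 1 μ) : 0 ≤ sqi g := integral_nonneg fun _ => sq_nonneg _

theorem DSop.sqi_le {U : Lp ℝ 1 μ →L[ℝ] Lp ℝ 1 μ} (hU : DSop μ U) {B : ℝ} (hB : 0 ≤ B) {g : Lp ℝ 1 μ}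
    (hg : Bd μ B g) : sqi (U g) ≤ sqi g := by
  have ig := hg.sq_int
  set s : Lp ℝ 1 μ := ig.toL1 _ with hs
  have hs' : ∀ᵐ ω ∂μ, s ω = g ω ^ 2 := ig.coeFn_toL1
  have s0 : 0 ≤ s := by
    rw [← Lp.coeFn_nonneg]
    filter_upwards [hs'] with ω h
    rw [h]; exact sq_nonneg _
  have key : ∀ᵐ ω ∂μ, ∀ c : ℚ, (U ((2 * (c : ℝ)) • |g| - s)) ω ≤ (c : ℝ) ^ 2 := by
    rw [ae_all_iff]
    intro c
    apply hU.sub _ (sq_nonneg _)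
    filter_upwards [hs', Lp_sub_ae ((2 * (c : ℝ)) • |g|) s, Lp_smul_ae (2 * (c : ℝ)) |g|,
      Lp_abs_ae g] with ω h1 h2 h3 h4
    rw [h2, h1, h3, h4, ← sq_abs (g ω)]
    nlinarith [sq_nonneg (|g ω| - c)]
  have key2 : ∀ᵐ ω ∂μ, ∀ c : ℚ, (U ((2 * (c : ℝ)) • |g| - s)) ω = 2 * c * (U |g|) ω - U s ω := by
    rw [ae_all_iff]
    intro c
    rw [map_sub, map_smul]
    filter_upwards [Lp_sub_ae ((2 * (c : ℝ)) • U |g|) (U s), Lp_smul_ae (2 * (c : ℝ)) (U |g|)]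
      with ω h1 h2
    rw [h1, h2]
  have hpt : ∀ᵐ ω ∂μ, U g ω ^ 2 ≤ U s ω := by
    filter_upwards [key, key2, hU.abs_le g] with ω h1 h2 h3
    have h4 : ∀ c : ℝ, 2 * c * (U |g|) ω - U s ω - c ^ 2 ≤ 0 := by
      intro c
      refine Rat.denseRange_cast.induction_on (p := fun c : ℝ => 2 * c * (U |g|) ω - U s ω - c ^ 2 ≤ 0) c ?_ ?_
      · exact isClosed_le (by fun_prop) continuous_const
      · intro a
        have := h1 a
        rw [h2 a] at this
        linarith
    have h5 := h4 (U |g| ω)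
    have h6 : U g ω ^ 2 ≤ U |g| ω ^ 2 := by
      rw [← sq_abs]; exact pow_le_pow_left₀ (abs_nonneg _) h3 2
    nlinarith
  calc sqi (U g) ≤ ∫ ω, U s ω ∂μ :=
        integral_mono_ae (hU.bd hB hg).sq_int (L1.integrable_coeFn _) hpt
    _ = ‖U s‖ := (norm_eq_integral_of_nonneg (hU.pos s s0)).symm
    _ ≤ ‖s‖ := hU.norm s
    _ = ∫ ω, s ω ∂μ := norm_eq_integral_of_nonneg s0
    _ = sqi g := integral_congr_ae hs'

theorem cheb {B : ℝ} {g : Lp ℝ 1 μ} (hg : Bd μ B g) {lam : ℝ} (hl : 0 < lam) :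
    μ {ω | lam < |g ω|} ≤ ENNReal.ofReal (sqi g / lam ^ 2) := by
  have h1 := mul_meas_ge_le_lintegral₀ (μ := μ) (f := fun ω => ENNReal.ofReal (g ω ^ 2))
    ((Lp.stronglyMeasurable g).measurable.pow_const 2).ennreal_ofReal.aemeasurable
    (ENNReal.ofReal (lam ^ 2))
  rw [← ofReal_integral_eq_lintegral_ofReal hg.sq_int (Eventually.of_forall fun _ => sq_nonneg _)] at h1
  rw [ENNReal.ofReal_div_of_pos (by positivity), ENNReal.le_div_iff_mul_le (by left; simp [hl.ne']) (by left; simp), mul_comm]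
  refine le_trans ?_ h1
  refine mul_le_mul_right (measure_mono ?_) _
  intro ω hω
  apply ENNReal.ofReal_le_ofReal
  rw [← sq_abs (g ω)]
  exact pow_le_pow_left₀ hl.le (le_of_lt hω) 2

section
variable (A : ℕ → Lp ℝ 1 μ →L[ℝ] Lp ℝ 1 μ) (hA : ∀ n, 1 ≤ n → DSop μ (A n)) {C : ℝ} (hC : 0 < C)
  (weak : ∀ N : ℕ, ∀ f : Lp ℝ 1 μ, 0 ≤ f → ∀ lam : ℝ, 0 < lam →
    μ {ω | ∃ n, 1 ≤ n ∧ n ≤ N ∧ lam < (A n f) ω} ≤ ENNReal.ofReal (C * ‖f‖ / lam))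
include hA weak

theorem abs_all (f : Lp ℝ 1 μ) : ∀ᵐ ω ∂μ, ∀ n, 1 ≤ n → |A n f ω| ≤ A n |f| ω := by
  rw [ae_all_iff]
  intro n
  by_cases h : 1 ≤ n
  · filter_upwards [(hA n h).abs_le f] with ω h1 _
    exact h1
  · exact Eventually.of_forall fun ω h' => absurd h' h

theorem W1 (f : Lp ℝ 1 μ) {lam : ℝ} (hl : 0 < lam) :
    μ {ω | ∃ n, 1 ≤ n ∧ lam < |A n f ω|} ≤ ENNReal.ofReal (C * ‖f‖ / lam) := by
  have e : {ω | ∃ n, 1 ≤ n ∧ lam < (A n |f|) ω} = ⋃ N : ℕ, {ω | ∃ n, 1 ≤ n ∧ n ≤ N ∧ lam < (A n |f|) ω} := by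
    ext ω
    simp only [mem_ofPred_eq, mem_iUnion]
    constructor
    · rintro ⟨n, h1, h2⟩; exact ⟨n, n, h1, le_rfl, h2⟩
    · rintro ⟨N, n, h1, _, h2⟩; exact ⟨n, h1, h2⟩
  calc _ ≤ μ {ω | ∃ n, 1 ≤ n ∧ lam < (A n |f|) ω} := by
        apply measure_mono_ae
        filter_upwards [abs_all A hA weak f] with ω h
        rintro ⟨n, h1, h2⟩
        exact ⟨n, h1, h2.trans_le (h n h1)⟩
    _ = ⨆ N : ℕ, μ {ω | ∃ n, 1 ≤ n ∧ n ≤ N ∧ lam < (A n |f|) ω} := by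
        rw [e, Monotone.measure_iUnion]
        intro N M hNM ω
        rintro ⟨n, h1, h2, h3⟩
        exact ⟨n, h1, h2.trans hNM, h3⟩
    _ ≤ _ := by
        refine iSup_le fun N => ?_
        have := weak N |f| (abs_nonneg f) lam hl
        rwa [norm_abs_eq_norm] at this

include hC in
theorem W2 {B : ℝ} {g : Lp ℝ 1 μ} (hg : Bd μ B g) {lam : ℝ} (hl : 0 < lam) :
    μ {ω | ∃ n, 1 ≤ n ∧ 2 * lam < |A n g ω|} ≤ ENNReal.ofReal (C * sqi g / lam ^ 2) := by
  set h := cut lam hl.le |g| with hh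
  have hc := coeFn_cut lam hl.le |g|
  rw [← hh] at hc
  have h0 : 0 ≤ h := by
    rw [← Lp.coeFn_nonneg]
    filter_upwards [hc] with ω h1
    rw [h1]; exact le_max_right _ _
  have hn : ‖h‖ ≤ sqi g / lam := by
    rw [norm_eq_integral_of_nonneg h0]
    unfold sqi
    rw [← integral_div]
    refine integral_mono_ae (L1.integrable_coeFn _) (hg.sq_int.div_const _) ?_
    filter_upwards [hc, Lp_abs_ae g] with ω h1 h2
    rw [h1, h2, le_div_iff₀ hl, ← sq_abs]
    rcases le_total (|g ω| - lam) 0 with h3 | h3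
    · rw [max_eq_right h3]; nlinarith [sq_nonneg |g ω|]
    · rw [max_eq_left h3]; nlinarith [sq_nonneg (|g ω| - lam)]
  have hsub : ∀ᵐ ω ∂μ, ∀ n, 1 ≤ n → A n |g| ω - A n h ω ≤ lam := by
    rw [ae_all_iff]
    intro n
    by_cases hn : 1 ≤ n
    · have := (hA n hn).sub lam hl.le (|g| - h) (by
        filter_upwards [hc, Lp_sub_ae |g| h] with ω h1 h2
        rw [h2, h1]
        linarith [le_max_left ((|g| : Lp ℝ 1 μ) ω - lam) 0])
      rw [map_sub] at this
      filter_upwards [this, Lp_sub_ae (A n |g|) (A n h)] with ω h1 h2 _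
      rw [← h2]; exact h1
    · exact Eventually.of_forall fun ω h' => absurd h' hn
  calc _ ≤ μ {ω | ∃ n, 1 ≤ n ∧ lam < |A n h ω|} := by
        apply measure_mono_ae
        filter_upwards [abs_all A hA weak g, hsub] with ω h1 h2
        rintro ⟨n, hn, h3⟩
        have := h1 n hn
        have := h2 n hn
        exact ⟨n, hn, lt_of_lt_of_le (by linarith) (le_abs_self _)⟩
    _ ≤ _ := W1 A hA weak h hl
    _ ≤ _ := by
        apply ENNReal.ofReal_le_ofReal
        calc C * ‖h‖ / lam ≤ C * (sqi g / lam) / lam := by gcongr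
          _ = _ := by field_simp

def AuC (A : ℕ → Lp ℝ 1 μ →L[ℝ] Lp ℝ 1 μ) (f : Lp ℝ 1 μ) : Prop :=
  ∀ ε lam : ℝ, 0 < ε → 0 < lam → ∃ N, 1 ≤ N ∧
    μ {ω | ∃ n m, N ≤ n ∧ N ≤ m ∧ lam < |A n f ω - A m f ω|} ≤ ENNReal.ofReal ε

variable (inv : ∀ p, 1 ≤ p → ∃ c : ℝ, 0 ≤ c ∧ ∀ n : ℕ, 1 ≤ n → ∀ B : ℝ, 0 ≤ B → ∀ h : Lp ℝ 1 μ, Bd μ B h →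
    Bd μ (c * B / n) (A n (h - A p h)))
include inv

omit hA weak inv in
/-- the functions equivalent to f -/
def KK (A : ℕ → Lp ℝ 1 μ →L[ℝ] Lp ℝ 1 μ) (f : Lp ℝ 1 μ) (B : ℝ) : Set (Lp ℝ 1 μ) :=
  {h | Bd μ B h ∧ ∃ c : ℝ, 0 ≤ c ∧ ∀ n : ℕ, 1 ≤ n → Bd μ (c / n) (A n (f - h))}

omit hA weak inv in
theorem Bd.add {B B' : ℝ} {g h : Lp ℝ 1 μ} (hg : Bd μ B g) (hh : Bd μ B' h) : Bd μ (B + B') (g + h) := by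
  filter_upwards [hg, hh, Lp_add_ae g h] with ω h1 h2 h3
  rw [h3]; exact (abs_add_le _ _).trans (add_le_add h1 h2)

omit hA weak inv in
theorem Bd.sub {B B' : ℝ} {g h : Lp ℝ 1 μ} (hg : Bd μ B g) (hh : Bd μ B' h) : Bd μ (B + B') (g - h) := by
  filter_upwards [hg, hh, Lp_sub_ae g h] with ω h1 h2 h3
  rw [h3]; exact (abs_sub _ _).trans (add_le_add h1 h2)

omit hA weak inv in
theorem Bd.smul {B c : ℝ} (hc : 0 ≤ c) {g : Lp ℝ 1 μ} (hg : Bd μ B g) : Bd μ (c * B) (c • g) := by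
  filter_upwards [hg, Lp_smul_ae c g] with ω h1 h3
  rw [h3, abs_mul, abs_of_nonneg hc]; exact mul_le_mul_of_nonneg_left h1 hc

omit weak in
theorem KK_A {f : Lp ℝ 1 μ} {B : ℝ} (hB : 0 ≤ B) {h : Lp ℝ 1 μ} (hh : h ∈ KK A f B) {p : ℕ} (hp : 1 ≤ p) :
    A p h ∈ KK A f B := by
  obtain ⟨h1, c, hc, h2⟩ := hh
  refine ⟨(hA p hp).bd hB h1, ?_⟩
  obtain ⟨c', hc', h3⟩ := inv p hp
  refine ⟨c + c' * B, by positivity, fun n hn => ?_⟩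
  have := (h2 n hn).add (h3 n hn B hB h h1)
  rw [← map_add, ← add_div] at this
  simpa using this

omit hA weak inv in
theorem KK_mid {f : Lp ℝ 1 μ} {B : ℝ} {h h' : Lp ℝ 1 μ} (hh : h ∈ KK A f B) (hh' : h' ∈ KK A f B) :
    (2 : ℝ)⁻¹ • (h + h') ∈ KK A f B := by
  obtain ⟨h1, c, hc, h2⟩ := hh
  obtain ⟨h1', c', hc', h2'⟩ := hh'
  constructor
  · have := (h1.add h1').smul (c := 2⁻¹) (by norm_num)
    convert this using 1; ring
  · refine ⟨2⁻¹ * (c + c'), by positivity, fun n hn => ?_⟩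
    have := ((h2 n hn).add (h2' n hn)).smul (c := 2⁻¹) (by norm_num)
    rw [← map_add, ← map_smul] at this
    convert this using 2
    · ring
    · module

omit hA weak inv in
theorem sqi_par {B B' : ℝ} {h h' : Lp ℝ 1 μ} (hh : Bd μ B h) (hh' : Bd μ B' h') :
    sqi (h - h') = 2 * sqi h + 2 * sqi h' - 4 * sqi ((2 : ℝ)⁻¹ • (h + h')) := by
  have i1 := hh.sq_int
  have i2 := hh'.sq_int
  have i3 := ((hh.add hh').smul (c := 2⁻¹) (by norm_num)).sq_int
  have i12 : Integrable (fun ω => 2 * h ω ^ 2 + 2 * h' ω ^ 2) μ := (i1.const_mul 2).add (i2.const_mul 2)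
  unfold sqi
  rw [← integral_const_mul, ← integral_const_mul, ← integral_const_mul,
    ← integral_add (i1.const_mul 2) (i2.const_mul 2),
    ← integral_sub i12 (i3.const_mul 4)]
  apply integral_congr_ae
  filter_upwards [Lp_sub_ae h h', Lp_add_ae h h', Lp_smul_ae 2⁻¹ (h + h')] with ω h1 h2 h3
  rw [h1, h3, h2]; ring

include hC in
theorem bounded_case {f : Lp ℝ 1 μ} {B : ℝ} (hB : 0 ≤ B) (hf : Bd μ B f) : AuC A f := by
  intro ε lam8 hε hl8
  obtain ⟨lam, hl, hlam⟩ : ∃ lam : ℝ, 0 < lam ∧ lam8 = 8 * lam := ⟨lam8 / 8, by positivity, by ring⟩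
  set K := KK A f B with hK
  have hfK : f ∈ K := ⟨hf, 0, le_rfl, fun n hn => by
    rw [sub_self, map_zero]
    filter_upwards [Lp.coeFn_zero ℝ 1 μ] with ω h
    rw [h]; simp⟩
  set δ := sInf (sqi '' K) with hδ
  have hbdd : BddBelow (sqi '' K) := ⟨0, by rintro _ ⟨h, _, rfl⟩; exact sqi_nonneg h⟩
  have hδle : ∀ h ∈ K, δ ≤ sqi h := fun h hh => csInf_le hbdd ⟨h, hh, rfl⟩
  have hδex : ∀ η : ℝ, 0 < η → ∃ h ∈ K, sqi h < δ + η := by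
    intro η hη
    obtain ⟨_, ⟨h, hh, rfl⟩, hlt⟩ := exists_lt_of_csInf_lt (s := sqi '' K) ⟨_, f, hfK, rfl⟩
      (show sInf (sqi '' K) < δ + η by linarith)
    exact ⟨h, hh, hlt⟩
  have close : ∀ h ∈ K, ∀ h' ∈ K, ∀ η, sqi h ≤ δ + η → sqi h' ≤ δ + η → sqi (h - h') ≤ 4 * η := by
    intro h hh h' hh' η h1 h2
    rw [sqi_par hh.1 hh'.1]
    have := hδle _ (KK_mid A hh hh')
    linarith
  set η := ε * lam ^ 2 / (4 * C + 4) with hη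
  have hη0 : 0 < η := by positivity
  obtain ⟨h, hh, hhη⟩ := hδex η hη0
  have main : ∀ M : ℕ, μ {ω | ∃ n m, (1 ≤ n ∧ n ≤ M) ∧ (1 ≤ m ∧ m ≤ M) ∧ 6 * lam < |A n h ω - A m h ω|}
      ≤ ENNReal.ofReal ε := by
    intro M
    set η' := η / (M + 1) with hη'
    have hη'0 : 0 < η' := by positivity
    have hη'le : η' ≤ η := div_le_self hη0.le (by linarith [Nat.cast_nonneg (α := ℝ) M])
    obtain ⟨h', hh', hhη'⟩ := hδex η' hη'0
    have b1 : sqi (h - h') ≤ 4 * η := close h hh h' hh' η hhη.le (by linarith)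
    have b2 : ∀ n, 1 ≤ n → sqi (A n h' - h') ≤ 4 * η' := fun n hn =>
      close _ (KK_A A hA inv hB hh' hn) h' hh' η'
        (((hA n hn).sqi_le hB hh'.1).trans hhη'.le) hhη'.le
    have m1 := W2 A hA hC weak (hh.1.sub hh'.1) hl
    have m2 : μ (⋃ n ∈ Finset.Icc 1 M, {ω | lam < |(A n h' - h' : Lp ℝ 1 μ) ω|})
        ≤ ENNReal.ofReal (4 * η / lam ^ 2) := by
      calc _ ≤ ∑ n ∈ Finset.Icc 1 M, μ {ω | lam < |(A n h' - h' : Lp ℝ 1 μ) ω|} :=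
            measure_biUnion_finset_le _ _
        _ ≤ ∑ n ∈ Finset.Icc 1 M, ENNReal.ofReal (4 * η' / lam ^ 2) := by
            refine Finset.sum_le_sum fun n hn => ?_
            have hn1 := (Finset.mem_Icc.1 hn).1
            refine (cheb (((hA n hn1).bd hB hh'.1).sub hh'.1) hl).trans ?_
            apply ENNReal.ofReal_le_ofReal
            gcongr
            exact b2 n hn1
        _ = ENNReal.ofReal (M * (4 * η' / lam ^ 2)) := by
            rw [Finset.sum_const, nsmul_eq_mul, ENNReal.ofReal_mul (by positivity)]
            simp
        _ ≤ _ := by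
            apply ENNReal.ofReal_le_ofReal
            rw [← mul_div_assoc]
            apply div_le_div_of_nonneg_right _ (by positivity)
            rw [hη']
            have : (M : ℝ) * (4 * (η / (M + 1))) = 4 * η * (M / (M + 1)) := by field_simp
            rw [this]
            have : (M : ℝ) / (M + 1) ≤ 1 := by rw [div_le_one (by positivity)]; linarith
            nlinarith
    have d1 : ∀ᵐ ω ∂μ, ∀ n, (A n (h - h')) ω = A n h ω - A n h' ω := by
      rw [ae_all_iff]; intro n; rw [map_sub]; exact Lp_sub_ae _ _
    have d2 : ∀ᵐ ω ∂μ, ∀ n, (A n h' - h' : Lp ℝ 1 μ) ω = A n h' ω - h' ω := by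
      rw [ae_all_iff]; intro n; exact Lp_sub_ae _ _
    calc _ ≤ μ ({ω | ∃ n, 1 ≤ n ∧ 2 * lam < |A n (h - h') ω|} ∪
          ⋃ n ∈ Finset.Icc 1 M, {ω | lam < |(A n h' - h' : Lp ℝ 1 μ) ω|}) := by
          apply measure_mono_ae
          filter_upwards [d1, d2] with ω d1 d2
          rintro ⟨n, m, ⟨hn1, hn2⟩, ⟨hm1, hm2⟩, hlt⟩
          by_contra hcon
          obtain ⟨c1, c2⟩ : ω ∉ _ ∧ ω ∉ _ := not_or.1 hcon
          simp only [mem_iUnion, mem_ofPred_eq, not_exists, not_and, not_lt, Finset.mem_Icc] at c1 c2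
          have x1 := c1 n hn1
          have x2 := c1 m hm1
          have x3 := c2 n ⟨hn1, hn2⟩
          have x4 := c2 m ⟨hm1, hm2⟩
          rw [d1, abs_le] at x1 x2
          rw [d2, abs_le] at x3 x4
          have : |A n h ω - A m h ω| ≤ 6 * lam := by
            rw [abs_le]; constructor <;> linarith
          exact absurd hlt (not_lt.2 this)
      _ ≤ _ := measure_union_le _ _
      _ ≤ ENNReal.ofReal (C * (4 * η) / lam ^ 2) + ENNReal.ofReal (4 * η / lam ^ 2) := by
          refine add_le_add (m1.trans (ENNReal.ofReal_le_ofReal ?_)) m2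
          gcongr
      _ = ENNReal.ofReal ε := by
          rw [← ENNReal.ofReal_add (by positivity) (by positivity)]
          congr 1
          rw [hη]; field_simp
  obtain ⟨hhb, c, hc, hcn⟩ := hh
  obtain ⟨N, hN⟩ := exists_nat_gt (c / lam)
  refine ⟨N + 1, by omega, ?_⟩
  have e : {ω | ∃ n m, 1 ≤ n ∧ 1 ≤ m ∧ 6 * lam < |A n h ω - A m h ω|} =
      ⋃ M : ℕ, {ω | ∃ n m, (1 ≤ n ∧ n ≤ M) ∧ (1 ≤ m ∧ m ≤ M) ∧ 6 * lam < |A n h ω - A m h ω|} := by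
    ext ω
    simp only [mem_ofPred_eq, mem_iUnion]
    constructor
    · rintro ⟨n, m, h1, h2, h3⟩
      exact ⟨max n m, n, m, ⟨h1, le_max_left _ _⟩, ⟨h2, le_max_right _ _⟩, h3⟩
    · rintro ⟨M, n, m, h1, h2, h3⟩; exact ⟨n, m, h1.1, h2.1, h3⟩
  have d1 : ∀ᵐ ω ∂μ, ∀ n, (A n (f - h)) ω = A n f ω - A n h ω := by
    rw [ae_all_iff]; intro n; rw [map_sub]; exact Lp_sub_ae _ _
  have d2 : ∀ᵐ ω ∂μ, ∀ n, N + 1 ≤ n → |(A n (f - h)) ω| ≤ lam := by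
    rw [ae_all_iff]
    intro n
    by_cases hn : N + 1 ≤ n
    · filter_upwards [hcn n (by omega)] with ω h1 _
      refine h1.trans ?_
      have : (N : ℝ) + 1 ≤ n := by exact_mod_cast hn
      rw [div_lt_iff₀ hl] at hN
      rw [div_le_iff₀ (by linarith [Nat.cast_nonneg (α := ℝ) N])]
      nlinarith
    · exact Eventually.of_forall fun ω h' => absurd h' hn
  calc _ ≤ μ {ω | ∃ n m, 1 ≤ n ∧ 1 ≤ m ∧ 6 * lam < |A n h ω - A m h ω|} := by
        apply measure_mono_ae
        filter_upwards [d1, d2] with ω d1 d2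
        rintro ⟨n, m, hn, hm, hlt⟩
        refine ⟨n, m, by omega, by omega, ?_⟩
        by_contra hcon
        rw [not_lt, abs_le] at hcon
        have x1 := d2 n hn
        have x2 := d2 m hm
        rw [d1, abs_le] at x1 x2
        have : |A n f ω - A m f ω| ≤ lam8 := by
          rw [abs_le, hlam]; constructor <;> linarith
        exact absurd hlt (not_lt.2 this)
    _ = ⨆ M : ℕ, μ {ω | ∃ n m, (1 ≤ n ∧ n ≤ M) ∧ (1 ≤ m ∧ m ≤ M) ∧ 6 * lam < |A n h ω - A m h ω|} := by
        rw [e, Monotone.measure_iUnion]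
        intro N M hNM ω
        rintro ⟨n, m, h1, h2, h3⟩
        exact ⟨n, m, ⟨h1.1, h1.2.trans hNM⟩, ⟨h2.1, h2.2.trans hNM⟩, h3⟩
    _ ≤ _ := iSup_le main

omit hA weak inv in
theorem exists_bdd_approx (f : Lp ℝ 1 μ) {η : ℝ} (hη : 0 < η) :
    ∃ g : Lp ℝ 1 μ, ∃ B : ℝ, 0 ≤ B ∧ Bd μ B g ∧ ‖f - g‖ < η := by
  obtain ⟨g, hg, hgm⟩ := (Lp.memLp f).exists_simpleFunc_eLpNorm_sub_lt (by simp)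
    (ε := ENNReal.ofReal η) (by simpa using hη)
  obtain ⟨B, hB⟩ := g.exists_forall_norm_le
  refine ⟨hgm.toLp g, max B 0, le_max_right _ _, ?_, ?_⟩
  · filter_upwards [hgm.coeFn_toLp] with ω h
    rw [h]; exact (hB ω).trans (le_max_left _ _)
  · have e : f - hgm.toLp g = ((Lp.memLp f).sub hgm).toLp _ := by
      rw [MemLp.toLp_sub (Lp.memLp f) hgm, Lp.toLp_coeFn]
    rw [e, Lp.norm_toLp]
    exact (ENNReal.toReal_lt_of_lt_ofReal hg)

include hC in
theorem auC_all (f : Lp ℝ 1 μ) : AuC A f := by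
  intro ε lam3 hε hl3
  obtain ⟨lam, hl, hlam⟩ : ∃ lam : ℝ, 0 < lam ∧ lam3 = 3 * lam := ⟨lam3 / 3, by positivity, by ring⟩
  obtain ⟨g, B, hB, hg, hfg⟩ := exists_bdd_approx f (η := ε / 2 * lam / C) (by positivity)
  obtain ⟨N, hN, h1⟩ := bounded_case A hA hC weak inv hB hg (ε / 2) lam (by positivity) hl
  refine ⟨N, hN, ?_⟩
  have h2 := W1 A hA weak (f - g) hl
  have d1 : ∀ᵐ ω ∂μ, ∀ n, (A n (f - g)) ω = A n f ω - A n g ω := by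
    rw [ae_all_iff]; intro n; rw [map_sub]; exact Lp_sub_ae _ _
  calc _ ≤ μ ({ω | ∃ n m, N ≤ n ∧ N ≤ m ∧ lam < |A n g ω - A m g ω|} ∪
          {ω | ∃ n, 1 ≤ n ∧ lam < |A n (f - g) ω|}) := by
        apply measure_mono_ae
        filter_upwards [d1] with ω d1
        rintro ⟨n, m, hn, hm, hlt⟩
        by_contra hcon
        obtain ⟨c1, c2⟩ : ω ∉ _ ∧ ω ∉ _ := not_or.1 hcon
        simp only [mem_ofPred_eq, not_exists, not_and, not_lt] at c1 c2
        have x1 := c1 n m hn hm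
        have x2 := c2 n (by omega)
        have x3 := c2 m (by omega)
        rw [d1, abs_le] at x2 x3
        rw [abs_le] at x1
        have : |A n f ω - A m f ω| ≤ lam3 := by
          rw [abs_le, hlam]; constructor <;> linarith
        exact absurd hlt (not_lt.2 this)
    _ ≤ _ := measure_union_le _ _
    _ ≤ ENNReal.ofReal (ε / 2) + ENNReal.ofReal (ε / 2) := by
        refine add_le_add h1 (h2.trans (ENNReal.ofReal_le_ofReal ?_))
        rw [div_le_iff₀ hl, mul_comm]
        rw [lt_div_iff₀ hC] at hfg
        exact hfg.le
    _ = _ := by rw [← ENNReal.ofReal_add (by positivity) (by positivity)]; congr 1; ring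

end

end

section
variable {μ : Measure Ω}

section
variable {R : Type*} [CommRing R] [Algebra ℝ R] {d : ℕ}

def Gd (φ : R →ₐ[ℝ] (Lp ℝ 1 μ →L[ℝ] Lp ℝ 1 μ)) (x : Fin d → R) (z : R) : Prop :=
  ∃ c : ℝ, 0 ≤ c ∧ ∀ n : ℕ, 1 ≤ n → ∀ B : ℝ, 0 ≤ B → ∀ h : Lp ℝ 1 μ, Bd μ B h →
    Bd μ (c * B / n) (φ (AA x n * z) h)

variable (φ : R →ₐ[ℝ] (Lp ℝ 1 μ →L[ℝ] Lp ℝ 1 μ)) (x : Fin d → R)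

theorem Gd.zero : Gd φ x 0 := by
  refine ⟨0, le_rfl, fun n _ B _ h _ => ?_⟩
  rw [mul_zero, map_zero]
  filter_upwards [Lp.coeFn_zero ℝ 1 μ] with ω h
  rw [_root_.zero_apply, h]; simp

variable {φ x}

theorem Gd.add {z w : R} (hz : Gd φ x z) (hw : Gd φ x w) : Gd φ x (z + w) := by
  obtain ⟨c, hc, h1⟩ := hz
  obtain ⟨c', hc', h2⟩ := hw
  refine ⟨c + c', by positivity, fun n hn B hB h hh => ?_⟩
  have := (h1 n hn B hB h hh).add (h2 n hn B hB h hh)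
  rw [mul_add, map_add, _root_.add_apply, add_mul, add_div]
  exact this

theorem Gd.smul {z : R} (hz : Gd φ x z) {a : ℝ} (ha : 0 ≤ a) : Gd φ x (a • z) := by
  obtain ⟨c, hc, h1⟩ := hz
  refine ⟨a * c, by positivity, fun n hn B hB h hh => ?_⟩
  have := (h1 n hn B hB h hh).smul ha
  rw [mul_smul_comm, map_smul, _root_.smul_apply, mul_assoc, mul_div_assoc]
  exact this

theorem Gd.dsmul {z y : R} (hz : Gd φ x z) (hy : DSop μ (φ y)) : Gd φ x (y * z) := by
  obtain ⟨c, hc, h1⟩ := hz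
  refine ⟨c, hc, fun n hn B hB h hh => ?_⟩
  have := hy.bd (by positivity) (h1 n hn B hB h hh)
  rw [mul_left_comm, map_mul]
  exact this

theorem Gd.sum {ι : Type*} (s : Finset ι) (z : ι → R) (hz : ∀ i ∈ s, Gd φ x (z i)) :
    Gd φ x (∑ i ∈ s, z i) :=
  Finset.sum_induction _ (Gd φ x) (fun _ _ => Gd.add) (Gd.zero φ x) hz

theorem Gd.prod {ι : Type*} (s : Finset ι) (y : ι → R) (hy : ∀ i, DSop μ (φ (y i)))
    (hz : ∀ i, Gd φ x (1 - y i)) : Gd φ x (1 - ∏ i ∈ s, y i) := by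
  classical
  induction s using Finset.induction_on with
  | empty => simpa using Gd.zero φ x
  | insert a s ha ih =>
    rw [Finset.prod_insert ha]
    have := (hz a).add (ih.dsmul (hy a))
    convert this using 1; ring

theorem Gd.pow {y : R} (hy : DSop μ (φ y)) (hz : Gd φ x (1 - y)) (k : ℕ) : Gd φ x (1 - y ^ k) := by
  have := Gd.prod (Finset.range k) (fun _ => y) (fun _ => hy) (fun _ => hz)
  simpa using this

theorem Gd.base (hx : ∀ i, DSop μ (φ (x i))) (i : Fin d) : Gd φ x (1 - x i) := by
  refine ⟨2, by norm_num, fun n hn B hB h hh => ?_⟩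
  have e : AA x n * (1 - x i) = (n : ℝ)⁻¹ •
      ((∏ j ∈ Finset.univ.erase i, ((n : ℝ)⁻¹ • ∑ k ∈ Finset.range n, x j ^ k)) * (1 - x i ^ n)) := by
    rw [AA_eq, ← Finset.mul_prod_erase _ _ (Finset.mem_univ i), ← geom_sum_mul_neg]
    simp only [Algebra.smul_def]
    ring
  have hD : DSop μ (φ (∏ j ∈ Finset.univ.erase i, ((n : ℝ)⁻¹ • ∑ k ∈ Finset.range n, x j ^ k))) :=
    DS_prod φ _ _ fun j _ => DS_geom φ x hx n hn j
  have h1 : Bd μ (B + B) (φ (1 - x i ^ n) h) := by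
    rw [map_sub, map_one]
    exact hh.sub ((DS_pow φ x hx i n).bd hB hh)
  have h2 := (hD.bd (by positivity) h1).smul (c := (n : ℝ)⁻¹) (by positivity)
  rw [e, map_smul, map_mul]
  convert h2 using 1
  · ring
  · rfl

variable (φ x)

theorem inv_AA (hx : ∀ i, DSop μ (φ (x i))) (p : ℕ) (hp : 1 ≤ p) :
    ∃ c : ℝ, 0 ≤ c ∧ ∀ n : ℕ, 1 ≤ n → ∀ B : ℝ, 0 ≤ B → ∀ h : Lp ℝ 1 μ, Bd μ B h →
    Bd μ (c * B / n) (φ (AA x n) (h - φ (AA x p) h)) := by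
  have : Gd φ x (1 - AA x p) := by
    rw [AA_eq]
    refine Gd.prod _ _ (fun i => DS_geom φ x hx p hp i) fun i => ?_
    have h1 : (1 : R) - (p : ℝ)⁻¹ • ∑ k ∈ Finset.range p, x i ^ k
        = (p : ℝ)⁻¹ • ∑ k ∈ Finset.range p, (1 - x i ^ k) := by
      rw [Finset.sum_sub_distrib, smul_sub]
      congr 1
      have hp' : (p : ℝ) ≠ 0 := by exact_mod_cast (by omega : p ≠ 0)
      rw [Finset.sum_const, Finset.card_range, ← Nat.cast_smul_eq_nsmul ℝ, smul_smul, inv_mul_cancel₀ hp',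
        one_smul]
    rw [h1]
    exact (Gd.sum _ _ fun k _ => Gd.pow (hx i) (Gd.base hx i) k).smul (by positivity)
  obtain ⟨c, hc, H⟩ := this
  refine ⟨c, hc, fun n hn B hB h hh => ?_⟩
  have := H n hn B hB h hh
  rw [map_mul, map_sub, map_one] at this
  exact this

theorem auC_AA (hx : ∀ i, DSop μ (φ (x i))) (f : Lp ℝ 1 μ) : AuC (fun n => φ (AA x n)) f := by
  obtain ⟨C, hC, hw⟩ := weak11 φ x hx
  exact auC_all _ (fun n hn => DS_AA φ x hx n hn) hC hw (inv_AA φ x hx) f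
end

end

section
variable {μ : Measure Ω}

theorem markov1 (g : Lp ℝ 1 μ) {lam : ℝ} (hl : 0 < lam) :
    μ {ω | lam < |g ω|} ≤ ENNReal.ofReal (‖g‖ / lam) := by
  have := hopf (μ := μ) DSop.one (abs_nonneg g) hl 1
  rw [norm_abs_eq_norm] at this
  refine le_trans (measure_mono_ae ?_) this
  filter_upwards [Lp_abs_ae g] with ω h1 h2
  refine ⟨1, le_rfl, ?_⟩
  simp only [Finset.sum_range_one, pow_zero, Nat.cast_one, one_mul, one_apply_eq_self]
  rw [h1]; exact h2

theorem limit_of_auC {A : ℕ → Lp ℝ 1 μ →L[ℝ] Lp ℝ 1 μ} (hA : ∀ n, 1 ≤ n → DSop μ (A n))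
    {f : Lp ℝ 1 μ} (hf : AuC A f) :
    ∃ g : Lp ℝ 1 μ, ∀ ε : ℝ, 0 < ε → ∃ E : Set Ω, MeasurableSet E ∧ μ Eᶜ ≤ ENNReal.ofReal ε ∧
      (∃ R : ℝ, 0 ≤ R ∧ ∀ ω ∈ E, |g ω| ≤ R) ∧
      ∀ lam : ℝ, 0 < lam → ∃ N : ℕ, ∀ n, N ≤ n → ∀ᵐ ω ∂μ, ω ∈ E → |A n f ω - g ω| ≤ lam := by
  have hmeas : ∀ n, Measurable (A n f : Ω → ℝ) := fun n => (Lp.stronglyMeasurable _).measurable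
  have hc : ∀ᵐ ω ∂μ, ∀ k : ℕ, ∃ N, ∀ n m, N ≤ n → N ≤ m → |A n f ω - A m f ω| ≤ 1 / ((k : ℝ) + 1) := by
    rw [ae_all_iff]
    intro k
    rw [ae_iff]
    refine le_antisymm (ENNReal.le_of_forall_pos_le_add fun ε hε _ => ?_) (zero_le)
    obtain ⟨N, _, h⟩ := hf ε (1 / ((k : ℝ) + 1)) (by exact_mod_cast hε) (by positivity)
    rw [zero_add]
    rw [ENNReal.ofReal_coe_nnreal] at h
    refine le_trans (measure_mono ?_) h
    intro ω hω
    simp only [mem_ofPred_eq, not_exists, not_forall, not_le] at hω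
    obtain ⟨n, m, h1, h2, h3⟩ := hω N
    exact ⟨n, m, h1, h2, h3⟩
  have hlim : ∀ᵐ ω ∂μ, ∃ l, Tendsto (fun n => A n f ω) atTop (𝓝 l) := by
    filter_upwards [hc] with ω h
    apply cauchySeq_tendsto_of_complete
    rw [Metric.cauchySeq_iff]
    intro ε hε
    obtain ⟨k, hk⟩ := exists_nat_one_div_lt hε
    obtain ⟨N, hN⟩ := h k
    exact ⟨N, fun m hm n hn => lt_of_le_of_lt (hN m n hm hn) hk⟩
  obtain ⟨g0, hg0, hg0l⟩ := exists_stronglyMeasurable_limit_of_tendsto_ae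
    (fun n => (Lp.stronglyMeasurable (A n f)).aestronglyMeasurable) hlim
  have hmem : MemLp g0 1 μ := by
    refine ⟨hg0.aestronglyMeasurable, ?_⟩
    have h1 := Lp.eLpNorm_lim_le_liminf_eLpNorm (p := 1)
      (fun n => (Lp.stronglyMeasurable (A n f)).aestronglyMeasurable) g0 hg0l
    refine lt_of_le_of_lt (h1.trans ?_) (Lp.eLpNorm_lt_top f)
    refine liminf_le_of_frequently_le' (Eventually.frequently ?_)
    filter_upwards [eventually_ge_atTop 1] with n hn
    have := (hA n hn).norm f
    rw [Lp.norm_def, Lp.norm_def] at this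
    exact (ENNReal.toReal_le_toReal (Lp.eLpNorm_ne_top _) (Lp.eLpNorm_ne_top _)).1 this
  set g : Lp ℝ 1 μ := hmem.toLp g0 with hg
  have hgl : ∀ᵐ ω ∂μ, Tendsto (fun n => A n f ω) atTop (𝓝 (g ω)) := by
    filter_upwards [hg0l, hmem.coeFn_toLp] with ω h1 h2
    rw [hg, h2]; exact h1
  refine ⟨g, fun ε hε => ?_⟩
  have hN : ∀ j : ℕ, ∃ N, 1 ≤ N ∧ μ {ω | ∃ n m, N ≤ n ∧ N ≤ m ∧ 1 / ((j : ℝ) + 1) < |A n f ω - A m f ω|}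
      ≤ ENNReal.ofReal (ε / 2 / 2 / 2 ^ j) := fun j => hf _ _ (by positivity) (by positivity)
  choose N hN1 hN2 using hN
  set S : ℕ → Set Ω := fun j => {ω | ∃ n m, N j ≤ n ∧ N j ≤ m ∧ 1 / ((j : ℝ) + 1) < |A n f ω - A m f ω|} with hS
  have hSm : ∀ j, MeasurableSet (S j) := by
    intro j
    have : S j = ⋃ n, ⋃ m, ⋃ (_ : N j ≤ n), ⋃ (_ : N j ≤ m), {ω | 1 / ((j : ℝ) + 1) < |A n f ω - A m f ω|} := by
      ext ω; simp only [hS, mem_iUnion, mem_ofPred_eq, exists_prop]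
    rw [this]
    refine MeasurableSet.iUnion fun n => MeasurableSet.iUnion fun m => MeasurableSet.iUnion fun _ =>
      MeasurableSet.iUnion fun _ => measurableSet_lt measurable_const ?_
    exact continuous_abs.measurable.comp ((hmeas n).sub (hmeas m))
  set R : ℝ := 2 * (‖g‖ + 1) / ε with hR
  have hR0 : 0 < R := by have := norm_nonneg g; positivity
  set Q : Set Ω := {ω | R < |g ω|} with hQ
  have hQm : MeasurableSet Q := measurableSet_lt measurable_const
    (continuous_abs.measurable.comp (Lp.stronglyMeasurable g).measurable)
  refine ⟨((⋃ j, S j) ∪ Q)ᶜ, ((MeasurableSet.iUnion hSm).union hQm).compl, ?_, ⟨R, hR0.le, ?_⟩, ?_⟩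
  · rw [compl_compl]
    have t1 : μ (⋃ j, S j) ≤ ENNReal.ofReal (ε / 2) := by
      refine (measure_iUnion_le _).trans ((ENNReal.tsum_le_tsum hN2).trans ?_)
      have hs := hasSum_geometric_two' (ε / 2)
      rw [← ENNReal.ofReal_tsum_of_nonneg (fun n => by positivity) hs.summable, hs.tsum_eq]
    have t2 : μ Q ≤ ENNReal.ofReal (ε / 2) := by
      refine (markov1 g hR0).trans (ENNReal.ofReal_le_ofReal ?_)
      rw [div_le_iff₀ hR0, hR]
      have : ε / 2 * (2 * (‖g‖ + 1) / ε) = ‖g‖ + 1 := by field_simp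
      linarith
    calc _ ≤ _ := measure_union_le _ _
      _ ≤ ENNReal.ofReal (ε / 2) + ENNReal.ofReal (ε / 2) := add_le_add t1 t2
      _ = _ := by rw [← ENNReal.ofReal_add (by positivity) (by positivity)]; congr 1; ring
  · intro ω hω
    by_contra hcon
    exact hω (Or.inr (not_le.1 hcon))
  · intro lam hl
    obtain ⟨j, hj⟩ := exists_nat_one_div_lt hl
    refine ⟨N j, fun n hn => ?_⟩
    filter_upwards [hgl] with ω h1 h2
    have h3 : ω ∉ S j := fun h => h2 (Or.inl (mem_iUnion.2 ⟨j, h⟩))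
    have h4 : ∀ m, N j ≤ m → |A n f ω - A m f ω| ≤ 1 / ((j : ℝ) + 1) := by
      intro m hm
      by_contra hcon
      exact h3 ⟨n, m, hn, hm, not_le.1 hcon⟩
    refine le_trans ?_ hj.le
    refine le_of_tendsto ((tendsto_const_nhds.sub h1).abs) ?_
    filter_upwards [eventually_ge_atTop (N j)] with m hm using h4 m hm

def AU (G : ℝ → Lp ℝ 1 μ) (g : Lp ℝ 1 μ) : Prop :=
  ∀ ε : ℝ, 0 < ε → ∃ E : Set Ω, MeasurableSet E ∧ μ Eᶜ ≤ ENNReal.ofReal ε ∧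
    ∀ lam : ℝ, 0 < lam → ∀ᶠ t : ℝ in atTop, ∀ᵐ ω ∂μ, ω ∈ E → |G t ω - g ω| ≤ lam

theorem AU.sub {G G' : ℝ → Lp ℝ 1 μ} {g g' : Lp ℝ 1 μ} (h : AU G g) (h' : AU G' g') :
    AU (fun t => G t - G' t) (g - g') := by
  intro ε hε
  obtain ⟨E, hE, hE1, hE2⟩ := h (ε / 2) (by positivity)
  obtain ⟨E', hE', hE1', hE2'⟩ := h' (ε / 2) (by positivity)
  refine ⟨E ∩ E', hE.inter hE', ?_, fun lam hl => ?_⟩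
  · rw [compl_inter]
    calc _ ≤ _ := measure_union_le _ _
      _ ≤ ENNReal.ofReal (ε / 2) + ENNReal.ofReal (ε / 2) := add_le_add hE1 hE1'
      _ = _ := by rw [← ENNReal.ofReal_add (by positivity) (by positivity)]; congr 1; ring
  · filter_upwards [hE2 (lam / 2) (by positivity), hE2' (lam / 2) (by positivity)] with t h1 h2
    filter_upwards [h1, h2, Lp_sub_ae (G t) (G' t), Lp_sub_ae g g'] with ω h1 h2 h3 h4 hω
    have h1 := abs_le.1 (h1 hω.1)
    have h2 := abs_le.1 (h2 hω.2)
    rw [h3, h4, abs_le]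
    constructor <;> linarith

/-- sandwich from integer to real times -/
theorem AU.of_nat {A : ℕ → Lp ℝ 1 μ} {g : Lp ℝ 1 μ} {d : ℕ} {G : ℝ → Lp ℝ 1 μ}
    (h : ∀ ε : ℝ, 0 < ε → ∃ E : Set Ω, MeasurableSet E ∧ μ Eᶜ ≤ ENNReal.ofReal ε ∧
      (∃ R : ℝ, 0 ≤ R ∧ ∀ ω ∈ E, |g ω| ≤ R) ∧
      ∀ lam : ℝ, 0 < lam → ∃ N : ℕ, ∀ n, N ≤ n → ∀ᵐ ω ∂μ, ω ∈ E → |A n ω - g ω| ≤ lam)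
    (hlo : ∀ t : ℝ, 1 ≤ t → (((⌊t⌋₊ : ℝ) / t) ^ d) • A ⌊t⌋₊ ≤ G t)
    (hhi : ∀ t : ℝ, 1 ≤ t → G t ≤ ((((⌊t⌋₊ + 1 : ℕ) : ℝ) / t) ^ d) • A (⌊t⌋₊ + 1)) :
    AU G g := by
  intro ε hε
  obtain ⟨E, hE, hE1, ⟨R, hR, hgR⟩, hE2⟩ := h ε hε
  refine ⟨E, hE, hE1, fun lam hl => ?_⟩
  obtain ⟨N, hN⟩ := hE2 (lam / 4) (by positivity)
  have l1 : Tendsto (fun t : ℝ => ((⌊t⌋₊ : ℝ) / t) ^ d) atTop (𝓝 1) := by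
    have := (tendsto_nat_floor_div_atTop (R := ℝ)).pow d
    simpa using this
  have l2 : Tendsto (fun t : ℝ => (((⌊t⌋₊ + 1 : ℕ) : ℝ) / t) ^ d) atTop (𝓝 1) := by
    have h1 := (tendsto_nat_floor_div_atTop (R := ℝ)).add tendsto_inv_atTop_zero
    have := h1.pow d
    rw [add_zero, one_pow] at this
    refine this.congr fun t => ?_
    push_cast
    rw [add_div, one_div]
  obtain ⟨δ, hδ, hδ1, hδ2⟩ : ∃ δ : ℝ, 0 < δ ∧ δ ≤ 1 ∧ δ * R ≤ lam / 4 := by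
    refine ⟨min 1 (lam / 4 / (R + 1)), by positivity, min_le_left _ _, ?_⟩
    calc _ ≤ lam / 4 / (R + 1) * R := by gcongr; exact min_le_right _ _
      _ ≤ lam / 4 / (R + 1) * (R + 1) := by gcongr; linarith
      _ = lam / 4 := by field_simp
  have key : ∀ r a b : ℝ, |r - 1| < δ → |a - b| ≤ lam / 4 → |b| ≤ R → |r * a - b| ≤ lam := by
    intro r a b h1 h2 h3
    have : r * a - b = (a - b) + (r - 1) * (a - b) + (r - 1) * b := by ring
    rw [this]
    have e1 : |(r - 1) * (a - b)| ≤ 1 * (lam / 4) := by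
      rw [abs_mul]; exact mul_le_mul (by linarith) h2 (abs_nonneg _) (by norm_num)
    have e2 : |(r - 1) * b| ≤ lam / 4 := by
      rw [abs_mul]; exact (mul_le_mul h1.le h3 (abs_nonneg _) hδ.le).trans hδ2
    have := abs_add_three (a - b) ((r - 1) * (a - b)) ((r - 1) * b)
    linarith
  filter_upwards [Metric.tendsto_nhds.1 l1 δ hδ, Metric.tendsto_nhds.1 l2 δ hδ, eventually_ge_atTop 1,
    eventually_ge_atTop (N : ℝ)] with t h1 h2 h3 h4
  have hfl : N ≤ ⌊t⌋₊ := Nat.le_floor h4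
  filter_upwards [hN _ hfl, hN (⌊t⌋₊ + 1) (by omega), Lp_le_ae (hlo t h3), Lp_le_ae (hhi t h3),
    Lp_smul_ae (((⌊t⌋₊ : ℝ) / t) ^ d) (A ⌊t⌋₊), Lp_smul_ae ((((⌊t⌋₊ + 1 : ℕ) : ℝ) / t) ^ d) (A (⌊t⌋₊ + 1))]
    with ω k1 k2 k3 k4 k5 k6 hω
  rw [k5] at k3
  rw [k6] at k4
  have m1 := abs_le.1 (key _ _ _ h1 (k1 hω) (hgR ω hω))
  have m2 := abs_le.1 (key _ _ _ h2 (k2 hω) (hgR ω hω))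
  rw [abs_le]
  constructor <;> linarith

end

section
variable {μ : Measure Ω}

theorem Lp_ordMod : IsOrderedModule ℝ (Lp ℝ 1 μ) := by
  have h1 : PosSMulMono ℝ (Lp ℝ 1 μ) := ⟨fun _ ha _ _ h => Lp_smul_le' ha h⟩
  have h2 : SMulPosMono ℝ (Lp ℝ 1 μ) := ⟨fun _ hb _ _ h => Lp_smul_le h hb⟩
  exact {}

def Qc (d : ℕ) (t : ℝ) : Set (Fin d → ℝ) := Set.univ.pi fun _ : Fin d => Set.Ioc (0 : ℝ) t

def Op (d : ℕ) : Set (Fin d → ℝ) := {u | ∀ i, 0 < u i}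

theorem Qc_sub_Op (d : ℕ) (t : ℝ) : Qc d t ⊆ Op d := fun _ hu i => (hu i (mem_univ i)).1

theorem Qc_meas (d : ℕ) (t : ℝ) : MeasurableSet (Qc d t) :=
  MeasurableSet.univ_pi fun _ => measurableSet_Ioc

theorem Op_open (d : ℕ) : IsOpen (Op d) := by
  have : Op d = Set.univ.pi fun _ : Fin d => Set.Ioi (0 : ℝ) := by ext; simp [Op]
  rw [this]
  exact isOpen_set_pi finite_univ fun _ _ => isOpen_Ioi

theorem Qc_fin (d : ℕ) (t : ℝ) : volume (Qc d t) ≠ ⊤ := by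
  unfold Qc
  rw [Real.volume_pi_Ioc]
  exact ENNReal.prod_ne_top fun _ _ => ENNReal.ofReal_ne_top

theorem Qc_mono (d : ℕ) {s t : ℝ} (h : s ≤ t) : Qc d s ⊆ Qc d t :=
  Set.pi_mono fun _ _ => Ioc_subset_Ioc_right h

def Cb {d : ℕ} (k : Fin d → ℕ) : Set (Fin d → ℝ) :=
  Set.univ.pi fun i => Set.Ioc (k i : ℝ) (k i + 1)

theorem Qc_eq (d n : ℕ) : Qc d n = ⋃ k ∈ Fintype.piFinset (fun _ : Fin d => Finset.range n), Cb k := by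
  ext u
  simp only [Qc, Cb, mem_iUnion, Set.mem_pi, mem_univ, true_imp_iff, mem_Ioc, Fintype.mem_piFinset,
    Finset.mem_range, exists_prop]
  constructor
  · intro h
    refine ⟨fun i => ⌈u i⌉₊ - 1, fun i => ?_, fun i => ?_⟩
    · have h1 := Nat.ceil_le.2 (h i).2
      have h2 := Nat.ceil_pos.2 (h i).1
      show ⌈u i⌉₊ - 1 < n
      omega
    · have h2 := Nat.ceil_pos.2 (h i).1
      have e : ((⌈u i⌉₊ - 1 : ℕ) : ℝ) = (⌈u i⌉₊ : ℝ) - 1 := by rw [Nat.cast_sub h2]; simp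
      have h3 := Nat.ceil_lt_add_one (h i).1.le
      have h4 := Nat.le_ceil (u i)
      simp only [e]
      constructor <;> linarith
  · rintro ⟨k, hk, hu⟩ i
    have h1 : (k i : ℝ) + 1 ≤ n := by exact_mod_cast hk i
    have h2 := hu i
    have h3 := Nat.cast_nonneg (α := ℝ) (k i)
    constructor <;> linarith

theorem Cb_disj {d : ℕ} {k l : Fin d → ℕ} (h : k ≠ l) : Disjoint (Cb k) (Cb l) := by
  rw [Set.disjoint_left]
  intro u hu hv
  apply h
  funext i
  have h1 := hu i (mem_univ i)
  have h2 := hv i (mem_univ i)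
  have a : (k i : ℝ) < l i + 1 := by linarith [h1.1, h2.2]
  have b : (l i : ℝ) < k i + 1 := by linarith [h1.2, h2.1]
  have a' : k i < l i + 1 := by exact_mod_cast a
  have b' : l i < k i + 1 := by exact_mod_cast b
  omega

section
variable {d : ℕ} {TL : (Fin d → ℝ) → Lp ℝ 1 μ →L[ℝ] Lp ℝ 1 μ}

noncomputable def PP (TL : (Fin d → ℝ) → Lp ℝ 1 μ →L[ℝ] Lp ℝ 1 μ) (k : Fin d → ℕ) :
    Lp ℝ 1 μ →L[ℝ] Lp ℝ 1 μ := if k = 0 then 1 else TL (fun i => (k i : ℝ))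

theorem PP_add (hsemi : ∀ u v : Fin d → ℝ, 0 ≤ u → 0 ≤ v → TL (u + v) = TL u * TL v)
    (k l : Fin d → ℕ) : PP TL (k + l) = PP TL k * PP TL l := by
  unfold PP
  by_cases hk : k = 0
  · simp [hk]
  by_cases hl : l = 0
  · simp [hl]
  have : k + l ≠ 0 := by simp [hk]
  rw [if_neg hk, if_neg hl, if_neg this, ← hsemi _ _ (fun i => Nat.cast_nonneg _) (fun i => Nat.cast_nonneg _)]
  congr 1
  funext i
  simp

theorem int_on (hDS : ∀ u, 0 ≤ u → DSop μ (TL u))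
    (hcont : ∀ f, ContinuousOn (fun u => TL u f) (Op d)) (f : Lp ℝ 1 μ) (t : ℝ) :
    IntegrableOn (fun u => TL u f) (Qc d t) := by
  have hm : AEStronglyMeasurable (fun u => TL u f) (volume.restrict (Qc d t)) :=
    ((hcont f).mono (Qc_sub_Op d t)).aestronglyMeasurable (Qc_meas d t)
  refine IntegrableOn.of_bound (lt_top_iff_ne_top.2 (Qc_fin d t)) hm ‖f‖ ?_
  refine (ae_restrict_iff' (Qc_meas d t)).2 (Eventually.of_forall fun u hu => ?_)
  exact (hDS u fun i => (Qc_sub_Op d t hu i).le).norm f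

theorem int_cb (hDS : ∀ u, 0 ≤ u → DSop μ (TL u))
    (hsemi : ∀ u v : Fin d → ℝ, 0 ≤ u → 0 ≤ v → TL (u + v) = TL u * TL v)
    (hcont : ∀ f, ContinuousOn (fun u => TL u f) (Op d)) (f : Lp ℝ 1 μ) (k : Fin d → ℕ) :
    ∫ u in Cb k, TL u f = PP TL k (∫ u in Qc d 1, TL u f) := by
  unfold PP
  split_ifs with hk
  · have : Cb k = Qc d 1 := by rw [hk]; simp [Cb, Qc]
    rw [this]; rfl
  · have hpre : (fun u : Fin d → ℝ => (fun i => (k i : ℝ)) + u) ⁻¹' (Cb k) = Qc d 1 := by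
      ext u
      simp only [Cb, Qc, mem_preimage, Set.mem_pi, mem_univ, true_imp_iff, mem_Ioc, Pi.add_apply]
      refine forall_congr' fun i => ?_
      constructor <;> rintro ⟨h1, h2⟩ <;> constructor <;> linarith
    have h1 := (measurePreserving_add_left (volume : Measure (Fin d → ℝ)) (fun i => (k i : ℝ))).setIntegral_preimage_emb
      (measurableEmbedding_addLeft _) (fun u => TL u f) (Cb k)
    rw [← h1, hpre, ← ContinuousLinearMap.integral_comp_comm _ (int_on hDS hcont f 1)]
    refine setIntegral_congr_fun (Qc_meas d 1) fun u hu => ?_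
    rw [hsemi _ _ (fun i => Nat.cast_nonneg _) (fun i => (Qc_sub_Op d 1 hu i).le)]
    rfl

theorem int_Qn (hDS : ∀ u, 0 ≤ u → DSop μ (TL u))
    (hsemi : ∀ u v : Fin d → ℝ, 0 ≤ u → 0 ≤ v → TL (u + v) = TL u * TL v)
    (hcont : ∀ f, ContinuousOn (fun u => TL u f) (Op d)) (f : Lp ℝ 1 μ) (n : ℕ) :
    ∫ u in Qc d n, TL u f =
      ∑ k ∈ Fintype.piFinset (fun _ : Fin d => Finset.range n), PP TL k (∫ u in Qc d 1, TL u f) := by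
  rw [Qc_eq, integral_biUnion_finset]
  · exact Finset.sum_congr rfl fun k _ => int_cb hDS hsemi hcont f k
  · intro k _; exact MeasurableSet.univ_pi fun _ => measurableSet_Ioc
  · intro k _ l _ h; exact Cb_disj h
  · intro k hk
    refine (int_on hDS hcont f n).mono_set ?_
    rw [Qc_eq]
    exact subset_biUnion_of_mem (u := fun k => Cb k) hk

theorem exists_alg (hDS : ∀ u, 0 ≤ u → DSop μ (TL u))
    (hsemi : ∀ u v : Fin d → ℝ, 0 ≤ u → 0 ≤ v → TL (u + v) = TL u * TL v) :
    ∃ (φ : AddMonoidAlgebra ℝ (Fin d → ℕ) →ₐ[ℝ] (Lp ℝ 1 μ →L[ℝ] Lp ℝ 1 μ))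
      (x : Fin d → AddMonoidAlgebra ℝ (Fin d → ℕ)), (∀ i, DSop μ (φ (x i))) ∧
      ∀ k : Fin d → ℕ, φ (∏ i, x i ^ k i) = PP TL k := by
  let F : Multiplicative (Fin d → ℕ) →* (Lp ℝ 1 μ →L[ℝ] Lp ℝ 1 μ) :=
    { toFun := fun k => PP TL k.toAdd
      map_one' := by simp [PP]
      map_mul' := fun k l => PP_add hsemi _ _ }
  let φ := AddMonoidAlgebra.lift ℝ (Lp ℝ 1 μ →L[ℝ] Lp ℝ 1 μ) (Fin d → ℕ) F
  let x : Fin d → AddMonoidAlgebra ℝ (Fin d → ℕ) := fun i =>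
    AddMonoidAlgebra.of ℝ (Fin d → ℕ) (Multiplicative.ofAdd (Pi.single i 1))
  have hφ : ∀ k, φ (AddMonoidAlgebra.of ℝ (Fin d → ℕ) k) = PP TL k.toAdd := fun k =>
    AddMonoidAlgebra.lift_of F k
  refine ⟨φ, x, fun i => ?_, fun k => ?_⟩
  · rw [hφ]
    unfold PP
    split_ifs
    · exact DSop.one
    · exact hDS _ fun j => Nat.cast_nonneg _
  · simp only [x]
    simp only [← map_pow]
    rw [← map_prod, hφ]
    congr 1
    rw [toAdd_prod]
    simp only [toAdd_pow, toAdd_ofAdd]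
    funext j
    simp [Finset.sum_apply, Pi.single_apply]

theorem flow_pos (hDS : ∀ u, 0 ≤ u → DSop μ (TL u))
    (hsemi : ∀ u v : Fin d → ℝ, 0 ≤ u → 0 ≤ v → TL (u + v) = TL u * TL v)
    (hcont : ∀ f, ContinuousOn (fun u => TL u f) (Op d)) (f : Lp ℝ 1 μ) (hf : 0 ≤ f) :
    ∃ g, AU (fun t : ℝ => (t ^ d)⁻¹ • ∫ u in Qc d t, TL u f) g := by
  obtain ⟨φ, x, hx, hk⟩ := exists_alg hDS hsemi
  set w := ∫ u in Qc d 1, TL u f with hw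
  obtain ⟨g, hg⟩ := limit_of_auC (fun n hn => DS_AA φ x hx n hn) (auC_AA φ x hx w)
  have hA : ∀ n : ℕ, φ (AA x n) w = ((n : ℝ) ^ d)⁻¹ • ∫ u in Qc d n, TL u f := by
    intro n
    have := prod_poly x n (fun _ => 1)
    simp only [one_smul, Finset.prod_const_one] at this
    unfold AA
    rw [this, map_smul, map_sum, _root_.smul_apply, _root_.sum_apply, int_Qn hDS hsemi hcont]
    simp only [hk]
    rfl
  have := Lp_ordMod (μ := μ)
  have hmono : ∀ s t : ℝ, s ≤ t → ∫ u in Qc d s, TL u f ≤ ∫ u in Qc d t, TL u f := by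
    intro s t hst
    refine setIntegral_mono_set (int_on hDS hcont f t) ?_ (Qc_mono d hst).eventuallyLE
    refine (ae_restrict_iff' (Qc_meas d t)).2 (Eventually.of_forall fun u hu => ?_)
    exact (hDS u fun i => (Qc_sub_Op d t hu i).le).pos f hf
  have hs : ∀ (n : ℕ) (t : ℝ), 1 ≤ n → ((n : ℝ) / t) ^ d • φ (AA x n) w =
      (t ^ d)⁻¹ • ∫ u in Qc d n, TL u f := by
    intro n t hn
    rw [hA, smul_smul]
    congr 1
    have : (n : ℝ) ≠ 0 := by exact_mod_cast (by omega : n ≠ 0)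
    rw [div_pow, div_mul_eq_mul_div, mul_inv_cancel₀ (pow_ne_zero d this), one_div]
  refine ⟨g, AU.of_nat (d := d) hg ?_ ?_⟩
  · intro t ht
    have hn : 1 ≤ ⌊t⌋₊ := Nat.le_floor (by simpa using ht)
    rw [hs _ _ hn]
    exact Lp_smul_le' (by positivity) (hmono _ _ (Nat.floor_le (by linarith)))
  · intro t ht
    rw [hs _ _ (by omega)]
    exact Lp_smul_le' (by positivity) (hmono _ _ (by push_cast; exact (Nat.lt_floor_add_one t).le))

theorem flow_all (hDS : ∀ u, 0 ≤ u → DSop μ (TL u))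
    (hsemi : ∀ u v : Fin d → ℝ, 0 ≤ u → 0 ≤ v → TL (u + v) = TL u * TL v)
    (hcont : ∀ f, ContinuousOn (fun u => TL u f) (Op d)) (f : Lp ℝ 1 μ) :
    ∃ g, AU (fun t : ℝ => (t ^ d)⁻¹ • ∫ u in Qc d t, TL u f) g := by
  obtain ⟨g, hg⟩ := flow_pos hDS hsemi hcont f⁺ (posPart_nonneg f)
  obtain ⟨g', hg'⟩ := flow_pos hDS hsemi hcont f⁻ (negPart_nonneg f)
  refine ⟨g - g', ?_⟩
  convert hg.sub hg' using 2 with t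
  rw [← smul_sub, ← integral_sub (int_on hDS hcont _ t) (int_on hDS hcont _ t)]
  congr 2
  funext u
  rw [← map_sub, posPart_sub_negPart]
end

end

theorem Lp_L1pLinf {μ : Measure Ω} (f : Lp ℝ 1 μ) : MemL1pLinf μ (f : Ω →ₘ[μ] ℝ) := by
  refine ⟨(f : Ω →ₘ[μ] ℝ), 0, Lp.eLpNorm_ne_top f, ?_, by simp⟩
  rw [eLpNorm_congr_ae AEEqFun.coeFn_zero]
  simp

theorem DS_clm {μ : Measure Ω} {S : (Ω →ₘ[μ] ℝ) → (Ω →ₘ[μ] ℝ)} (hS : IsPosDS μ S) :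
    ∃ U : Lp ℝ 1 μ →L[ℝ] Lp ℝ 1 μ, DSop μ U ∧ ∀ f : Lp ℝ 1 μ, (U f : Ω →ₘ[μ] ℝ) = S f := by
  have hmem : ∀ f : Lp ℝ 1 μ, S f ∈ Lp ℝ 1 μ := fun f =>
    Lp.mem_Lp_iff_eLpNorm_lt_top.2 (lt_of_le_of_lt (hS.norm_one _ (Lp_L1pLinf f)) (Lp.eLpNorm_lt_top f))
  let L : Lp ℝ 1 μ →ₗ[ℝ] Lp ℝ 1 μ :=
    { toFun := fun f => ⟨S f, hmem f⟩
      map_add' := fun f g => Subtype.ext (hS.map_add f g (Lp_L1pLinf f) (Lp_L1pLinf g))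
      map_smul' := fun c f => Subtype.ext (hS.map_smul c f (Lp_L1pLinf f)) }
  have hn : ∀ f, ‖L f‖ ≤ ‖f‖ := fun f => by
    rw [Lp.norm_def, Lp.norm_def]
    exact ENNReal.toReal_mono (Lp.eLpNorm_ne_top f) (hS.norm_one _ (Lp_L1pLinf f))
  let U : Lp ℝ 1 μ →L[ℝ] Lp ℝ 1 μ := L.mkContinuous 1 (fun f => by rw [one_mul]; exact hn f)
  have hU : ∀ f : Lp ℝ 1 μ, (U f : Ω →ₘ[μ] ℝ) = S f := fun f => rfl
  have hpos : ∀ f, 0 ≤ f → 0 ≤ U f := fun f hf => hS.map_pos _ (Lp_L1pLinf f) hf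
  refine ⟨U, ⟨hpos, hn, fun c hc f hf => ?_⟩, hU⟩
  have hfp : ∀ᵐ ω ∂μ, |(f⁺ : Lp ℝ 1 μ) ω| ≤ c := by
    have : f⁺ = f ⊔ 0 := rfl
    rw [this]
    filter_upwards [hf, Lp.coeFn_sup f 0, Lp.coeFn_zero ℝ 1 μ] with ω h1 h2 h3
    rw [h2, Pi.sup_apply, h3]
    simp only [Pi.zero_apply]
    rw [abs_of_nonneg (le_sup_right)]
    exact sup_le h1 hc
  have h1 : eLpNorm (f⁺ : Lp ℝ 1 μ) ⊤ μ ≤ ENNReal.ofReal c := by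
    rw [eLpNorm_exponent_top]
    refine eLpNormEssSup_le_of_ae_bound ?_
    filter_upwards [hfp] with ω h using h
  have h2 : eLpNorm (U f⁺) ⊤ μ ≤ ENNReal.ofReal c := (hS.norm_top _ (Lp_L1pLinf f⁺)).trans h1
  rw [eLpNorm_exponent_top] at h2
  have h3 := ae_le_eLpNormEssSup (f := (U f⁺ : Ω → ℝ)) (μ := μ)
  have h4 : U f ≤ U f⁺ := by
    have := hpos (f⁺ - f) (sub_nonneg.2 (le_posPart f))
    rw [map_sub] at this
    exact sub_nonneg.1 this
  filter_upwards [h3, Lp_le_ae h4] with ω k1 k2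
  have k3 := k1.trans h2
  rw [← ofReal_norm, ENNReal.ofReal_le_ofReal_iff hc] at k3
  exact k2.trans ((le_abs_self _).trans k3)

/-- **Commutative case of Theorem 5.10**: let `{T_u : u ∈ ℝ₊^d}` be a semigroup of
positive Dunford–Schwartz operators which is `L¹`-continuous in the interior of `ℝ₊^d`.
Then for every `f ∈ L¹(μ)` the averages `A_t(f) = t^{-d} ∫_{(0,t]^d} T_u(f) du`
(a Bochner integral in `L¹(μ)`, encoded by the lift `F u = T_u f ∈ L¹`) converge
almost uniformly as `t → ∞` to some `f̂ ∈ L¹(μ)`. -/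
theorem flow_averages_au_L1 (μ : Measure Ω) [SigmaFinite μ] {d : ℕ}
    (T : (Fin d → ℝ) → (Ω →ₘ[μ] ℝ) → (Ω →ₘ[μ] ℝ))
    (hDS : ∀ u : Fin d → ℝ, 0 ≤ u → IsPosDS μ (T u))
    (hsemi : ∀ u v : Fin d → ℝ, 0 ≤ u → 0 ≤ v →
      ∀ f : Ω →ₘ[μ] ℝ, MemL1pLinf μ f → T (u + v) f = T u (T v f))
    (hcont : ∀ f : Ω →ₘ[μ] ℝ, eLpNorm f 1 μ ≠ ∞ → ∀ v : Fin d → ℝ, (∀ i, 0 < v i) →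
      Tendsto (fun u => eLpNorm (⇑(T u f - T v f)) 1 μ)
        (𝓝[{u : Fin d → ℝ | 0 ≤ u}] v) (𝓝 0))
    (f : Ω →ₘ[μ] ℝ) (hf : eLpNorm f 1 μ ≠ ∞)
    (F : (Fin d → ℝ) → Lp ℝ 1 μ) (hF : ∀ u : Fin d → ℝ, 0 ≤ u → (F u : Ω →ₘ[μ] ℝ) = T u f) :
    ∃ fhat : Ω →ₘ[μ] ℝ, eLpNorm fhat 1 μ ≠ ∞ ∧
      AuTendsto μ atTop
        (fun t : ℝ => (t ^ d)⁻¹ •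
          ((∫ u in Set.univ.pi fun _ : Fin d => Set.Ioc (0 : ℝ) t, F u : Lp ℝ 1 μ) :
            Ω →ₘ[μ] ℝ))
        fhat := by
  have hU : ∀ u : Fin d → ℝ, ∃ U : Lp ℝ 1 μ →L[ℝ] Lp ℝ 1 μ, 0 ≤ u → DSop μ U ∧
      ∀ f : Lp ℝ 1 μ, (U f : Ω →ₘ[μ] ℝ) = T u f := by
    intro u
    by_cases hu : 0 ≤ u
    · obtain ⟨U, h⟩ := DS_clm (hDS u hu)
      exact ⟨U, fun _ => h⟩
    · exact ⟨0, fun h => absurd h hu⟩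
  choose TL hTL using hU
  have hs : ∀ u v : Fin d → ℝ, 0 ≤ u → 0 ≤ v → TL (u + v) = TL u * TL v := by
    intro u v hu hv
    ext1 g
    apply Subtype.ext
    rw [(hTL _ (add_nonneg hu hv)).2, hsemi u v hu hv _ (Lp_L1pLinf g), ← (hTL v hv).2, ← (hTL u hu).2]
    rfl
  have hc : ∀ g : Lp ℝ 1 μ, ContinuousOn (fun u => TL u g) (Op d) := by
    intro g v hv
    have hv0 : 0 ≤ v := fun i => (hv i).le
    have h1 := hcont g (Lp.eLpNorm_ne_top g) v hv
    have h2 := h1.mono_left (nhdsWithin_mono v (show Op d ⊆ {u | 0 ≤ u} from fun u hu i => (hu i).le))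
    rw [ContinuousWithinAt, tendsto_iff_edist_tendsto_0]
    refine h2.congr' ?_
    filter_upwards [self_mem_nhdsWithin] with u hu
    have hu0 : 0 ≤ u := fun i => (hu i).le
    rw [Lp.edist_def, ← (hTL u hu0).2, ← (hTL v hv0).2]
    exact eLpNorm_congr_ae (AEEqFun.coeFn_sub _ _)
  set f1 : Lp ℝ 1 μ := ⟨f, Lp.mem_Lp_iff_eLpNorm_lt_top.2 (lt_top_iff_ne_top.2 hf)⟩ with hf1
  obtain ⟨g, hg⟩ := flow_all (fun u hu => (hTL u hu).1) hs hc f1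
  have hFT : ∀ u, 0 ≤ u → F u = TL u f1 := fun u hu =>
    Subtype.ext ((hF u hu).trans ((hTL u hu).2 f1).symm)
  have hint : ∀ t : ℝ, ∫ u in Qc d t, F u = ∫ u in Qc d t, TL u f1 := fun t =>
    setIntegral_congr_fun (Qc_meas d t) fun u hu => hFT u fun i => (Qc_sub_Op d t hu i).le
  refine ⟨g, Lp.eLpNorm_ne_top g, fun ε hε => ?_⟩
  obtain ⟨E, hE, hE1, hE2⟩ := hg ε hε
  refine ⟨E, hE, hE1, ?_⟩
  rw [ENNReal.tendsto_nhds_zero]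
  intro η hη
  obtain ⟨lam, hl, hle⟩ : ∃ lam : ℝ, 0 < lam ∧ ENNReal.ofReal lam ≤ η := by
    obtain ⟨r, hr, hrη⟩ := ENNReal.lt_iff_exists_nnreal_btwn.1 hη
    exact ⟨r, by exact_mod_cast hr, by rw [ENNReal.ofReal_coe_nnreal]; exact hrη.le⟩
  filter_upwards [hE2 lam hl] with t ht
  refine le_trans ?_ hle
  rw [eLpNorm_exponent_top]
  refine eLpNormEssSup_le_of_ae_bound ?_
  have e : ((t ^ d)⁻¹ • ((∫ u in Set.univ.pi fun _ : Fin d => Set.Ioc (0 : ℝ) t, F u : Lp ℝ 1 μ) :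
      Ω →ₘ[μ] ℝ)) = (((t ^ d)⁻¹ • ∫ u in Qc d t, TL u f1 : Lp ℝ 1 μ) : Ω →ₘ[μ] ℝ) := by
    rw [← hint]; rfl
  rw [e]
  filter_upwards [ht, AEEqFun.coeFn_sub (((t ^ d)⁻¹ • ∫ u in Qc d t, TL u f1 : Lp ℝ 1 μ) : Ω →ₘ[μ] ℝ)
    (g : Ω →ₘ[μ] ℝ)] with ω h1 h2
  by_cases hω : ω ∈ E
  · rw [indicator_of_mem hω, h2]
    exact h1 hω
  · rw [indicator_of_notMem hω, norm_zero]; exact hl.le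
end

section
/- Let (Ω, 𝒜, μ) be a σ-finite measure space and let (T_s)_{s ≥ 0} be a semigroup of positive Dunford–Schwartz operators (T_{s+r} = T_s T_r) that is strongly continuous on L¹(μ) at every s > 0. Then for every f ∈ L¹(μ) the averages (1/t) ∫₀^t T_s(f) ds (Bochner integral in L¹(μ)) converge almost uniformly as t → ∞. -/
open MeasureTheory Filter Set ENNReal Topology

variable {Ω : Type*} [MeasurableSpace Ω]

namespace DSErg

instance instOrd (μ : Measure Ω) : IsOrderedAddMonoid (Ω →ₘ[μ] ℝ) where
  add_le_add_left a b h c := by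
    rw [← AEEqFun.coeFn_le] at h ⊢
    filter_upwards [h, AEEqFun.coeFn_add a c, AEEqFun.coeFn_add b c] with x h1 h2 h3
    rw [h2, h3]
    simpa using h1

theorem smul_nonneg' {μ : Measure Ω} {c : ℝ} (hc : 0 ≤ c) {f : Ω →ₘ[μ] ℝ} (hf : 0 ≤ f) :
    0 ≤ c • f := by
  rw [← AEEqFun.coeFn_le] at hf ⊢
  filter_upwards [hf, AEEqFun.coeFn_smul c f, AEEqFun.coeFn_zero (μ := μ) (α := Ω) (β := ℝ)]
    with x h1 h2 h3
  rw [h2, h3]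
  rw [h3] at h1
  exact mul_nonneg hc h1

theorem nonneg_iff {μ : Measure Ω} {f : Ω →ₘ[μ] ℝ} : 0 ≤ f ↔ ∀ᵐ x ∂μ, 0 ≤ f x := by
  rw [← AEEqFun.coeFn_le]
  constructor <;> intro h <;>
  filter_upwards [h, AEEqFun.coeFn_zero (μ := μ) (α := Ω) (β := ℝ)] with x h1 h3
  · rw [h3] at h1; exact h1
  · rw [h3]; exact h1

/-- the space `L¹ + L^∞`. -/
noncomputable def V (μ : Measure Ω) : Submodule ℝ (Ω →ₘ[μ] ℝ) :=
  Lp.LpSubmodule ℝ ℝ 1 μ ⊔ Lp.LpSubmodule ℝ ℝ ⊤ μ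

theorem mem_V {μ : Measure Ω} {f : Ω →ₘ[μ] ℝ} : f ∈ V μ ↔ MemL1pLinf μ f := by
  unfold V MemL1pLinf
  rw [Submodule.mem_sup]
  constructor
  · rintro ⟨g, hg, h, hh, rfl⟩
    exact ⟨g, h, (Lp.mem_Lp_iff_eLpNorm_lt_top.1 hg).ne, (Lp.mem_Lp_iff_eLpNorm_lt_top.1 hh).ne, rfl⟩
  · rintro ⟨g, h, hg, hh, rfl⟩
    exact ⟨g, Lp.mem_Lp_iff_eLpNorm_lt_top.2 hg.lt_top, h,
      Lp.mem_Lp_iff_eLpNorm_lt_top.2 hh.lt_top, rfl⟩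

theorem V_of_L1 {μ : Measure Ω} {f : Ω →ₘ[μ] ℝ} (h : Integrable f μ) : f ∈ V μ := by
  apply Submodule.mem_sup_left
  exact Lp.mem_Lp_iff_eLpNorm_lt_top.2 (memLp_one_iff_integrable.2 h).2

theorem V_of_top {μ : Measure Ω} {f : Ω →ₘ[μ] ℝ} (h : eLpNorm f ⊤ μ < ∞) : f ∈ V μ := by
  apply Submodule.mem_sup_right
  exact Lp.mem_Lp_iff_eLpNorm_lt_top.2 h

theorem V_one {μ : Measure Ω} : (1 : Ω →ₘ[μ] ℝ) ∈ V μ := by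
  apply V_of_top
  rw [eLpNorm_congr_ae AEEqFun.coeFn_one]
  exact (memLp_top_const (1 : ℝ)).2

theorem V_of_L2 {μ : Measure Ω} {f : Ω →ₘ[μ] ℝ} (h : MemLp f 2 μ) : f ∈ V μ := by
  have hm : MeasurableSet {x | 1 < |f x|} :=
    measurableSet_lt measurable_const f.measurable.abs
  have hmeas := f.stronglyMeasurable
  let g : Ω →ₘ[μ] ℝ := AEEqFun.mk ({x | 1 < |f x|}.indicator f)
    (hmeas.indicator hm).aestronglyMeasurable
  have hg : g =ᵐ[μ] {x | 1 < |f x|}.indicator f := AEEqFun.coeFn_mk _ _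
  have h1 : g ∈ V μ := by
    apply V_of_L1
    have := h.integrable_sq
    refine this.mono g.aestronglyMeasurable ?_
    filter_upwards [hg] with x hx
    rw [hx]
    simp only [indicator, mem_ofPred_eq, Real.norm_eq_abs]
    split_ifs with hh
    · rw [abs_pow]; nlinarith
    · simp [sq_nonneg]
  have h2 : f - g ∈ V μ := by
    apply V_of_top
    refine lt_of_le_of_lt (eLpNormEssSup_le_of_ae_bound (C := 1) ?_) ENNReal.ofReal_lt_top
    filter_upwards [hg, AEEqFun.coeFn_sub f g] with x hx hx2
    rw [hx2, Pi.sub_apply, hx]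
    simp only [indicator, mem_ofPred_eq, Real.norm_eq_abs]
    split_ifs with hh
    · simp
    · simpa using hh
  have := (V μ).add_mem h1 h2
  simpa using this

structure Pos {μ : Measure Ω} (L : (Ω →ₘ[μ] ℝ) →ₗ[ℝ] (Ω →ₘ[μ] ℝ)) : Prop where
  pos : ∀ f ∈ V μ, 0 ≤ f → 0 ≤ L f
  one : L 1 ≤ 1
  mem : ∀ f ∈ V μ, L f ∈ V μ

structure Good {μ : Measure Ω} (L : (Ω →ₘ[μ] ℝ) →ₗ[ℝ] (Ω →ₘ[μ] ℝ)) : Prop extends Pos L where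
  n1 : ∀ f : Ω →ₘ[μ] ℝ, Integrable f μ → eLpNorm (L f) 1 μ ≤ eLpNorm f 1 μ

section
variable {μ : Measure Ω} {L : (Ω →ₘ[μ] ℝ) →ₗ[ℝ] (Ω →ₘ[μ] ℝ)}

theorem Pos.mono (hL : Pos L) {f g : Ω →ₘ[μ] ℝ} (hf : f ∈ V μ) (hg : g ∈ V μ) (h : f ≤ g) :
    L f ≤ L g := by
  have := hL.pos _ ((V μ).sub_mem hg hf) (sub_nonneg.2 h)
  rw [map_sub] at this
  exact sub_nonneg.1 this

theorem Good.int (hL : Good L) {f : Ω →ₘ[μ] ℝ} (hf : Integrable f μ) : Integrable (L f) μ := by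
  rw [← memLp_one_iff_integrable] 
  exact ⟨(L f).aestronglyMeasurable,
    (hL.n1 f hf).trans_lt (memLp_one_iff_integrable.2 hf).2⟩

theorem integral_eq_eLp {f : Ω →ₘ[μ] ℝ} (hf : Integrable f μ) (h0 : 0 ≤ f) :
    ∫ x, f x ∂μ = (eLpNorm f 1 μ).toReal := by
  rw [integral_eq_lintegral_of_nonneg_ae (nonneg_iff.1 h0) f.aestronglyMeasurable,
    eLpNorm_one_eq_lintegral_enorm]
  congr 1
  apply lintegral_congr_ae
  filter_upwards [nonneg_iff.1 h0] with x hx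
  exact (Real.enorm_of_nonneg hx).symm

theorem Good.integral_le (hL : Good L) {f : Ω →ₘ[μ] ℝ} (hf : Integrable f μ) (h0 : 0 ≤ f) :
    ∫ x, L f x ∂μ ≤ ∫ x, f x ∂μ := by
  rw [integral_eq_eLp hf h0, integral_eq_eLp (hL.int hf) (hL.pos _ (V_of_L1 hf) h0)]
  exact ENNReal.toReal_mono (memLp_one_iff_integrable.2 hf).2.ne (hL.n1 f hf)

theorem Pos.comp {L' : (Ω →ₘ[μ] ℝ) →ₗ[ℝ] (Ω →ₘ[μ] ℝ)} (hL : Pos L) (hL' : Pos L') :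
    Pos (L * L') where
  pos f hf h := hL.pos _ (hL'.mem f hf) (hL'.pos f hf h)
  one := (hL.mono (hL'.mem _ V_one) V_one hL'.one).trans hL.one
  mem f hf := hL.mem _ (hL'.mem f hf)

theorem one_nonneg' : (0 : Ω →ₘ[μ] ℝ) ≤ 1 := by
  rw [nonneg_iff]
  filter_upwards [AEEqFun.coeFn_one (μ := μ) (α := Ω) (β := ℝ)] with x hx
  rw [hx]; simp

theorem Pos.pow (hL : Pos L) (n : ℕ) : Pos (L ^ n) := by
  induction n with
  | zero => exact ⟨fun f _ h => h, le_rfl, fun f h => h⟩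
  | succ n ih => rw [pow_succ]; exact ih.comp hL

theorem Good.pow (hL : Good L) (n : ℕ) : Good (L ^ n) := by
  refine ⟨hL.toPos.pow n, ?_⟩
  induction n with
  | zero => intro f _; exact le_rfl
  | succ n ih => 
    intro f hf
    rw [pow_succ]
    exact (ih _ (hL.int hf)).trans (hL.n1 f hf)

/-- Jensen -/
theorem Pos.jensen (hL : Pos L) {f : Ω →ₘ[μ] ℝ} (hf : MemLp f 2 μ) :
    ∀ᵐ x ∂μ, (L f x) ^ 2 ≤ L (f * f) x := by
  have hff : Integrable (f * f : Ω →ₘ[μ] ℝ) μ := by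
    refine hf.integrable_sq.congr ?_
    filter_upwards [AEEqFun.coeFn_mul f f] with x hx
    rw [hx]; simp [sq]
  have key : ∀ c : ℚ, ∀ᵐ x ∂μ, 0 ≤ L (f * f) x - 2 * c * L f x + c ^ 2 := by
    intro c
    have h1 : 0 ≤ f * f - (2 * (c : ℝ)) • f + ((c : ℝ) ^ 2) • (1 : Ω →ₘ[μ] ℝ) := by
      rw [nonneg_iff]
      filter_upwards [AEEqFun.coeFn_mul f f, AEEqFun.coeFn_smul (2 * (c : ℝ)) f,
        AEEqFun.coeFn_smul ((c : ℝ) ^ 2) (1 : Ω →ₘ[μ] ℝ),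
        AEEqFun.coeFn_one (μ := μ) (α := Ω) (β := ℝ),
        AEEqFun.coeFn_sub (f * f) ((2 * (c : ℝ)) • f),
        AEEqFun.coeFn_add (f * f - (2 * (c : ℝ)) • f) (((c : ℝ) ^ 2) • (1 : Ω →ₘ[μ] ℝ))]
        with x e1 e2 e3 e4 e5 e6
      rw [e6, Pi.add_apply, e5, Pi.sub_apply, e1, e2, e3]
      simp only [Pi.mul_apply, Pi.smul_apply, e4, Pi.one_apply, smul_eq_mul]
      nlinarith [sq_nonneg (f x - c)]
    have hV : f * f - (2 * (c : ℝ)) • f + ((c : ℝ) ^ 2) • (1 : Ω →ₘ[μ] ℝ) ∈ V μ :=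
      (V μ).add_mem ((V μ).sub_mem (V_of_L1 hff) ((V μ).smul_mem _ (V_of_L2 hf)))
        ((V μ).smul_mem _ V_one)
    have h2 := hL.pos _ hV h1
    rw [map_add, map_sub, map_smul, map_smul, nonneg_iff] at h2
    filter_upwards [h2, AEEqFun.coeFn_smul (2 * (c : ℝ)) (L f),
        AEEqFun.coeFn_smul ((c : ℝ) ^ 2) (L (1 : Ω →ₘ[μ] ℝ)),
        AEEqFun.coeFn_one (μ := μ) (α := Ω) (β := ℝ), AEEqFun.coeFn_le.2 hL.one,
        AEEqFun.coeFn_sub (L (f * f)) ((2 * (c : ℝ)) • L f),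
        AEEqFun.coeFn_add (L (f * f) - (2 * (c : ℝ)) • L f) (((c : ℝ) ^ 2) • L (1 : Ω →ₘ[μ] ℝ))]
        with x e1 e2 e3 e4 e5 e6 e7
    rw [e7, Pi.add_apply, e6, Pi.sub_apply, e2, e3] at e1
    simp only [Pi.smul_apply, smul_eq_mul] at e1
    rw [e4, Pi.one_apply] at e5
    nlinarith [sq_nonneg (c : ℝ)]
  rw [← ae_all_iff] at key
  filter_upwards [key] with x hx
  have hr : ∀ c : ℝ, 0 ≤ L (f * f) x - 2 * c * L f x + c ^ 2 := by
    intro c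
    have hcl : IsClosed {c : ℝ | 0 ≤ L (f * f) x - 2 * c * L f x + c ^ 2} :=
      isClosed_le continuous_const (by fun_prop)
    exact (Rat.denseRange_cast (𝕜 := ℝ)).induction_on (p := fun c => 0 ≤ L (f * f) x - 2 * c * L f x + c ^ 2) c hcl hx
  nlinarith [hr (L f x)]

theorem sq_int {f : Ω →ₘ[μ] ℝ} (hf : MemLp f 2 μ) : Integrable (f * f : Ω →ₘ[μ] ℝ) μ := by
  refine hf.integrable_sq.congr ?_
  filter_upwards [AEEqFun.coeFn_mul f f] with x hx
  rw [hx]; simp [sq]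

theorem eLp_sq (f : Ω →ₘ[μ] ℝ) : eLpNorm f 2 μ ^ 2 = eLpNorm (f * f : Ω →ₘ[μ] ℝ) 1 μ := by
  have := eLpNorm_nnreal_pow_eq_lintegral (f := f) (μ := μ) (p := 2) (by norm_num)
  norm_cast at this
  simp only [ENNReal.rpow_ofNat] at this
  rw [eLpNorm_one_eq_lintegral_enorm]
  refine Eq.trans (by exact_mod_cast this) (lintegral_congr_ae ?_)
  filter_upwards [AEEqFun.coeFn_mul f f] with x hx
  rw [hx]; simp [sq]

theorem Good.n2 (hL : Good L) {f : Ω →ₘ[μ] ℝ} (hf : MemLp f 2 μ) :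
    eLpNorm (L f) 2 μ ≤ eLpNorm f 2 μ := by
  have h : eLpNorm (L f) 2 μ ^ 2 ≤ eLpNorm f 2 μ ^ 2 := by
    rw [eLp_sq, eLp_sq]
    refine le_trans (eLpNorm_mono_ae ?_) (hL.n1 _ (sq_int hf))
    filter_upwards [hL.jensen hf, AEEqFun.coeFn_mul (L f) (L f)] with x h1 h2
    rw [h2, Pi.mul_apply, ← sq, Real.norm_eq_abs, abs_of_nonneg (sq_nonneg _)]
    exact h1.trans (le_abs_self _)
  exact (ENNReal.pow_le_pow_left_iff (by norm_num)).1 h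

end
end DSErg

namespace DSErg
section
variable {μ : Measure Ω} {L : (Ω →ₘ[μ] ℝ) →ₗ[ℝ] (Ω →ₘ[μ] ℝ)}

noncomputable def S (L : (Ω →ₘ[μ] ℝ) →ₗ[ℝ] (Ω →ₘ[μ] ℝ)) (n : ℕ) :
    (Ω →ₘ[μ] ℝ) →ₗ[ℝ] (Ω →ₘ[μ] ℝ) := ∑ k ∈ Finset.range n, L ^ k

noncomputable def A (L : (Ω →ₘ[μ] ℝ) →ₗ[ℝ] (Ω →ₘ[μ] ℝ)) (n : ℕ) :
    (Ω →ₘ[μ] ℝ) →ₗ[ℝ] (Ω →ₘ[μ] ℝ) := (n : ℝ)⁻¹ • S L n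

theorem S_succ (n : ℕ) (f : Ω →ₘ[μ] ℝ) : S L (n + 1) f = S L n f + (L ^ n) f := by
  simp [S, Finset.sum_range_succ]

theorem S_zero (f : Ω →ₘ[μ] ℝ) : S L 0 f = 0 := by
  simp [S]

theorem S_succ' (n : ℕ) (f : Ω →ₘ[μ] ℝ) : S L (n + 1) f = f + L (S L n f) := by
  induction n with
  | zero => simp [S]
  | succ n ih =>
    have e : L (S L (n + 1) f) = L (S L n f) + (L ^ (n + 1)) f := by
      rw [S_succ, map_add, pow_succ']; rfl
    rw [S_succ, e, ih, add_assoc]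

theorem A_ae (n : ℕ) (f : Ω →ₘ[μ] ℝ) : ∀ᵐ x ∂μ, A L n f x = (n : ℝ)⁻¹ * S L n f x := by
  have : A L n f = (n : ℝ)⁻¹ • S L n f := rfl
  rw [this]
  filter_upwards [AEEqFun.coeFn_smul (n : ℝ)⁻¹ (S L n f)] with x hx
  rw [hx]; rfl

theorem Pos.S_pos (hL : Pos L) (n : ℕ) (f : Ω →ₘ[μ] ℝ) (hf : f ∈ V μ) (h0 : 0 ≤ f) :
    0 ≤ S L n f := by
  induction n with
  | zero => rw [S_zero]
  | succ n ih => rw [S_succ]; exact add_nonneg ih ((hL.pow n).pos f hf h0)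

theorem Pos.S_mem (hL : Pos L) (n : ℕ) (f : Ω →ₘ[μ] ℝ) (hf : f ∈ V μ) : S L n f ∈ V μ := by
  induction n with
  | zero => rw [S_zero]; exact (V μ).zero_mem
  | succ n ih => rw [S_succ]; exact (V μ).add_mem ih ((hL.pow n).mem f hf)

theorem Pos.S_one (hL : Pos L) (n : ℕ) : S L n 1 ≤ (n : ℝ) • 1 := by
  induction n with
  | zero => rw [S_zero]; simp
  | succ n ih =>
    rw [S_succ]; push_cast; rw [add_smul, one_smul]
    exact add_le_add ih (hL.pow n).one

theorem Pos.avg (hL : Pos L) (n : ℕ) : Pos (A L n) where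
  pos f hf h0 := smul_nonneg' (by positivity) (hL.S_pos n f hf h0)
  mem f hf := (V μ).smul_mem _ (hL.S_mem n f hf)
  one := by
    rcases Nat.eq_zero_or_pos n with rfl | hn
    · simp [A, one_nonneg']
    · have h1 := hL.S_one n
      have h2 := smul_nonneg' (c := (n : ℝ)⁻¹) (by positivity) (sub_nonneg.2 h1)
      rw [smul_sub, smul_smul, inv_mul_cancel₀ (by positivity), one_smul] at h2
      exact sub_nonneg.1 h2

theorem Good.S_int (hL : Good L) (n : ℕ) {f : Ω →ₘ[μ] ℝ} (hf : Integrable f μ) :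
    Integrable (S L n f) μ := by
  induction n with
  | zero => rw [S_zero]; exact (integrable_zero _ _ _).congr AEEqFun.coeFn_zero.symm
  | succ n ih =>
    rw [S_succ]
    exact (ih.add ((hL.pow n).int hf)).congr (AEEqFun.coeFn_add _ _).symm

noncomputable def M (L : (Ω →ₘ[μ] ℝ) →ₗ[ℝ] (Ω →ₘ[μ] ℝ)) (f : Ω →ₘ[μ] ℝ) : ℕ → (Ω →ₘ[μ] ℝ)
  | 0 => 0
  | n + 1 => 0 ⊔ (f + L (M L f n))

theorem M_nonneg (f : Ω →ₘ[μ] ℝ) (n : ℕ) : 0 ≤ M L f n := by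
  cases n with
  | zero => exact le_rfl
  | succ n => exact le_sup_left

theorem M_ae (f : Ω →ₘ[μ] ℝ) (n : ℕ) :
    ∀ᵐ x ∂μ, M L f (n + 1) x = max 0 (f x + L (M L f n) x) := by
  have : M L f (n + 1) = 0 ⊔ (f + L (M L f n)) := rfl
  rw [this]
  filter_upwards [AEEqFun.coeFn_sup 0 (f + L (M L f n)), AEEqFun.coeFn_add f (L (M L f n)),
    AEEqFun.coeFn_zero (μ := μ) (α := Ω) (β := ℝ)] with x h1 h2 h3
  rw [h1, h2, h3]; rfl

theorem Good.M_int (hL : Good L) {f : Ω →ₘ[μ] ℝ} (hf : Integrable f μ) (n : ℕ) :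
    Integrable (M L f n) μ := by
  induction n with
  | zero => exact (integrable_zero _ _ _).congr AEEqFun.coeFn_zero.symm
  | succ n ih =>
    refine Integrable.congr ((integrable_zero Ω ℝ μ).sup (hf.add (hL.int ih))) ?_
    filter_upwards [M_ae f n] with x hx
    rw [hx]; rfl

theorem Good.M_mono (hL : Good L) {f : Ω →ₘ[μ] ℝ} (hf : Integrable f μ) (n : ℕ) :
    M L f n ≤ M L f (n + 1) := by
  induction n with
  | zero => exact M_nonneg f _
  | succ n ih =>
    exact sup_le_sup_left (add_le_add le_rfl
      (hL.mono (V_of_L1 (hL.M_int hf _)) (V_of_L1 (hL.M_int hf _)) ih)) _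

theorem Good.S_le_M (hL : Good L) {f : Ω →ₘ[μ] ℝ} (hf : Integrable f μ) (n k : ℕ) (h : k ≤ n) :
    S L k f ≤ M L f n := by
  induction n generalizing k with
  | zero => rw [Nat.le_zero.1 h, S_zero]; exact M_nonneg _ _
  | succ n ih =>
    cases k with
    | zero => rw [S_zero]; exact M_nonneg _ _
    | succ k =>
      rw [S_succ']
      refine le_trans ?_ le_sup_right
      exact add_le_add le_rfl (hL.mono (V_of_L1 (hL.S_int k hf)) (V_of_L1 (hL.M_int hf _))
        (ih k (by omega)))

theorem Good.maximal (hL : Good L) {f : Ω →ₘ[μ] ℝ} (hf : Integrable f μ) (n : ℕ) :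
    0 ≤ ∫ x in {x | 0 < M L f (n + 1) x}, f x ∂μ := by
  have hm : MeasurableSet {x | 0 < M L f (n + 1) x} :=
    measurableSet_lt measurable_const (M L f (n+1)).measurable
  rw [← integral_indicator hm]
  have i1 := hL.M_int hf (n + 1)
  have i0 := hL.M_int hf n
  have p0 := M_nonneg (L := L) f n
  have h1 : ∫ x, (M L f (n + 1) x - L (M L f n) x) ∂μ ≤
      ∫ x, {x | 0 < M L f (n + 1) x}.indicator f x ∂μ := by
    refine integral_mono_ae (i1.sub (hL.int i0)) (hf.indicator hm) ?_
    filter_upwards [M_ae (L := L) f n, nonneg_iff.1 (hL.pos _ (V_of_L1 i0) p0)] with x e1 e2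
    simp only [indicator, mem_ofPred_eq]
    split_ifs with h
    · rw [e1] at h ⊢
      rcases le_total 0 (f x + L (M L f n) x) with h' | h'
      · rw [max_eq_right h']; linarith
      · rw [max_eq_left h'] at h; exact absurd h (lt_irrefl _)
    · linarith
  rw [integral_sub i1 (hL.int i0)] at h1
  have h2 := hL.integral_le i0 p0
  have h3 : ∫ x, M L f n x ∂μ ≤ ∫ x, M L f (n + 1) x ∂μ :=
    integral_mono_ae i0 i1 (AEEqFun.coeFn_le.2 (hL.M_mono hf n))
  linarith

theorem Good.weak_fin (hL : Good L) {f : Ω →ₘ[μ] ℝ} (hf : Integrable f μ) (h0 : 0 ≤ f)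
    {lam : ℝ} (hlam : 0 < lam) (n : ℕ) :
    μ {x | ∃ k, 1 ≤ k ∧ k ≤ n ∧ k * lam < S L k f x} ≤ ENNReal.ofReal ((∫ x, f x ∂μ) / lam) := by
  set B : Set Ω := {x | ∃ k, 1 ≤ k ∧ k ≤ n ∧ k * lam < S L k f x} with hB
  have hBeq : B = ⋃ k ∈ Finset.Icc 1 n, {x | k * lam < S L k f x} := by
    ext x; simp [hB, and_assoc]
  have hBm : MeasurableSet B := by
    rw [hBeq]
    exact Finset.measurableSet_biUnion _ fun k _ =>
      measurableSet_lt measurable_const (S L k f).measurable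
  have hBfin : μ B < ∞ := by
    rw [hBeq]
    refine (measure_biUnion_lt_top (Finset.finite_toSet _) ?_)
    intro k hk
    have hk : 1 ≤ k := by simp at hk; exact hk.1
    exact (hL.S_int k hf).measure_gt_lt_top (by positivity)
  let b : Ω →ₘ[μ] ℝ := AEEqFun.mk (B.indicator (fun _ => (1:ℝ)))
    (stronglyMeasurable_const.indicator hBm).aestronglyMeasurable
  have hb : b =ᵐ[μ] B.indicator (fun _ => (1:ℝ)) := AEEqFun.coeFn_mk _ _
  have hbi : Integrable b μ := by
    refine Integrable.congr ?_ hb.symm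
    exact (integrable_indicator_iff hBm).2 (integrableOn_const hBfin.ne)
  have hb1 : b ≤ 1 := by
    rw [← AEEqFun.coeFn_le]
    filter_upwards [hb, AEEqFun.coeFn_one (μ := μ) (α := Ω) (β := ℝ)] with x h1 h2
    rw [h1, h2]
    simp only [indicator]; split_ifs <;> simp
  have hSb : ∀ k, S L k b ≤ (k : ℝ) • 1 := fun k => by
    refine le_trans ?_ (hL.S_one k)
    have := hL.S_pos k (1 - b) ((V μ).sub_mem V_one (V_of_L1 hbi)) (sub_nonneg.2 hb1)
    rw [map_sub] at this
    exact sub_nonneg.1 this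
  let h : Ω →ₘ[μ] ℝ := f - lam • b
  have hh : ∀ᵐ x ∂μ, h x = f x - lam * B.indicator (fun _ => (1:ℝ)) x := by
    filter_upwards [hb, AEEqFun.coeFn_sub f (lam • b), AEEqFun.coeFn_smul lam b] with x e1 e2 e3
    rw [e2, Pi.sub_apply, e3, Pi.smul_apply, e1]; rfl
  have hhi : Integrable h μ := by
    refine Integrable.congr (hf.sub (hbi.const_mul lam)) ?_
    filter_upwards [hh, hb] with x e1 e2
    rw [e1, Pi.sub_apply, e2]
  have key : ∀ᵐ x ∂μ, x ∈ B → 0 < M L h (n + 1) x := by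
    have : ∀ k, ∀ᵐ x ∂μ, k ≤ n + 1 → S L k f x - lam * k ≤ M L h (n + 1) x := by
      intro k
      by_cases hk : k ≤ n + 1
      swap
      · exact ae_of_all _ fun x hx => absurd hx hk
      have e : S L k h = S L k f - lam • S L k b := by simp [h]
      have h1 := hL.S_le_M hhi (n + 1) k hk
      rw [e] at h1
      filter_upwards [AEEqFun.coeFn_le.2 h1, AEEqFun.coeFn_le.2 (hSb k),
        AEEqFun.coeFn_sub (S L k f) (lam • S L k b), AEEqFun.coeFn_smul lam (S L k b),
        AEEqFun.coeFn_smul (k : ℝ) (1 : Ω →ₘ[μ] ℝ), AEEqFun.coeFn_one (μ := μ) (α := Ω) (β := ℝ)]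
        with x a1 a2 a3 a4 a5 a6 _
      rw [a3, Pi.sub_apply, a4, Pi.smul_apply, smul_eq_mul] at a1
      rw [a5, Pi.smul_apply, a6, Pi.one_apply, smul_eq_mul, mul_one] at a2
      nlinarith
    rw [← ae_all_iff] at this
    filter_upwards [this] with x hx
    rintro ⟨k, hk1, hkn, hk⟩
    have := hx k (by omega)
    nlinarith
  have hM := hL.maximal hhi n
  have hm : MeasurableSet {x | 0 < M L h (n + 1) x} :=
    measurableSet_lt measurable_const (M L h (n+1)).measurable
  rw [← integral_indicator hm] at hM
  have h1 : ∫ x, {x | 0 < M L h (n + 1) x}.indicator h x ∂μ ≤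
      ∫ x, (f x - lam * B.indicator (fun _ => (1:ℝ)) x) ∂μ := by
    refine integral_mono_ae (hhi.indicator hm) (hhi.congr hh) ?_
    filter_upwards [hh, key, nonneg_iff.1 h0] with x e1 e2 e3
    simp only [indicator, mem_ofPred_eq] at e1 ⊢
    split_ifs at e1 ⊢ with a1 a2 
    all_goals first | exact absurd (e2 ‹_›) ‹_› | linarith
  have h2 : Integrable (B.indicator (fun _ => (1:ℝ))) μ := hbi.congr hb
  rw [integral_sub hf (h2.const_mul lam), integral_const_mul, integral_indicator hBm,
    setIntegral_const] at h1
  simp only [smul_eq_mul, mul_one] at h1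
  rw [← ENNReal.ofReal_toReal hBfin.ne]
  apply ENNReal.ofReal_le_ofReal
  rw [le_div_iff₀ hlam]
  have : μ.real B = (μ B).toReal := rfl
  rw [← this]
  linarith

theorem Good.weak_pos (hL : Good L) {f : Ω →ₘ[μ] ℝ} (hf : Integrable f μ) (h0 : 0 ≤ f)
    {lam : ℝ} (hlam : 0 < lam) :
    μ {x | ∃ k, 1 ≤ k ∧ lam < A L k f x} ≤ ENNReal.ofReal ((∫ x, f x ∂μ) / lam) := by
  have h1 : μ (⋃ n : ℕ, {x | ∃ k, 1 ≤ k ∧ k ≤ n ∧ k * lam < S L k f x}) ≤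
      ENNReal.ofReal ((∫ x, f x ∂μ) / lam) := by
    rw [Monotone.measure_iUnion]
    · exact iSup_le fun n => hL.weak_fin hf h0 hlam n
    · rintro a b hab x ⟨k, h1, h2, h3⟩
      exact ⟨k, h1, h2.trans hab, h3⟩
  refine le_trans (measure_mono_ae ?_) h1
  have := ae_all_iff.2 fun k => A_ae (L := L) k f
  filter_upwards [this] with x hx
  rintro ⟨k, h1, h2⟩
  refine mem_iUnion.2 ⟨k, k, h1, le_rfl, ?_⟩
  rw [hx] at h2
  have : (0:ℝ) < k := by exact_mod_cast h1
  rwa [inv_mul_eq_div, lt_div_iff₀ this, mul_comm] at h2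

theorem abs_int {f : Ω →ₘ[μ] ℝ} (hf : Integrable f μ) : Integrable (|f| : Ω →ₘ[μ] ℝ) μ :=
  hf.abs.congr (AEEqFun.coeFn_abs f).symm

theorem Pos.abs_le (hL : Pos L) {f : Ω →ₘ[μ] ℝ} (hf : Integrable f μ) :
    ∀ᵐ x ∂μ, |L f x| ≤ L |f| x := by
  have v1 := V_of_L1 hf
  have v2 := V_of_L1 (abs_int hf)
  have h1 := hL.mono v1 v2 (le_abs_self f)
  have h2 := hL.mono ((V μ).neg_mem v1) v2 (neg_le_abs f)
  rw [map_neg] at h2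
  filter_upwards [AEEqFun.coeFn_le.2 h1, AEEqFun.coeFn_le.2 h2, AEEqFun.coeFn_neg (L f)] with x e1 e2 e3
  rw [e3, Pi.neg_apply] at e2
  exact abs_le'.2 ⟨e1, e2⟩

theorem abs_nonneg' (f : Ω →ₘ[μ] ℝ) : 0 ≤ |f| := by
  rw [nonneg_iff]
  filter_upwards [AEEqFun.coeFn_abs f] with x hx
  rw [hx]; positivity

theorem Good.weak1 (hL : Good L) {f : Ω →ₘ[μ] ℝ} (hf : Integrable f μ)
    {lam : ℝ} (hlam : 0 < lam) :
    μ {x | ∃ k, 1 ≤ k ∧ lam < |A L k f x|} ≤ ENNReal.ofReal ((∫ x, |f x| ∂μ) / lam) := by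
  have h := hL.weak_pos (abs_int hf) (abs_nonneg' f) hlam
  rw [integral_congr_ae (AEEqFun.coeFn_abs f)] at h
  refine le_trans (measure_mono_ae ?_) h
  have := ae_all_iff.2 fun k => (hL.avg k).abs_le hf
  filter_upwards [this] with x hx
  rintro ⟨k, h1, h2⟩
  exact ⟨k, h1, h2.trans_le (hx k)⟩

theorem Good.weak2 (hL : Good L) {f : Ω →ₘ[μ] ℝ} (hf : MemLp f 2 μ)
    {lam : ℝ} (hlam : 0 < lam) :
    μ {x | ∃ k, 1 ≤ k ∧ lam < |A L k f x|} ≤ ENNReal.ofReal ((∫ x, f x ^ 2 ∂μ) / lam ^ 2) := by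
  have h := hL.weak_pos (f := f * f) (sq_int hf) ?_ (pow_pos hlam 2)
  · have e : ∫ x, (f * f) x ∂μ = ∫ x, f x ^ 2 ∂μ := by
      apply integral_congr_ae
      filter_upwards [AEEqFun.coeFn_mul f f] with x hx
      rw [hx]; simp [sq]
    rw [e] at h
    refine le_trans (measure_mono_ae ?_) h
    have := ae_all_iff.2 fun k => (hL.avg k).jensen hf
    filter_upwards [this] with x hx
    rintro ⟨k, h1, h2⟩
    refine ⟨k, h1, lt_of_lt_of_le ?_ (hx k)⟩
    rw [← sq_abs (A L k f x)]
    gcongr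
  · rw [nonneg_iff]
    filter_upwards [AEEqFun.coeFn_mul f f] with x hx
    rw [hx]; exact mul_self_nonneg _

end
end DSErg

namespace DSErg
section
variable {μ : Measure Ω} {L : (Ω →ₘ[μ] ℝ) →ₗ[ℝ] (Ω →ₘ[μ] ℝ)}

def AuC (u : ℕ → Ω →ₘ[μ] ℝ) : Prop := ∀ δ : ℝ, 0 < δ → ∀ ε : ℝ, 0 < ε → ∃ N : ℕ,
  μ {x | ∃ n, N ≤ n ∧ ∃ m, N ≤ m ∧ δ < |u n x - u m x|} ≤ ENNReal.ofReal ε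

theorem AuC_of_approx {u : ℕ → Ω →ₘ[μ] ℝ}
    (H : ∀ δ : ℝ, 0 < δ → ∀ ε : ℝ, 0 < ε → ∃ v : ℕ → Ω →ₘ[μ] ℝ, AuC v ∧
      μ {x | ∃ n, 1 ≤ n ∧ δ < |u n x - v n x|} ≤ ENNReal.ofReal ε) : AuC u := by
  intro δ hδ ε hε
  obtain ⟨v, hv, h1⟩ := H (δ / 3) (by positivity) (ε / 2) (by positivity)
  obtain ⟨N, hN⟩ := hv (δ / 3) (by positivity) (ε / 2) (by positivity)
  refine ⟨N + 1, ?_⟩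
  have e : ENNReal.ofReal ε = ENNReal.ofReal (ε / 2) + ENNReal.ofReal (ε / 2) := by
    rw [← ENNReal.ofReal_add (by positivity) (by positivity)]; ring_nf
  rw [e]
  refine le_trans (measure_mono ?_) ((measure_union_le _ _).trans (add_le_add h1 hN))
  rintro x ⟨n, hn, m, hm, hnm⟩
  by_contra hcon
  simp only [mem_union, mem_ofPred_eq, not_or, not_exists, not_and, not_lt] at hcon
  have a1 := hcon.1 n (by omega)
  have a2 := hcon.1 m (by omega)
  have a3 := hcon.2 n (by omega) m (by omega)
  have : |u n x - u m x| ≤ |u n x - v n x| + |v n x - v m x| + |u m x - v m x| := by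
    rw [abs_sub_comm (u m x)]
    calc |u n x - u m x| = |(u n x - v n x) + (v n x - v m x) + (v m x - u m x)| := by ring_nf
      _ ≤ _ := (abs_add_le _ _).trans (add_le_add_left (abs_add_le _ _) _)
  linarith

theorem AuC.congr {u v : ℕ → Ω →ₘ[μ] ℝ} (hu : AuC u) (h : ∀ n, 1 ≤ n → u n = v n) : AuC v := by
  apply AuC_of_approx
  intro δ hδ ε hε
  refine ⟨u, hu, ?_⟩
  have : {x | ∃ n, 1 ≤ n ∧ δ < |v n x - u n x|} = ∅ := by
    ext x
    simp only [mem_ofPred_eq, mem_empty_iff_false, iff_false, not_exists, not_and, not_lt]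
    intro n hn
    rw [h n hn]; simp [hδ.le]
  rw [this]; simp

theorem AuC.add_const {u : ℕ → Ω →ₘ[μ] ℝ} (hu : AuC u) (g : Ω →ₘ[μ] ℝ) :
    AuC (fun n => u n + g) := by
  intro δ hδ ε hε
  obtain ⟨N, hN⟩ := hu δ hδ ε hε
  refine ⟨N, le_trans (measure_mono_ae ?_) hN⟩
  filter_upwards [ae_all_iff.2 fun n => AEEqFun.coeFn_add (u n) g] with x hx
  rintro ⟨n, hn, m, hm, h⟩
  refine ⟨n, hn, m, hm, ?_⟩
  rw [hx, hx] at h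
  simpa using h

theorem AuC_of_summable {u : ℕ → Ω →ₘ[μ] ℝ}
    (h : ∀ δ : ℝ, 0 < δ → ∑' n, μ {x | δ < |u n x|} ≠ ∞) : AuC u := by
  intro δ hδ ε hε
  have := ENNReal.tendsto_sum_nat_add _ (h (δ / 2) (by positivity))
  have h2 := this.eventually (gt_mem_nhds (ENNReal.ofReal_pos.2 hε))
  obtain ⟨N, hN⟩ := h2.exists
  refine ⟨N, le_trans (measure_mono ?_) ((measure_iUnion_le _).trans hN.le)⟩
  rintro x ⟨n, hn, m, hm, hnm⟩
  by_contra hcon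
  simp only [mem_iUnion, mem_ofPred_eq, not_exists, not_lt] at hcon
  have a1 := hcon (n - N)
  have a2 := hcon (m - N)
  rw [Nat.sub_add_cancel hn] at a1
  rw [Nat.sub_add_cancel hm] at a2
  have := abs_sub (u n x) (u m x)
  linarith

theorem AuC.exists_limit {u : ℕ → Ω →ₘ[μ] ℝ} (hu : AuC u) :
    ∃ g : Ω →ₘ[μ] ℝ, AuTendsto μ atTop u g := by
  have hae : ∀ᵐ x ∂μ, ∃ l, Tendsto (fun n => u n x) atTop (𝓝 l) := by
    have h1 : ∀ j : ℕ, ∀ᵐ x ∂μ, ∃ N, ∀ n, N ≤ n → ∀ m, N ≤ m →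
        |u n x - u m x| ≤ 1 / ((j : ℝ) + 1) := by
      intro j
      rw [ae_iff]
      by_contra hne
      have hpos := pos_iff_ne_zero.2 hne
      obtain ⟨ε, hε, hε2⟩ : ∃ ε : ℝ, 0 < ε ∧ ENNReal.ofReal ε <
          μ {x | ¬∃ N, ∀ n, N ≤ n → ∀ m, N ≤ m → |u n x - u m x| ≤ 1 / ((j : ℝ) + 1)} := by
        obtain ⟨r, hr0, hr⟩ := ENNReal.lt_iff_exists_nnreal_btwn.1 hpos
        exact ⟨r, by exact_mod_cast hr0, by rwa [ENNReal.ofReal_coe_nnreal]⟩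
      obtain ⟨N, hN⟩ := hu (1 / ((j : ℝ) + 1)) (by positivity) ε hε
      refine absurd (hε2.trans_le (le_trans (measure_mono ?_) hN)) (lt_irrefl _)
      intro x hx
      simp only [mem_ofPred_eq, not_exists, not_forall, not_le] at hx
      obtain ⟨n, hn, m, hm, h⟩ := hx N
      exact ⟨n, hn, m, hm, h⟩
    rw [← ae_all_iff] at h1
    filter_upwards [h1] with x hx
    apply cauchySeq_tendsto_of_complete
    rw [Metric.cauchySeq_iff]
    intro ε hε
    obtain ⟨j, hj⟩ := exists_nat_one_div_lt hε
    obtain ⟨N, hN⟩ := hx j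
    exact ⟨N, fun m hm n hn => lt_of_le_of_lt (hN m hm n hn) hj⟩
  obtain ⟨g, hg, hlim⟩ := exists_stronglyMeasurable_limit_of_tendsto_ae
    (fun n => (u n).aestronglyMeasurable) hae
  let G : Ω →ₘ[μ] ℝ := AEEqFun.mk g hg.aestronglyMeasurable
  have hG : G =ᵐ[μ] g := AEEqFun.coeFn_mk _ _
  refine ⟨G, fun ε hε => ?_⟩
  obtain ⟨ε', hε', hsum⟩ := ENNReal.exists_pos_sum_of_countable (ENNReal.ofReal_pos.2 hε).ne' ℕ
  choose N hN using fun j : ℕ => hu (1 / ((j : ℝ) + 1)) (by positivity) (ε' j) (by exact_mod_cast hε' j)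
  let B : Set Ω := ⋃ j, {x | ∃ n, N j ≤ n ∧ ∃ m, N j ≤ m ∧ 1 / ((j : ℝ) + 1) < |u n x - u m x|}
  refine ⟨(toMeasurable μ B)ᶜ, (measurableSet_toMeasurable _ _).compl, ?_, ?_⟩
  · rw [compl_compl, measure_toMeasurable]
    refine (measure_iUnion_le _).trans (le_trans (ENNReal.tsum_le_tsum fun j => ?_) hsum.le)
    exact (hN j).trans (by rw [ENNReal.ofReal_coe_nnreal])
  · rw [ENNReal.tendsto_nhds_zero]
    intro η hη
    obtain ⟨j, hj⟩ : ∃ j : ℕ, ENNReal.ofReal (1 / ((j : ℝ) + 1)) ≤ η := by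
      obtain ⟨r, hr0, hr⟩ := ENNReal.lt_iff_exists_nnreal_btwn.1 hη
      obtain ⟨j, hj⟩ := exists_nat_one_div_lt (show (0 : ℝ) < r by exact_mod_cast hr0)
      refine ⟨j, le_trans (ENNReal.ofReal_le_ofReal hj.le) ?_⟩
      rw [ENNReal.ofReal_coe_nnreal]; exact hr.le
    filter_upwards [eventually_ge_atTop (N j)] with n hn
    refine le_trans (eLpNormEssSup_le_of_ae_bound (C := 1 / ((j : ℝ) + 1)) ?_) hj
    filter_upwards [hlim, hG, AEEqFun.coeFn_sub (u n) G] with x h1 h2 h3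
    simp only [indicator]
    split_ifs with hx
    swap
    · rw [norm_zero]; positivity
    rw [h3, Pi.sub_apply, h2, Real.norm_eq_abs]
    have hxB : x ∉ B := fun hh => hx (subset_toMeasurable μ B hh)
    simp only [B, mem_iUnion, mem_ofPred_eq, not_exists, not_and, not_lt] at hxB
    have h4 := hxB j n hn
    refine le_of_tendsto ((tendsto_const_nhds.sub h1).abs) ?_
    filter_upwards [eventually_ge_atTop (N j)] with m hm using h4 m hm

theorem int_sq {f : Ω →ₘ[μ] ℝ} (hf : MemLp f 2 μ) :
    ∫ x, f x ^ 2 ∂μ = (eLpNorm f 2 μ).toReal ^ 2 := by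
  have h0 : 0 ≤ f * f := by
    rw [nonneg_iff]
    filter_upwards [AEEqFun.coeFn_mul f f] with x hx
    rw [hx]; exact mul_self_nonneg _
  rw [← ENNReal.toReal_pow, eLp_sq, ← integral_eq_eLp (sq_int hf) h0]
  apply integral_congr_ae
  filter_upwards [AEEqFun.coeFn_mul f f] with x hx
  rw [hx]; simp [sq]

theorem Good.L2_mem (hL : Good L) {f : Ω →ₘ[μ] ℝ} (hf : MemLp f 2 μ) : MemLp (L f) 2 μ :=
  ⟨(L f).aestronglyMeasurable, (hL.n2 hf).trans_lt hf.2⟩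

theorem markov2 {f : Ω →ₘ[μ] ℝ} (hf : MemLp f 2 μ) {c : ℝ} (hc : 0 < c) :
    μ {x | c < |f x|} ≤ ENNReal.ofReal ((∫ x, f x ^ 2 ∂μ) / c ^ 2) := by
  have hG : Good (1 : (Ω →ₘ[μ] ℝ) →ₗ[ℝ] (Ω →ₘ[μ] ℝ)) :=
    ⟨⟨fun f _ h => h, le_rfl, fun f h => h⟩, fun f _ => le_rfl⟩
  refine le_trans (measure_mono ?_) (hG.weak2 hf hc)
  intro x hx
  refine ⟨1, le_rfl, ?_⟩
  have : A (1 : (Ω →ₘ[μ] ℝ) →ₗ[ℝ] (Ω →ₘ[μ] ℝ)) 1 f = f := by simp [A, S]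
  rw [this]; exact hx

theorem S_cob (n : ℕ) (h : Ω →ₘ[μ] ℝ) : S L n (h - L h) = h - (L ^ n) h := by
  induction n with
  | zero => simp [S]
  | succ n ih => rw [S_succ, ih, map_sub, pow_succ]; simp

theorem Good.AuC_cob (hL : Good L) {h : Ω →ₘ[μ] ℝ} (hh : MemLp h 2 μ) :
    AuC (fun n => A L n (h - L h)) := by
  apply AuC_of_summable
  intro δ hδ
  set K := ∫ x, h x ^ 2 ∂μ with hK
  have hK0 : 0 ≤ K := integral_nonneg fun x => sq_nonneg _
  have hb : ∀ n : ℕ, μ {x | δ < |A L n (h - L h) x|} ≤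
      ENNReal.ofReal ((4 * K / δ ^ 2) * (1 / (n : ℝ) ^ 2)) := by
    intro n
    rcases Nat.eq_zero_or_pos n with rfl | hn
    · have : {x | δ < |A L 0 (h - L h) x|} =ᵐ[μ] (∅ : Set Ω) := by
        have e : A L 0 (h - L h) = 0 := by simp [A]
        rw [e, ae_eq_empty, measure_eq_zero_iff_ae_notMem]
        filter_upwards [AEEqFun.coeFn_zero (μ := μ) (α := Ω) (β := ℝ)] with x hx
        simp only [hx]
        simp [hδ.le]
      rw [measure_congr this]; simp
    have hn' : (0 : ℝ) < n := by exact_mod_cast hn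
    have hLn := (hL.pow n).L2_mem hh
    have hd : MemLp (h - (L ^ n) h : Ω →ₘ[μ] ℝ) 2 μ :=
      (hh.sub hLn).ae_eq (AEEqFun.coeFn_sub _ _).symm
    have h1 : ∫ x, (h - (L ^ n) h : Ω →ₘ[μ] ℝ) x ^ 2 ∂μ ≤ 4 * K := by
      have h2 : ∫ x, (L ^ n) h x ^ 2 ∂μ ≤ K := by
        rw [hK, int_sq hLn, int_sq hh]
        gcongr
        · exact hh.2.ne
        · exact (hL.pow n).n2 hh
      have h3 : ∫ x, (h - (L ^ n) h : Ω →ₘ[μ] ℝ) x ^ 2 ∂μ ≤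
          ∫ x, (2 * h x ^ 2 + 2 * (L ^ n) h x ^ 2) ∂μ := by
        refine integral_mono_ae hd.integrable_sq
          ((hh.integrable_sq.const_mul 2).add (hLn.integrable_sq.const_mul 2)) ?_
        filter_upwards [AEEqFun.coeFn_sub h ((L ^ n) h)] with x hx
        simp only [hx, Pi.sub_apply]
        nlinarith [sq_nonneg (h x + (L ^ n) h x)]
      rw [integral_add (hh.integrable_sq.const_mul 2) (hLn.integrable_sq.const_mul 2),
        integral_const_mul, integral_const_mul] at h3
      linarith
    have h2 := markov2 hd (show 0 < n * δ by positivity)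
    refine le_trans (measure_mono_ae ?_) (h2.trans (ENNReal.ofReal_le_ofReal ?_))
    · filter_upwards [A_ae (L := L) n (h - L h)] with x hx hx2
      have hx2 : δ < |A L n (h - L h) x| := hx2
      rw [hx, S_cob, abs_mul, abs_of_nonneg (by positivity), inv_mul_eq_div, lt_div_iff₀ hn',
        mul_comm] at hx2
      exact hx2
    · calc _ ≤ 4 * K / (n * δ) ^ 2 := by gcongr
        _ = _ := by field_simp
  have hs : Summable fun n : ℕ => (4 * K / δ ^ 2) * (1 / (n : ℝ) ^ 2) :=
    (Real.summable_one_div_nat_pow.2 (by norm_num)).mul_left _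
  refine ((ENNReal.tsum_le_tsum hb).trans_lt ?_).ne
  rw [← ENNReal.ofReal_tsum_of_nonneg (fun n => by positivity) hs]
  exact ENNReal.ofReal_lt_top

end
end DSErg

namespace DSErg
section
variable {μ : Measure Ω} {L : (Ω →ₘ[μ] ℝ) →ₗ[ℝ] (Ω →ₘ[μ] ℝ)}

theorem exists_toLp (L : (Ω →ₘ[μ] ℝ) →ₗ[ℝ] (Ω →ₘ[μ] ℝ)) (p : ℝ≥0∞) [Fact (1 ≤ p)]
    (h : ∀ f : Lp ℝ p μ, eLpNorm (L (f : Ω →ₘ[μ] ℝ)) p μ ≤ eLpNorm f p μ) :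
    ∃ Lp' : Lp ℝ p μ →L[ℝ] Lp ℝ p μ, ‖Lp'‖ ≤ 1 ∧
      ∀ f : Lp ℝ p μ, (Lp' f : Ω →ₘ[μ] ℝ) = L (f : Ω →ₘ[μ] ℝ) := by
  let l : Lp ℝ p μ →ₗ[ℝ] Lp ℝ p μ :=
    { toFun := fun f => ⟨L (f : Ω →ₘ[μ] ℝ), Lp.mem_Lp_iff_eLpNorm_lt_top.2
        ((h f).trans_lt (Lp.eLpNorm_lt_top f))⟩
      map_add' := fun f g => by
        apply Subtype.ext
        exact map_add L (f : Ω →ₘ[μ] ℝ) (g : Ω →ₘ[μ] ℝ)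
      map_smul' := fun c f => by
        apply Subtype.ext
        exact map_smul L c (f : Ω →ₘ[μ] ℝ) }
  refine ⟨l.mkContinuous 1 ?_, LinearMap.mkContinuous_norm_le _ (by norm_num) _, fun f => rfl⟩
  intro f
  rw [one_mul, Lp.norm_def, Lp.norm_def]
  exact ENNReal.toReal_mono (Lp.eLpNorm_lt_top f).ne (h f)

theorem Good.AuC_L2 (hL : Good L) {f : Ω →ₘ[μ] ℝ} (hf : MemLp f 2 μ) :
    AuC (fun n => A L n f) := by
  obtain ⟨l, hl1, hl⟩ := exists_toLp L 2 (fun f => hL.n2 (Lp.memLp f))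
  let F : Lp ℝ 2 μ := ⟨f, Lp.mem_Lp_iff_eLpNorm_lt_top.2 hf.2⟩
  have hiter : ∀ n : ℕ, ((l^[n] F : Lp ℝ 2 μ) : Ω →ₘ[μ] ℝ) = (L ^ n) f := by
    intro n
    induction n with
    | zero => rfl
    | succ n ih => rw [Function.iterate_succ_apply', hl, ih, pow_succ']; rfl
  have hbirk : ∀ n : ℕ, ((birkhoffAverage ℝ l _root_.id n F : Lp ℝ 2 μ) : Ω →ₘ[μ] ℝ) = A L n f := by
    intro n
    have : birkhoffAverage ℝ l _root_.id n F = (n : ℝ)⁻¹ • ∑ k ∈ Finset.range n, l^[k] F := rfl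
    rw [this]
    have e2 : A L n f = (n : ℝ)⁻¹ • ∑ k ∈ Finset.range n, (L ^ k) f := by simp [A, S]
    rw [e2]
    have e3 : ((∑ k ∈ Finset.range n, l^[k] F : Lp ℝ 2 μ) : Ω →ₘ[μ] ℝ) =
        ∑ k ∈ Finset.range n, (L ^ k) f := by
      rw [AddSubgroup.val_finsetSum]
      exact Finset.sum_congr rfl fun k _ => hiter k
    rw [← e3]; rfl
  have hme := l.tendsto_birkhoffAverage_orthogonalProjection hl1 F
  set G0 := (l.eqLocus (1 : Lp ℝ 2 μ →L[ℝ] Lp ℝ 2 μ)).orthogonalProjectionOnto F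
  have hG0 : l (G0 : Lp ℝ 2 μ) = (G0 : Lp ℝ 2 μ) := G0.2
  set G : Lp ℝ 2 μ := (G0 : Lp ℝ 2 μ)
  let g : Ω →ₘ[μ] ℝ := (G : Ω →ₘ[μ] ℝ)
  have hg : L g = g := by rw [← hl, hG0]
  have hgn : ∀ n : ℕ, (L ^ n) g = g := by
    intro n
    induction n with
    | zero => rfl
    | succ n ih => rw [pow_succ, Module.End.mul_apply, hg, ih]
  have hAg : ∀ n : ℕ, 1 ≤ n → A L n g = g := by
    intro n hn
    have e2 : A L n g = (n : ℝ)⁻¹ • ∑ k ∈ Finset.range n, (L ^ k) g := by simp [A, S]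
    rw [e2, Finset.sum_congr rfl fun k _ => hgn k, Finset.sum_const, Finset.card_range,
      ← Nat.cast_smul_eq_nsmul ℝ, smul_smul, inv_mul_cancel₀ (by positivity), one_smul]
  have hSL2 : ∀ n : ℕ, MemLp (S L n f) 2 μ := by
    intro n
    induction n with
    | zero => rw [S_zero]; exact MemLp.zero.ae_eq AEEqFun.coeFn_zero.symm
    | succ n ih =>
      rw [S_succ]
      exact (ih.add ((hL.pow n).L2_mem hf)).ae_eq (AEEqFun.coeFn_add _ _).symm
  have hcob : ∀ N : ℕ, 1 ≤ N → ∃ h : Ω →ₘ[μ] ℝ, MemLp h 2 μ ∧ f - A L N f = h - L h := by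
    intro N hN
    have hsum : ∀ m : ℕ, MemLp (∑ k ∈ Finset.range m, S L k f : Ω →ₘ[μ] ℝ) 2 μ := by
      intro m
      induction m with
      | zero => rw [Finset.sum_range_zero]; exact MemLp.zero.ae_eq AEEqFun.coeFn_zero.symm
      | succ m ih =>
        rw [Finset.sum_range_succ]
        exact (ih.add (hSL2 m)).ae_eq (AEEqFun.coeFn_add _ _).symm
    refine ⟨(N : ℝ)⁻¹ • ∑ k ∈ Finset.range N, S L k f,
      ((hsum N).const_smul (N : ℝ)⁻¹).ae_eq (AEEqFun.coeFn_smul _ _).symm, ?_⟩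
    have e : ∀ k, S L k f - L (S L k f) = f - (L ^ k) f := by
      intro k
      have h1 := S_succ (L := L) k f
      rw [S_succ'] at h1
      rw [sub_eq_sub_iff_add_eq_add]
      exact h1.symm
    have e2 : A L N f = (N : ℝ)⁻¹ • ∑ k ∈ Finset.range N, (L ^ k) f := by simp [A, S]
    rw [map_smul, ← smul_sub, map_sum, ← Finset.sum_sub_distrib, Finset.sum_congr rfl fun k _ => e k,
      Finset.sum_sub_distrib, smul_sub, e2, Finset.sum_const, Finset.card_range,
      ← Nat.cast_smul_eq_nsmul ℝ, smul_smul, inv_mul_cancel₀ (by positivity), one_smul]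
  apply AuC_of_approx
  intro δ hδ ε hε
  have hev := (tendsto_iff_norm_sub_tendsto_zero.1 hme).eventually
    (gt_mem_nhds (show 0 < δ * Real.sqrt ε by positivity))
  obtain ⟨N, hN, hN1⟩ := (hev.and (eventually_ge_atTop 1)).exists
  obtain ⟨h, hh, hfh⟩ := hcob N hN1
  refine ⟨fun n => A L n (h - L h) + g, (hL.AuC_cob hh).add_const g, ?_⟩
  let r : Ω →ₘ[μ] ℝ := A L N f - g
  have hr : ((birkhoffAverage ℝ l _root_.id N F - G : Lp ℝ 2 μ) : Ω →ₘ[μ] ℝ) = r := by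
    rw [AddSubgroup.coe_sub, hbirk]
  have hr2 : MemLp r 2 μ := by rw [← hr]; exact Lp.memLp _
  have hw := hL.weak2 hr2 hδ
  refine le_trans (measure_mono_ae ?_) (hw.trans (ENNReal.ofReal_le_ofReal ?_))
  · have e : ∀ n, 1 ≤ n → A L n f - (A L n (h - L h) + g) = A L n r := by
      intro n hn
      rw [← hfh]
      simp only [r, map_sub]
      rw [hAg n hn]; abel
    filter_upwards [ae_all_iff.2 fun n => AEEqFun.coeFn_sub (A L n f) (A L n (h - L h) + g)]
      with x hx
    rintro ⟨n, hn, h2⟩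
    refine ⟨n, hn, ?_⟩
    rw [← e n hn, hx, Pi.sub_apply]
    exact h2
  · rw [int_sq hr2, ← hr, div_le_iff₀ (by positivity)]
    rw [Lp.norm_def] at hN
    calc _ ≤ (δ * Real.sqrt ε) ^ 2 := by gcongr
      _ = _ := by rw [mul_pow, Real.sq_sqrt hε.le]; ring

theorem Good.AuC_L1 (hL : Good L) {f : Ω →ₘ[μ] ℝ} (hf : Integrable f μ) :
    AuC (fun n => A L n f) := by
  apply AuC_of_approx
  intro δ hδ ε hε
  obtain ⟨s, hs, hsm⟩ := (memLp_one_iff_integrable.2 hf).exists_simpleFunc_eLpNorm_sub_lt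
    (by norm_num) (ε := ENNReal.ofReal (δ * ε)) (ENNReal.ofReal_pos.2 (by positivity)).ne'
  let g : Ω →ₘ[μ] ℝ := AEEqFun.mk s s.aestronglyMeasurable
  have hg : g =ᵐ[μ] s := AEEqFun.coeFn_mk _ _
  have hg2 : MemLp g 2 μ := by
    have : MemLp s 2 μ := (SimpleFunc.memLp_iff (by norm_num) (by norm_num)).2
      ((SimpleFunc.memLp_iff (by norm_num) (by norm_num)).1 hsm)
    exact this.ae_eq hg.symm
  have hg1 : Integrable g μ := (memLp_one_iff_integrable.1 hsm).congr hg.symm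
  refine ⟨fun n => A L n g, hL.AuC_L2 hg2, ?_⟩
  have hr1 : Integrable (f - g : Ω →ₘ[μ] ℝ) μ := (hf.sub hg1).congr (AEEqFun.coeFn_sub _ _).symm
  refine le_trans (measure_mono_ae ?_) ((hL.weak1 hr1 hδ).trans (ENNReal.ofReal_le_ofReal ?_))
  · filter_upwards [ae_all_iff.2 fun n => AEEqFun.coeFn_sub (A L n f) (A L n g)]
      with x hx
    rintro ⟨n, hn, h2⟩
    refine ⟨n, hn, ?_⟩
    rw [map_sub, hx, Pi.sub_apply]
    exact h2
  · rw [div_le_iff₀ hδ]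
    have e : ∫ x, |(f - g : Ω →ₘ[μ] ℝ) x| ∂μ = (eLpNorm (⇑f - ⇑s) 1 μ).toReal := by
      rw [eLpNorm_one_eq_lintegral_enorm, ← integral_norm_eq_lintegral_enorm
        (hf.1.sub s.aestronglyMeasurable)]
      apply integral_congr_ae
      filter_upwards [AEEqFun.coeFn_sub f g, hg] with x h1 h2
      rw [h1, Pi.sub_apply, h2]; rfl
    rw [e]
    refine ENNReal.toReal_le_of_le_ofReal (by positivity) (hs.le.trans_eq ?_)
    rw [mul_comm]

end
end DSErg

namespace DSErg
section
variable {μ : Measure Ω} {L : (Ω →ₘ[μ] ℝ) →ₗ[ℝ] (Ω →ₘ[μ] ℝ)}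

theorem exists_ext {T : (Ω →ₘ[μ] ℝ) → (Ω →ₘ[μ] ℝ)} (hT : IsPosDS μ T) :
    ∃ L : (Ω →ₘ[μ] ℝ) →ₗ[ℝ] (Ω →ₘ[μ] ℝ), (∀ f ∈ V μ, L f = T f) ∧ Good L := by
  let l : V μ →ₗ[ℝ] (Ω →ₘ[μ] ℝ) :=
    { toFun := fun f => T f
      map_add' := fun f g => hT.map_add _ _ (mem_V.1 f.2) (mem_V.1 g.2)
      map_smul' := fun c f => hT.map_smul c _ (mem_V.1 f.2) }
  obtain ⟨L, hL⟩ := LinearMap.exists_extend l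
  have hLT : ∀ f ∈ V μ, L f = T f := fun f hf => by
    have := LinearMap.congr_fun hL ⟨f, hf⟩
    exact this
  refine ⟨L, hLT, ⟨⟨?_, ?_, ?_⟩, ?_⟩⟩
  · intro f hf h0
    rw [hLT f hf]; exact hT.map_pos f (mem_V.1 hf) h0
  · rw [hLT 1 V_one, ← AEEqFun.coeFn_le]
    have h1 := hT.norm_top 1 (mem_V.1 V_one)
    have h2 : eLpNorm (1 : Ω →ₘ[μ] ℝ) ⊤ μ ≤ ENNReal.ofReal 1 := by
      rw [eLpNorm_exponent_top]
      refine eLpNormEssSup_le_of_ae_bound ?_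
      filter_upwards [AEEqFun.coeFn_one (μ := μ) (α := Ω) (β := ℝ)] with x hx
      rw [hx]; simp
    have h3 := h1.trans h2
    rw [eLpNorm_exponent_top] at h3
    filter_upwards [AEEqFun.coeFn_one (μ := μ) (α := Ω) (β := ℝ),
      enorm_ae_le_eLpNormEssSup (T 1) μ] with x hx hx2
    have h4 := hx2.trans h3
    rw [← ofReal_norm, ENNReal.ofReal_le_ofReal_iff zero_le_one] at h4
    rw [hx]
    exact (le_abs_self _).trans h4
  · intro f hf
    rw [hLT f hf]
    obtain ⟨g, h, hg, hh, rfl⟩ := mem_V.1 hf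
    have vg : g ∈ V μ := V_of_L1 (memLp_one_iff_integrable.1 ⟨g.aestronglyMeasurable, hg.lt_top⟩)
    have vh : h ∈ V μ := V_of_top hh.lt_top
    rw [hT.map_add _ _ (mem_V.1 vg) (mem_V.1 vh), mem_V]
    exact ⟨_, _, ((hT.norm_one g (mem_V.1 vg)).trans_lt hg.lt_top).ne,
      ((hT.norm_top h (mem_V.1 vh)).trans_lt hh.lt_top).ne, rfl⟩
  · intro f hf
    rw [hLT f (V_of_L1 hf)]
    exact hT.norm_one f (mem_V.1 (V_of_L1 hf))

theorem AuTendsto.out {u : ℕ → Ω →ₘ[μ] ℝ} {g : Ω →ₘ[μ] ℝ} (h : AuTendsto μ atTop u g)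
    {ε : ℝ} (hε : 0 < ε) : ∃ E : Set Ω, MeasurableSet E ∧ μ Eᶜ ≤ ENNReal.ofReal ε ∧
      ∀ η : ℝ, 0 < η → ∃ N : ℕ, ∀ n, N ≤ n → ∀ᵐ x ∂μ, x ∈ E → |u n x - g x| ≤ η := by
  obtain ⟨E, hE, hE2, hE3⟩ := h ε hε
  refine ⟨E, hE, hE2, fun η hη => ?_⟩
  have h1 := hE3.eventually (ge_mem_nhds (ENNReal.ofReal_pos.2 hη))
  obtain ⟨N, hN⟩ := eventually_atTop.1 h1
  refine ⟨N, fun n hn => ?_⟩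
  have h2 := hN n hn
  rw [eLpNorm_exponent_top] at h2
  filter_upwards [enorm_ae_le_eLpNormEssSup (E.indicator (⇑(u n - g))) μ,
    AEEqFun.coeFn_sub (u n) g] with x h3 h4 hx
  have h5 := h3.trans h2
  rw [indicator_of_mem hx, ← ofReal_norm, ENNReal.ofReal_le_ofReal_iff hη.le, h4] at h5
  exact h5

theorem final (hL : Good L) {g g' : Ω →ₘ[μ] ℝ} (hg : Integrable g μ) (hg' : Integrable g' μ)
    (X : ℝ → Ω →ₘ[μ] ℝ)
    (hX : ∀ t : ℝ, 1 ≤ t → ∀ᵐ x ∂μ, |X t x - S L ⌊t⌋₊ g x| ≤ (L ^ ⌊t⌋₊) g' x) :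
    ∃ fhat : Ω →ₘ[μ] ℝ, AuTendsto μ atTop (fun t : ℝ => t⁻¹ • X t) fhat := by
  obtain ⟨fh, hfh⟩ := (hL.AuC_L1 hg).exists_limit
  obtain ⟨fh', hfh'⟩ := (hL.AuC_L1 hg').exists_limit
  refine ⟨fh, fun ε hε => ?_⟩
  obtain ⟨E1, m1, b1, c1⟩ := AuTendsto.out hfh (show 0 < ε / 4 by positivity)
  obtain ⟨E2, m2, b2, c2⟩ := AuTendsto.out hfh' (show 0 < ε / 4 by positivity)
  have hmax : ∀ f : Ω →ₘ[μ] ℝ, Integrable f μ → ∃ lam : ℝ, 0 < lam ∧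
      μ {x | ∃ k, 1 ≤ k ∧ lam < |A L k f x|} ≤ ENNReal.ofReal (ε / 4) := by
    intro f hf
    have h0 : 0 ≤ ∫ x, |f x| ∂μ := integral_nonneg fun x => abs_nonneg _
    refine ⟨((∫ x, |f x| ∂μ) + 1) / (ε / 4), by positivity,
      (hL.weak1 hf (by positivity)).trans (ENNReal.ofReal_le_ofReal ?_)⟩
    rw [div_le_iff₀ (by positivity), mul_div_cancel₀ _ (by positivity)]
    linarith
  obtain ⟨l1, hl1, d1⟩ := hmax g hg
  obtain ⟨l2, hl2, d2⟩ := hmax g' hg'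
  set B1 := {x | ∃ k, 1 ≤ k ∧ l1 < |A L k g x|}
  set B2 := {x | ∃ k, 1 ≤ k ∧ l2 < |A L k g' x|}
  refine ⟨(E1 ∩ E2) ∩ ((toMeasurable μ B1)ᶜ ∩ (toMeasurable μ B2)ᶜ),
    (m1.inter m2).inter ((measurableSet_toMeasurable _ _).compl.inter
      (measurableSet_toMeasurable _ _).compl), ?_, ?_⟩
  · have e : ENNReal.ofReal ε = (ENNReal.ofReal (ε / 4) + ENNReal.ofReal (ε / 4)) +
        (ENNReal.ofReal (ε / 4) + ENNReal.ofReal (ε / 4)) := by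
      rw [← ENNReal.ofReal_add (by positivity) (by positivity),
        ← ENNReal.ofReal_add (by positivity) (by positivity)]; ring_nf
    rw [e, compl_inter, compl_inter, compl_inter, compl_compl, compl_compl]
    refine (measure_union_le _ _).trans (add_le_add ((measure_union_le _ _).trans
      (add_le_add b1 b2)) ((measure_union_le _ _).trans (add_le_add ?_ ?_)))
    · rw [measure_toMeasurable]; exact d1
    · rw [measure_toMeasurable]; exact d2
  rw [ENNReal.tendsto_nhds_zero]
  intro η' hη'
  obtain ⟨η, hη, hηη⟩ : ∃ η : ℝ, 0 < η ∧ ENNReal.ofReal η ≤ η' := by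
    obtain ⟨r, hr0, hr⟩ := ENNReal.lt_iff_exists_nnreal_btwn.1 hη'
    exact ⟨r, by exact_mod_cast hr0, by rw [ENNReal.ofReal_coe_nnreal]; exact hr.le⟩
  obtain ⟨N1, hN1⟩ := c1 (η / 6) (by positivity)
  obtain ⟨N2, hN2⟩ := c2 (η / 6) (by positivity)
  filter_upwards [eventually_ge_atTop (1 : ℝ), eventually_ge_atTop ((N1 : ℝ) + N2),
    eventually_ge_atTop ((l1 + l2) / (η / 2))] with t t1 t2 t3
  refine le_trans ?_ hηη
  rw [eLpNorm_exponent_top]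
  refine eLpNormEssSup_le_of_ae_bound ?_
  set n := ⌊t⌋₊ with hn
  have hn1 : 1 ≤ n := Nat.le_floor (by simpa using t1)
  have hn2 : N1 + N2 ≤ n := Nat.le_floor (by simpa using t2)
  have hnt : (n : ℝ) ≤ t := Nat.floor_le (by linarith)
  have hnt' : t < n + 1 := Nat.lt_floor_add_one t
  have hS : (L ^ n) g' = S L (n + 1) g' - S L n g' := by rw [S_succ]; abel
  have hXt := hX t t1
  rw [← hn, hS] at hXt
  filter_upwards [hXt, hN1 n (by omega), hN2 n (by omega), hN2 (n + 1) (by omega),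
    A_ae (L := L) n g, A_ae (L := L) n g', A_ae (L := L) (n + 1) g',
    AEEqFun.coeFn_sub (S L (n + 1) g') (S L n g'), AEEqFun.coeFn_sub (t⁻¹ • X t) fh,
    AEEqFun.coeFn_smul t⁻¹ (X t)] with x x1 x2 x3 x4 x5 x6 x7 x8 x9 x10
  simp only [indicator]
  split_ifs with hx
  swap
  · rw [norm_zero]; positivity
  obtain ⟨⟨hE1, hE2⟩, hB1, hB2⟩ := hx
  have hB1 : x ∉ B1 := fun hh => hB1 (subset_toMeasurable μ B1 hh)
  have hB2 : x ∉ B2 := fun hh => hB2 (subset_toMeasurable μ B2 hh)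
  simp only [B1, B2, mem_ofPred_eq, not_exists, not_and, not_lt] at hB1 hB2
  have y1 := hB1 n hn1
  have y2 := hB2 (n + 1) (by omega)
  have x2 := x2 hE1
  have x3 := x3 hE2
  have x4 := x4 hE2
  rw [x9, Pi.sub_apply, x10, Pi.smul_apply, smul_eq_mul, Real.norm_eq_abs]
  rw [x8, Pi.sub_apply] at x1
  have np : (0 : ℝ) < n := by exact_mod_cast hn1
  have tp : 0 < t := by linarith
  generalize A L n g x = a at *
  generalize A L n g' x = a' at *
  generalize A L (n + 1) g' x = b' at *
  have z1 : S L n g x = n * a := by rw [x5]; field_simp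
  have z2 : S L n g' x = n * a' := by rw [x6]; field_simp
  have z3 : S L (n + 1) g' x = (n + 1) * b' := by rw [x7]; push_cast; field_simp
  rw [z1, z2, z3] at x1
  generalize X t x = Y at *
  have w1 : (n + 1) * b' - n * a' ≤ t * (η / 3) + l2 := by
    have q1 : b' - a' ≤ η / 3 := by
      have := (abs_le.1 x3).1; have := (abs_le.1 x4).2; linarith
    have q2 := (abs_le.1 y2).2
    nlinarith
  have w2 : |n * a - t * fh x| ≤ t * (η / 6) + l1 := by
    have : n * a - t * fh x = t * (a - fh x) - (t - n) * a := by ring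
    rw [this]
    refine (abs_sub _ _).trans ?_
    rw [abs_mul, abs_mul, abs_of_pos tp, abs_of_nonneg (by linarith : 0 ≤ t - n)]
    have := abs_nonneg a
    gcongr
    nlinarith
  have w3 : |Y - t * fh x| ≤ t * η := by
    have e : Y - t * fh x = (Y - n * a) + (n * a - t * fh x) := by ring
    rw [e]
    refine (abs_add_le _ _).trans ?_
    rw [div_le_iff₀ (by positivity)] at t3
    nlinarith
  have e : t⁻¹ * Y - fh x = t⁻¹ * (Y - t * fh x) := by field_simp
  rw [e, abs_mul, abs_of_pos (by positivity), inv_mul_le_iff₀ tp]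
  exact w3

instance instOrdMod : IsOrderedModule ℝ (Lp ℝ 1 μ) :=
  IsOrderedModule.of_smul_nonneg fun c hc f hf => by
    have hf' : (0 : Ω →ₘ[μ] ℝ) ≤ (f : Ω →ₘ[μ] ℝ) := hf
    exact (smul_nonneg' hc hf' : 0 ≤ c • (f : Ω →ₘ[μ] ℝ))

theorem shift_int {F : ℝ → Lp ℝ 1 μ} {l : Lp ℝ 1 μ →L[ℝ] Lp ℝ 1 μ}
    (hl : ∀ f : Lp ℝ 1 μ, (l f : Ω →ₘ[μ] ℝ) = L (f : Ω →ₘ[μ] ℝ))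
    (hF : ∀ a b : ℝ, 0 ≤ a → 0 ≤ b → IntervalIntegrable F volume a b)
    (hs : ∀ s : ℝ, 0 ≤ s → F (s + 1) = l (F s)) (n : ℕ) :
    ((∫ s in (n : ℝ)..(n + 1 : ℝ), F s : Lp ℝ 1 μ) : Ω →ₘ[μ] ℝ) =
      (L ^ n) ((∫ s in (0 : ℝ)..1, F s : Lp ℝ 1 μ) : Ω →ₘ[μ] ℝ) := by
  induction n with
  | zero => simp
  | succ n ih =>
    have h1 : ∫ s in ((n + 1 : ℕ) : ℝ)..((n + 1 : ℕ) + 1 : ℝ), F s =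
        ∫ s in (n : ℝ)..(n + 1 : ℝ), F (s + 1) := by
      rw [intervalIntegral.integral_comp_add_right]; push_cast; rfl
    have h2 : ∫ s in (n : ℝ)..(n + 1 : ℝ), F (s + 1) = ∫ s in (n : ℝ)..(n + 1 : ℝ), l (F s) := by
      apply intervalIntegral.integral_congr
      intro s hs'
      rw [uIcc_of_le (by linarith)] at hs'
      exact hs s (le_trans (by positivity) hs'.1)
    rw [h1, h2, ContinuousLinearMap.intervalIntegral_comp_comm _
      (hF _ _ (by positivity) (by positivity)), hl, ih, pow_succ']
    rfl

theorem sum_int {F : ℝ → Lp ℝ 1 μ} {l : Lp ℝ 1 μ →L[ℝ] Lp ℝ 1 μ}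
    (hl : ∀ f : Lp ℝ 1 μ, (l f : Ω →ₘ[μ] ℝ) = L (f : Ω →ₘ[μ] ℝ))
    (hF : ∀ a b : ℝ, 0 ≤ a → 0 ≤ b → IntervalIntegrable F volume a b)
    (hs : ∀ s : ℝ, 0 ≤ s → F (s + 1) = l (F s)) (n : ℕ) :
    ((∫ s in (0 : ℝ)..n, F s : Lp ℝ 1 μ) : Ω →ₘ[μ] ℝ) =
      S L n ((∫ s in (0 : ℝ)..1, F s : Lp ℝ 1 μ) : Ω →ₘ[μ] ℝ) := by
  induction n with
  | zero => simp [S_zero]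
  | succ n ih =>
    rw [S_succ, ← ih, ← shift_int hl hF hs n, ← AddSubgroup.coe_add,
      intervalIntegral.integral_add_adjacent_intervals (hF _ _ le_rfl (by positivity))
      (hF _ _ (by positivity) (by positivity))]
    push_cast; rfl

theorem flow_int {T : ℝ → (Ω →ₘ[μ] ℝ) → (Ω →ₘ[μ] ℝ)}
    (hDS : ∀ s : ℝ, 0 ≤ s → IsPosDS μ (T s))
    (hcont : ∀ f : Ω →ₘ[μ] ℝ, eLpNorm f 1 μ ≠ ∞ → ∀ s : ℝ, 0 < s →
      Tendsto (fun r => eLpNorm (⇑(T r f - T s f)) 1 μ) (𝓝[Set.Ici (0 : ℝ)] s) (𝓝 0))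
    {f : Ω →ₘ[μ] ℝ} (hf : Integrable f μ)
    {F : ℝ → Lp ℝ 1 μ} (hF : ∀ s : ℝ, 0 ≤ s → (F s : Ω →ₘ[μ] ℝ) = T s f) (a b : ℝ)
    (ha : 0 ≤ a) (hb : 0 ≤ b) : IntervalIntegrable F volume a b := by
  have hf1 : eLpNorm f 1 μ ≠ ∞ := (memLp_one_iff_integrable.2 hf).2.ne
  have hc : ContinuousOn F (Ioi 0) := by
    intro s hs
    apply ContinuousAt.continuousWithinAt
    have h1 := hcont f hf1 s hs
    rw [nhdsWithin_eq_nhds.2 (Ici_mem_nhds hs)] at h1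
    have h2 := (ENNReal.tendsto_toReal (by simp)).comp h1
    rw [ContinuousAt, tendsto_iff_norm_sub_tendsto_zero]
    refine Tendsto.congr' ?_ h2
    filter_upwards [Ici_mem_nhds hs] with r hr
    rw [Lp.norm_def, AddSubgroup.coe_sub, hF r hr, hF s (le_of_lt hs)]
    rfl
  rw [intervalIntegrable_iff]
  have hsub : uIoc a b ⊆ Ioi 0 := by
    intro x hx
    exact lt_of_le_of_lt (le_min ha hb) hx.1
  have : IsFiniteMeasure (volume.restrict (uIoc a b)) := ⟨by simp [uIoc]⟩
  refine Integrable.of_bound (C := (eLpNorm f 1 μ).toReal)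
    ((hc.mono hsub).aestronglyMeasurable measurableSet_uIoc) ?_
  refine (ae_restrict_iff' measurableSet_uIoc).2 (ae_of_all _ fun s hs => ?_)
  have hs0 : 0 ≤ s := le_of_lt (hsub hs)
  rw [Lp.norm_def, hF s hs0]
  exact ENNReal.toReal_mono hf1 ((hDS s hs0).norm_one f (mem_V.1 (V_of_L1 hf)))

theorem main (T : ℝ → (Ω →ₘ[μ] ℝ) → (Ω →ₘ[μ] ℝ))
    (hDS : ∀ s : ℝ, 0 ≤ s → IsPosDS μ (T s))
    (hsemi : ∀ s r : ℝ, 0 ≤ s → 0 ≤ r →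
      ∀ f : Ω →ₘ[μ] ℝ, MemL1pLinf μ f → T (s + r) f = T s (T r f))
    (hcont : ∀ f : Ω →ₘ[μ] ℝ, eLpNorm f 1 μ ≠ ∞ → ∀ s : ℝ, 0 < s →
      Tendsto (fun r => eLpNorm (⇑(T r f - T s f)) 1 μ) (𝓝[Set.Ici (0 : ℝ)] s) (𝓝 0))
    (f : Ω →ₘ[μ] ℝ) (hf : eLpNorm f 1 μ ≠ ∞)
    (F : ℝ → Lp ℝ 1 μ) (hF : ∀ s : ℝ, 0 ≤ s → (F s : Ω →ₘ[μ] ℝ) = T s f) :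
    ∃ fhat : Ω →ₘ[μ] ℝ,
      AuTendsto μ atTop
        (fun t : ℝ => t⁻¹ • ((∫ s in Set.Ioc (0 : ℝ) t, F s : Lp ℝ 1 μ) : Ω →ₘ[μ] ℝ))
        fhat := by
  have hfi : Integrable f μ := memLp_one_iff_integrable.1 ⟨f.aestronglyMeasurable, hf.lt_top⟩
  obtain ⟨L, hLT, hL⟩ := exists_ext (hDS 1 zero_le_one)
  obtain ⟨l, -, hl⟩ := exists_toLp L 1 (fun f => hL.n1 _ (memLp_one_iff_integrable.1 (Lp.memLp f)))
  have hshift : ∀ (f : Ω →ₘ[μ] ℝ) (_ : Integrable f μ) (F : ℝ → Lp ℝ 1 μ)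
      (_ : ∀ s : ℝ, 0 ≤ s → (F s : Ω →ₘ[μ] ℝ) = T s f), ∀ s : ℝ, 0 ≤ s → F (s + 1) = l (F s) := by
    intro f hf F hF s hs
    apply Subtype.ext
    rw [hl, hF (s + 1) (by linarith), add_comm, hsemi 1 s zero_le_one hs f (mem_V.1 (V_of_L1 hf)),
      ← hF s hs, hLT]
    exact V_of_L1 (memLp_one_iff_integrable.1 (Lp.memLp _))
  have hai := abs_int hfi
  have hae : eLpNorm (|f| : Ω →ₘ[μ] ℝ) 1 μ < ∞ := (memLp_one_iff_integrable.2 hai).2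
  let F' : ℝ → Lp ℝ 1 μ := fun s => if hs : 0 ≤ s then ⟨T s |f|, Lp.mem_Lp_iff_eLpNorm_lt_top.2
    (((hDS s hs).norm_one |f| (mem_V.1 (V_of_L1 hai))).trans_lt hae)⟩ else 0
  have hF' : ∀ s : ℝ, 0 ≤ s → (F' s : Ω →ₘ[μ] ℝ) = T s |f| := fun s hs => by simp [F', hs]
  have hI := flow_int hDS hcont hfi hF
  have hI' := flow_int hDS hcont hai hF'
  have hs := hshift f hfi F hF
  have hs' := hshift |f| hai F' hF'
  have hle : ∀ s, 0 ≤ s → F s ≤ F' s ∧ -F s ≤ F' s := by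
    intro s hs
    obtain ⟨M, hMT, hM⟩ := exists_ext (hDS s hs)
    have v1 := V_of_L1 hfi
    have v2 := V_of_L1 hai
    have h1 := hM.mono v1 v2 (le_abs_self f)
    have h2 := hM.mono ((V μ).neg_mem v1) v2 (neg_le_abs f)
    rw [map_neg] at h2
    rw [hMT f v1, hMT _ v2, ← hF s hs, ← hF' s hs] at h1 h2
    exact ⟨h1, h2⟩
  refine final hL (g := ((∫ s in (0 : ℝ)..1, F s : Lp ℝ 1 μ) : Ω →ₘ[μ] ℝ))
    (g' := ((∫ s in (0 : ℝ)..1, F' s : Lp ℝ 1 μ) : Ω →ₘ[μ] ℝ))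
    (memLp_one_iff_integrable.1 (Lp.memLp _)) (memLp_one_iff_integrable.1 (Lp.memLp _)) _ ?_
  intro t ht
  set n := ⌊t⌋₊ with hn
  have hnt : (n : ℝ) ≤ t := Nat.floor_le (by linarith)
  have hnt' : t < n + 1 := Nat.lt_floor_add_one t
  have n0 : (0 : ℝ) ≤ n := by positivity
  rw [← sum_int hl hI hs n, ← shift_int hl hI' hs' n]
  have e1 : (∫ s in Set.Ioc (0 : ℝ) t, F s) = (∫ s in (0 : ℝ)..n, F s) + ∫ s in (n : ℝ)..t, F s := by
    rw [intervalIntegral.integral_add_adjacent_intervals (hI _ _ le_rfl n0) (hI _ _ n0 (by linarith)),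
      intervalIntegral.integral_of_le (by linarith)]
  have hpos' : ∀ s, 0 ≤ s → 0 ≤ F' s := by
    intro s hs
    have := (hDS s hs).map_pos |f| (mem_V.1 (V_of_L1 hai)) (abs_nonneg' f)
    rw [← hF' s hs] at this
    exact this
  have e2 : (∫ s in (n : ℝ)..t, F' s) ≤ ∫ s in (n : ℝ)..(n + 1 : ℝ), F' s := by
    rw [← intervalIntegral.integral_add_adjacent_intervals (hI' n t n0 (by linarith))
      (hI' t (n + 1) (by linarith) (by linarith))]
    refine le_add_of_nonneg_right ?_
    rw [intervalIntegral.integral_of_le hnt'.le]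
    have hh : ∀ s ∈ Ioc t (n + 1 : ℝ), 0 ≤ F' s := by
      intro s hs
      have h1 := hs.1
      exact hpos' s (by linarith)
    exact integral_nonneg_of_ae ((ae_restrict_iff' measurableSet_Ioc).2 (ae_of_all _ hh))
  have hIoc := fun (G : ℝ → Lp ℝ 1 μ) (h : ∀ a b : ℝ, 0 ≤ a → 0 ≤ b → IntervalIntegrable G volume a b) =>
    (intervalIntegrable_iff_integrableOn_Ioc_of_le hnt).1 (h n t n0 (by linarith))
  have e3 : (∫ s in (n : ℝ)..t, F s) ≤ ∫ s in (n : ℝ)..t, F' s := by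
    rw [intervalIntegral.integral_of_le hnt, intervalIntegral.integral_of_le hnt]
    exact setIntegral_mono_on (hIoc F hI) (hIoc F' hI') measurableSet_Ioc
      fun s hs => (hle s (by linarith [hs.1])).1
  have e4 : -(∫ s in (n : ℝ)..t, F s) ≤ ∫ s in (n : ℝ)..t, F' s := by
    rw [intervalIntegral.integral_of_le hnt, intervalIntegral.integral_of_le hnt, ← integral_neg]
    exact setIntegral_mono_on (hIoc F hI).neg (hIoc F' hI') measurableSet_Ioc
      fun s hs => (hle s (by linarith [hs.1])).2
  rw [e1]
  generalize (∫ s in (n : ℝ)..t, F s) = R at *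
  generalize (∫ s in (0 : ℝ)..n, F s) = P at *
  have e5 := e3.trans e2
  have e6 := e4.trans e2
  generalize (∫ s in (n : ℝ)..(n + 1 : ℝ), F' s) = Q at *
  filter_upwards [(Lp.coeFn_le _ _).2 e5, (Lp.coeFn_le _ _).2 e6, Lp.coeFn_neg R, Lp.coeFn_add P R]
    with x x1 x2 x3 x4
  rw [x3, Pi.neg_apply] at x2
  rw [x4, Pi.add_apply, add_sub_cancel_left]
  exact abs_le'.2 ⟨x1, x2⟩

end
end DSErg

/-- **Commutative case of Corollary 5.11**: let `(T_s)_{s ≥ 0}` be a semigroup of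
positive Dunford–Schwartz operators which is strongly continuous on `L¹(μ)` at every
`s > 0`.  Then for every `f ∈ L¹(μ)` the averages `(1/t) ∫₀^t T_s(f) ds`
(a Bochner integral in `L¹(μ)`, encoded by the lift `F s = T_s f ∈ L¹`) converge
almost uniformly as `t → ∞`. -/
theorem flow_averages_au_one_param (μ : Measure Ω) [SigmaFinite μ]
    (T : ℝ → (Ω →ₘ[μ] ℝ) → (Ω →ₘ[μ] ℝ))
    (hDS : ∀ s : ℝ, 0 ≤ s → IsPosDS μ (T s))
    (hsemi : ∀ s r : ℝ, 0 ≤ s → 0 ≤ r →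
      ∀ f : Ω →ₘ[μ] ℝ, MemL1pLinf μ f → T (s + r) f = T s (T r f))
    (hcont : ∀ f : Ω →ₘ[μ] ℝ, eLpNorm f 1 μ ≠ ∞ → ∀ s : ℝ, 0 < s →
      Tendsto (fun r => eLpNorm (⇑(T r f - T s f)) 1 μ) (𝓝[Set.Ici (0 : ℝ)] s) (𝓝 0))
    (f : Ω →ₘ[μ] ℝ) (hf : eLpNorm f 1 μ ≠ ∞)
    (F : ℝ → Lp ℝ 1 μ) (hF : ∀ s : ℝ, 0 ≤ s → (F s : Ω →ₘ[μ] ℝ) = T s f) :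
    ∃ fhat : Ω →ₘ[μ] ℝ,
      AuTendsto μ atTop
        (fun t : ℝ => t⁻¹ • ((∫ s in Set.Ioc (0 : ℝ) t, F s : Lp ℝ 1 μ) : Ω →ₘ[μ] ℝ))
        fhat := by
  exact DSErg.main T hDS hsemi hcont f hf F hF
end
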